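/- arXiv:1402.3879 — 2 statements merged into one kernel-verified Lean document; each statement's English description precedes it below -/
import Mathlib

section
/- Let T > 0, R, A, B > 0, and 0 < α, β < 1/2. Let u₀ ∈ C¹(ℝ²), u₁ : ℝ² → ℝ continuous, and F : ℝ² × [0, T] → ℝ continuous, satisfying |u₀(x)| ≤ A |x|^{−1/2−α}, |∇u₀(x)| ≤ A |x|^{−3/2−α}, and |u₁(x)| ≤ A |x|^{−3/2−α} whenever |x| > R, and |F(x,t)| ≤ B |x|^{−5/2} (|x| − t)^{−β} whenever t ∈ [0,T] and |x| > R + t. Define u(x,t) for t ∈ (0,T] by the representation formula u(x,t) = (1/(2π t²)) ∫_{B(x,t)} [t u₀(y) + t² u₁(y) + t ∇u₀(y)·(y − x)] / √(t² − |y−x|²) dy + (1/(2π)) ∫₀^{t} ∫_{B(x,t−s)} F(y,s) / √((t−s)² − |y−x|²) dy ds, and u(x,0) = u₀(x). Then there exists a constant C = C(α, β) ≥ 1, depending only on α and β, such that |u(x,t)| ≤ C |x|^{−1/2} [ A (|x| − t)^{−α} + B (|x| − t)^{−β} ] whenever t ∈ [0, T] and |x| > R + t. -/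
open MeasureTheory Set Metric

lemma lint_inv_sqrt (L : ℝ) (hL : 0 ≤ L) :
    ∫⁻ v in Ioo 0 L, ENNReal.ofReal ((√v)⁻¹) = ENNReal.ofReal (2 * √L) := by
  have h1 : ∀ v ∈ Ioo 0 L, (√v)⁻¹ = v ^ (-(1/2) : ℝ) := by
    intro v hv
    rw [Real.sqrt_eq_rpow, Real.rpow_neg hv.1.le]
  rw [setLIntegral_congr_fun measurableSet_Ioo (fun v hv => by rw [h1 v hv])]
  have hi : IntervalIntegrable (fun v : ℝ => v ^ (-(1/2) : ℝ)) volume 0 L :=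
    intervalIntegral.intervalIntegrable_rpow' (by norm_num)
  rw [intervalIntegrable_iff_integrableOn_Ioo_of_le hL] at hi
  rw [← ofReal_integral_eq_lintegral_ofReal hi]
  · congr 1
    rw [← integral_Ioc_eq_integral_Ioo, ← intervalIntegral.integral_of_le hL,
      integral_rpow (Or.inl (by norm_num)), Real.sqrt_eq_rpow]
    norm_num
    ring
  · filter_upwards [ae_restrict_mem measurableSet_Ioo] with v hv
    exact Real.rpow_nonneg hv.1.le _

lemma cos_sub_lower (θ θ₀ : ℝ) (h1 : 0 ≤ θ) (h2 : θ < θ₀) (h3 : θ₀ ≤ Real.pi / 2) :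
    2 / Real.pi ^ 2 * (θ₀ * (θ₀ - θ)) ≤ Real.cos θ - Real.cos θ₀ := by
  have hpi := Real.pi_pos
  rw [Real.cos_sub_cos]
  have ha : 2 / Real.pi * ((θ₀ + θ) / 2) ≤ Real.sin ((θ₀ + θ) / 2) :=
    Real.mul_le_sin (by linarith) (by linarith)
  have hb : 2 / Real.pi * ((θ₀ - θ) / 2) ≤ Real.sin ((θ₀ - θ) / 2) :=
    Real.mul_le_sin (by linarith) (by linarith)
  have hc : (θ - θ₀) / 2 = - ((θ₀ - θ) / 2) := by ring
  rw [hc, Real.sin_neg, add_comm θ θ₀]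
  have h5 : 0 ≤ 2 / Real.pi * ((θ₀ - θ) / 2) := by
    apply mul_nonneg (by positivity); linarith
  have h6 : 0 ≤ Real.sin ((θ₀ + θ) / 2) := le_trans (by
    apply mul_nonneg (by positivity); linarith) ha
  have h7 := mul_le_mul ha hb h5 h6
  have h8 : 2 / Real.pi ^ 2 * (θ₀ * (θ₀ - θ)) ≤
      2 * (2 / Real.pi * ((θ₀ + θ) / 2) * (2 / Real.pi * ((θ₀ - θ) / 2))) := by
    have : 2 * (2 / Real.pi * ((θ₀ + θ) / 2) * (2 / Real.pi * ((θ₀ - θ) / 2))) =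
      2 / Real.pi ^ 2 * ((θ₀ + θ) * (θ₀ - θ)) := by field_simp
    rw [this]
    have : 0 ≤ θ₀ - θ := by linarith
    gcongr
    linarith
  linarith

lemma ang_half (θ θ₀ : ℝ) (h1 : 0 ≤ θ) (h2 : θ < θ₀) (h3 : θ₀ ≤ Real.pi / 2) :
    (√(Real.cos θ - Real.cos θ₀))⁻¹ ≤ (√(2 / Real.pi ^ 2))⁻¹ * (√θ₀)⁻¹ * (√(θ₀ - θ))⁻¹ := by
  have h := cos_sub_lower θ θ₀ h1 h2 h3
  have hpi := Real.pi_pos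
  have hθ : 0 < θ₀ := by linarith
  have hd : 0 < θ₀ - θ := by linarith
  rw [← mul_inv, ← mul_inv]
  apply inv_anti₀
  · positivity
  · rw [← Real.sqrt_mul (by positivity), ← Real.sqrt_mul (by positivity)]
    apply Real.sqrt_le_sqrt
    rw [mul_assoc]; exact h

lemma ang_bound : ∃ K : ℝ, 0 < K ∧ ∀ c : ℝ, 0 ≤ c →
    ∫⁻ θ in Ioo (-Real.pi) Real.pi, ENNReal.ofReal ((√(Real.cos θ - c))⁻¹) ≤
      ENNReal.ofReal K := by
  have hpi := Real.pi_pos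
  set k := (√(2 / Real.pi ^ 2))⁻¹ with hk
  have hkpos : 0 < k := by positivity
  refine ⟨k * (4 * √2), by positivity, ?_⟩
  intro c hc
  by_cases hc1 : 1 ≤ c
  · rw [lintegral_eq_zero_of_ae_eq_zero]
    · simp
    · filter_upwards with θ
      rw [Real.sqrt_eq_zero_of_nonpos (by linarith [Real.cos_le_one θ])]
      simp
  push Not at hc1
  set θ₀ := Real.arccos c with hθ
  have hcos : Real.cos θ₀ = c := Real.cos_arccos (by linarith) hc1.le
  have hθpos : 0 < θ₀ := Real.arccos_pos.2 hc1
  have hθle : θ₀ ≤ Real.pi / 2 := Real.arccos_le_pi_div_two.2 hc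
  have hpt : ∀ θ ∈ Ioo (-Real.pi) Real.pi, ENNReal.ofReal ((√(Real.cos θ - c))⁻¹) ≤
      (Ioo (-θ₀) θ₀).indicator (fun θ => ENNReal.ofReal (k * (√θ₀)⁻¹) *
        (ENNReal.ofReal ((√(θ₀ - θ))⁻¹) + ENNReal.ofReal ((√(θ₀ + θ))⁻¹))) θ := by
    intro θ hθm
    by_cases hm : θ ∈ Ioo (-θ₀) θ₀
    · rw [indicator_of_mem hm, ← ENNReal.ofReal_add (by positivity) (by positivity),
        ← ENNReal.ofReal_mul (by positivity)]
      apply ENNReal.ofReal_le_ofReal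
      rw [← hcos, mul_add]
      have p1 : 0 ≤ k * (√θ₀)⁻¹ * (√(θ₀ - θ))⁻¹ := by positivity
      have p2 : 0 ≤ k * (√θ₀)⁻¹ * (√(θ₀ + θ))⁻¹ := by positivity
      rcases le_total 0 θ with h0 | h0
      · have := ang_half θ θ₀ h0 hm.2 hθle
        linarith
      · have := ang_half (-θ) θ₀ (by linarith) (by linarith [hm.1]) hθle
        rw [Real.cos_neg, sub_neg_eq_add] at this
        linarith
    · rw [indicator_of_notMem hm]
      have habs : θ₀ ≤ |θ| := by
        by_contra hh
        push Not at hh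
        exact hm ⟨(abs_lt.1 hh).1, (abs_lt.1 hh).2⟩
      have : Real.cos θ ≤ c := by
        rw [← hcos, ← Real.cos_abs θ]
        apply Real.cos_le_cos_of_nonneg_of_le_pi hθpos.le _ habs
        exact abs_le.2 ⟨hθm.1.le, hθm.2.le⟩
      rw [Real.sqrt_eq_zero_of_nonpos (by linarith)]
      simp
  refine (setLIntegral_mono' measurableSet_Ioo hpt).trans ?_
  refine (setLIntegral_le_lintegral _ _).trans ?_
  rw [lintegral_indicator measurableSet_Ioo, lintegral_const_mul _ (by fun_prop),
    lintegral_add_left (by fun_prop)]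
  have e1 : ∫⁻ θ in Ioo (-θ₀) θ₀, ENNReal.ofReal ((√(θ₀ - θ))⁻¹) = ENNReal.ofReal (2 * √(2 * θ₀)) := by
    rw [← lint_inv_sqrt _ (by positivity)]
    have := (Measure.measurePreserving_sub_left (volume : Measure ℝ) θ₀).setLIntegral_comp_preimage
      (s := Ioo 0 (2 * θ₀)) measurableSet_Ioo (f := fun v => ENNReal.ofReal ((√v)⁻¹)) (by fun_prop)
    rw [← this]
    congr 2
    ext v; simp only [mem_Ioo, mem_preimage]; constructor <;> rintro ⟨h1, h2⟩ <;> constructor <;> linarith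
  have e2 : ∫⁻ θ in Ioo (-θ₀) θ₀, ENNReal.ofReal ((√(θ₀ + θ))⁻¹) = ENNReal.ofReal (2 * √(2 * θ₀)) := by
    rw [← lint_inv_sqrt _ (by positivity)]
    have := (measurePreserving_add_left (volume : Measure ℝ) θ₀).setLIntegral_comp_preimage
      (s := Ioo 0 (2 * θ₀)) measurableSet_Ioo (f := fun v => ENNReal.ofReal ((√v)⁻¹)) (by fun_prop)
    rw [← this]
    congr 2
    ext v; simp only [mem_Ioo, mem_preimage]; constructor <;> rintro ⟨h1, h2⟩ <;> constructor <;> linarith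
  rw [e1, e2, ← ENNReal.ofReal_add (by positivity) (by positivity),
    ← ENNReal.ofReal_mul (by positivity)]
  apply le_of_eq
  congr 1
  rw [Real.sqrt_mul (by norm_num)]
  have : √θ₀ ≠ 0 := by positivity
  field_simp
  ring

lemma exists_iso (x : EuclideanSpace ℝ (Fin 2)) :
    ∃ L : ℂ ≃ₗᵢ[ℝ] EuclideanSpace ℝ (Fin 2), L (‖x‖ : ℂ) = x := by
  set e := Complex.orthonormalBasisOneI.repr
  set z := e.symm x with hz
  have hzn : ‖z‖ = ‖x‖ := e.symm.norm_map x
  refine ⟨(rotation (Circle.exp (Complex.arg z))).trans e, ?_⟩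
  rw [LinearIsometryEquiv.trans_apply, rotation_apply, Circle.coe_exp, ← hzn, mul_comm,
    Complex.norm_mul_exp_arg_mul_I, hz, LinearIsometryEquiv.apply_symm_apply]

lemma polar_key : ∃ K : ℝ, 0 < K ∧ ∀ (x : EuclideanSpace ℝ (Fin 2)) (τ : ℝ), 0 < τ → τ < ‖x‖ →
    ∀ g : ℝ → ENNReal, Measurable g →
    ∫⁻ y : EuclideanSpace ℝ (Fin 2), g ‖y‖ * ENNReal.ofReal ((√(τ ^ 2 - ‖y - x‖ ^ 2))⁻¹) ≤
      ENNReal.ofReal (K * (√‖x‖)⁻¹) *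
        ∫⁻ ρ in Ioo (‖x‖ - τ) (‖x‖ + τ), g ρ * ENNReal.ofReal (√ρ) := by
  obtain ⟨K, hK, hang⟩ := ang_bound
  refine ⟨K, hK, ?_⟩
  intro x τ hτ hτx g hg
  have hr : 0 < ‖x‖ := by linarith
  obtain ⟨L, hL⟩ := exists_iso x
  set r := ‖x‖ with hrdef
  have hLn : ∀ z : ℂ, ‖L z - x‖ = ‖z - (r : ℂ)‖ := by
    intro z
    conv_lhs => rw [← hL]
    rw [← map_sub, L.norm_map]
  rw [← L.measurePreserving.lintegral_comp (by fun_prop)]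
  simp only [hLn, L.norm_map]
  rw [← Complex.lintegral_comp_polarCoord_symm, polarCoord_target, Measure.volume_eq_prod,
    ← Measure.prod_restrict]
  have hmeas : Measurable fun p : ℝ × ℝ => ENNReal.ofReal p.1 •
      (g ‖Complex.polarCoord.symm p‖ *
        ENNReal.ofReal ((√(τ ^ 2 - ‖Complex.polarCoord.symm p - (r : ℂ)‖ ^ 2))⁻¹)) := by
    simp only [Complex.polarCoord_symm_apply]
    fun_prop
  rw [lintegral_prod _ hmeas.aemeasurable]
  rw [← lintegral_const_mul _ (by fun_prop), ← lintegral_indicator measurableSet_Ioo]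
  refine le_trans (setLIntegral_mono' measurableSet_Ioi ?_) (setLIntegral_le_lintegral _ _)
  intro ρ hρ
  have hρ : 0 < ρ := hρ
  set c := (r ^ 2 + ρ ^ 2 - τ ^ 2) / (2 * r * ρ) with hc
  have hc0 : 0 ≤ c := by
    apply div_nonneg _ (by positivity)
    nlinarith
  have hnorm : ∀ θ : ℝ, τ ^ 2 - ‖Complex.polarCoord.symm (ρ, θ) - (r : ℂ)‖ ^ 2 =
      (2 * r * ρ) * (Real.cos θ - c) := by
    intro θ
    have h1 : (2 * r * ρ) * (Real.cos θ - c) =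
        2 * r * ρ * Real.cos θ - (r ^ 2 + ρ ^ 2 - τ ^ 2) := by
      rw [hc]; field_simp
    rw [h1, Complex.polarCoord_symm_apply, Complex.sq_norm, Complex.normSq_apply]
    simp only [Complex.sub_re, Complex.sub_im, Complex.mul_re, Complex.mul_im, Complex.add_re,
      Complex.add_im, Complex.ofReal_re, Complex.ofReal_im, Complex.I_re, Complex.I_im]
    have := Real.sin_sq_add_cos_sq θ
    ring_nf
    linear_combination (-ρ ^ 2) * this
  have hrw : ∀ θ : ℝ, ENNReal.ofReal ρ • (g ‖Complex.polarCoord.symm (ρ, θ)‖ *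
        ENNReal.ofReal ((√(τ ^ 2 - ‖Complex.polarCoord.symm (ρ, θ) - (r : ℂ)‖ ^ 2))⁻¹)) =
      (ENNReal.ofReal (ρ * (√(2 * r * ρ))⁻¹) * g ρ) *
        ENNReal.ofReal ((√(Real.cos θ - c))⁻¹) := by
    intro θ
    rw [hnorm, Complex.norm_polarCoord_symm, abs_of_pos hρ, Real.sqrt_mul (by positivity), mul_inv,
      ENNReal.ofReal_mul (by positivity), ENNReal.ofReal_mul (by positivity), smul_eq_mul]
    ring
  simp only [hrw]
  rw [lintegral_const_mul _ (by fun_prop)]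
  by_cases hm : ρ ∈ Ioo (r - τ) (r + τ)
  · rw [indicator_of_mem hm]
    calc _ ≤ (ENNReal.ofReal (ρ * (√(2 * r * ρ))⁻¹) * g ρ) * ENNReal.ofReal K := by
          gcongr; exact hang c hc0
      _ = ENNReal.ofReal (ρ * (√(2 * r * ρ))⁻¹ * K) * g ρ := by
          rw [ENNReal.ofReal_mul (p := ρ * (√(2 * r * ρ))⁻¹) (by positivity)]; ring
      _ ≤ ENNReal.ofReal (K * (√r)⁻¹ * √ρ) * g ρ := by
          refine mul_le_mul_left (ENNReal.ofReal_le_ofReal ?_) _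
          have h2 : (√(2 * r * ρ))⁻¹ ≤ (√(r * ρ))⁻¹ := by
            apply inv_anti₀ (by positivity)
            apply Real.sqrt_le_sqrt
            nlinarith [mul_pos hr hρ]
          have h3 : ρ * (√(r * ρ))⁻¹ * K = K * (√r)⁻¹ * √ρ := by
            rw [Real.sqrt_mul hr.le]
            have : √ρ * √ρ = ρ := Real.mul_self_sqrt hρ.le
            have h4 : √ρ ≠ 0 := by positivity
            have h5 : √r ≠ 0 := by positivity
            field_simp
            linear_combination (-1) * this
          rw [← h3]
          gcongr
      _ = _ := by
          rw [ENNReal.ofReal_mul (p := K * (√r)⁻¹) (by positivity)]; ring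
  · rw [indicator_of_notMem hm]
    have hc1 : 1 ≤ c := by
      rw [hc, le_div_iff₀ (by positivity)]
      have : τ ≤ |ρ - r| := by
        by_contra hh
        push Not at hh
        rw [abs_lt] at hh
        exact hm ⟨by linarith, by linarith⟩
      have h2 := mul_self_le_mul_self hτ.le this
      rw [abs_mul_abs_self] at h2
      nlinarith
    rw [lintegral_eq_zero_of_ae_eq_zero]
    · simp
    · filter_upwards with θ
      rw [Real.sqrt_eq_zero_of_nonpos (by linarith [Real.cos_le_one θ])]
      simp

lemma lint_rpow_Ioi (a δ : ℝ) (ha : a < -1) (hδ : 0 < δ) :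
    ∫⁻ σ in Ioi δ, ENNReal.ofReal (σ ^ a) = ENNReal.ofReal (-δ ^ (a + 1) / (a + 1)) := by
  rw [← integral_Ioi_rpow_of_lt ha hδ,
    ofReal_integral_eq_lintegral_ofReal (integrableOn_Ioi_rpow_of_lt ha hδ)]
  filter_upwards [ae_restrict_mem measurableSet_Ioi] with v hv
  exact Real.rpow_nonneg (hδ.trans hv).le _

lemma hom_bound (α A r t : ℝ) (hα : 0 < α) (hA : 0 < A) (ht : 0 < t) (htr : t < r) :
    ∫⁻ ρ in Ioo (r - t) (r + t),
      ENNReal.ofReal (A * (t * ρ ^ (-(1 / 2) - α) + 2 * t ^ 2 * ρ ^ (-(3 / 2) - α))) *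
        ENNReal.ofReal (√ρ) ≤
      ENNReal.ofReal (A * (t ^ 2 * ((2 + 2 / α) * (r - t) ^ (-α)))) := by
  have hδ : 0 < r - t := by linarith
  have hpt : ∀ ρ ∈ Ioo (r - t) (r + t),
      ENNReal.ofReal (A * (t * ρ ^ (-(1 / 2) - α) + 2 * t ^ 2 * ρ ^ (-(3 / 2) - α))) *
        ENNReal.ofReal (√ρ) ≤ ENNReal.ofReal (A * t * (r - t) ^ (-α)) +
          ENNReal.ofReal (2 * A * t ^ 2) * ENNReal.ofReal (ρ ^ (-1 - α)) := by
    intro ρ hρ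
    have hρ0 : 0 < ρ := hδ.trans hρ.1
    rw [← ENNReal.ofReal_mul (by positivity), ← ENNReal.ofReal_mul (by positivity),
      ← ENNReal.ofReal_add (by positivity) (by positivity)]
    apply ENNReal.ofReal_le_ofReal
    have e1 : ρ ^ (-(1 / 2) - α) * √ρ = ρ ^ (-α) := by
      rw [Real.sqrt_eq_rpow, ← Real.rpow_add hρ0]; congr 1; ring
    have e2 : ρ ^ (-(3 / 2) - α) * √ρ = ρ ^ (-1 - α) := by
      rw [Real.sqrt_eq_rpow, ← Real.rpow_add hρ0]; congr 1; ring
    have e3 : ρ ^ (-α) ≤ (r - t) ^ (-α) :=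
      Real.rpow_le_rpow_of_nonpos hδ hρ.1.le (by linarith)
    calc _ = A * t * (ρ ^ (-(1 / 2) - α) * √ρ) + 2 * A * t ^ 2 * (ρ ^ (-(3 / 2) - α) * √ρ) := by
          ring
      _ ≤ _ := by
          rw [e1, e2]; gcongr
  refine (setLIntegral_mono' measurableSet_Ioo hpt).trans ?_
  rw [lintegral_add_left (by fun_prop), lintegral_const_mul _ (by fun_prop), setLIntegral_const,
    Real.volume_Ioo, ← ENNReal.ofReal_mul (by positivity)]
  have h4 : ∫⁻ ρ in Ioo (r - t) (r + t), ENNReal.ofReal (ρ ^ (-1 - α)) ≤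
      ENNReal.ofReal ((r - t) ^ (-α) / α) := by
    refine (lintegral_mono_set Ioo_subset_Ioi_self).trans ?_
    rw [lint_rpow_Ioi _ _ (by linarith) hδ]
    apply le_of_eq
    congr 1
    rw [show -1 - α + 1 = -α by ring]
    field_simp
  calc _ ≤ ENNReal.ofReal (A * t * (r - t) ^ (-α) * (r + t - (r - t))) +
        ENNReal.ofReal (2 * A * t ^ 2) * ENNReal.ofReal ((r - t) ^ (-α) / α) := by gcongr
    _ = _ := by
      rw [← ENNReal.ofReal_mul (by positivity), ← ENNReal.ofReal_add _ (by positivity)]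
      · congr 1
        field_simp
        ring
      · have : r + t - (r - t) = 2 * t := by ring
        rw [this]; positivity

lemma force_bound (β B r t : ℝ) (hβ : 0 < β) (hB : 0 < B) (htr : t < r) :
    ∫⁻ s in Ioo 0 t, ∫⁻ ρ in Ioo (r - (t - s)) (r + (t - s)),
      ENNReal.ofReal (B * ρ ^ (-(5 / 2) : ℝ) * (ρ - s) ^ (-β)) * ENNReal.ofReal (√ρ) ≤
      ENNReal.ofReal (B * ((r - t) ^ (-β) / β)) := by
  set δ := r - t with hδd
  have hδ : 0 < δ := by linarith
  have hin : ∀ s ∈ Ioo 0 t, ∫⁻ ρ in Ioo (r - (t - s)) (r + (t - s)),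
      ENNReal.ofReal (B * ρ ^ (-(5 / 2) : ℝ) * (ρ - s) ^ (-β)) * ENNReal.ofReal (√ρ) ≤
      ∫⁻ σ in Ioi δ, ENNReal.ofReal (B * σ ^ (-β)) * ENNReal.ofReal ((σ + s) ^ (-2 : ℝ)) := by
    intro s hs
    have := (measurePreserving_add_right (volume : Measure ℝ) s).setLIntegral_comp_preimage
      (s := Ioi (δ + s)) measurableSet_Ioi
      (f := fun ρ => ENNReal.ofReal (B * ρ ^ (-(5 / 2) : ℝ) * (ρ - s) ^ (-β)) *
        ENNReal.ofReal (√ρ)) (by fun_prop)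
    have hset : (fun x => x + s) ⁻¹' Ioi (δ + s) = Ioi δ := by ext v; simp
    rw [hset] at this
    refine (lintegral_mono_set (t := Ioi (δ + s)) ?_).trans ?_
    · intro v hv
      have := hv.1
      simp only [mem_Ioi]; linarith
    rw [← this]
    refine setLIntegral_mono' measurableSet_Ioi ?_
    intro σ hσ
    have hσ0 : 0 < σ := hδ.trans hσ
    have hs0 := hs.1
    have hσs : 0 < σ + s := by linarith
    rw [add_sub_cancel_right, ← ENNReal.ofReal_mul (by positivity),
      ← ENNReal.ofReal_mul (by positivity)]
    apply le_of_eq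
    congr 1
    have e1 : (σ + s) ^ (-(5 / 2) : ℝ) * √(σ + s) = (σ + s) ^ (-2 : ℝ) := by
      rw [Real.sqrt_eq_rpow, ← Real.rpow_add hσs]; norm_num
    rw [← e1]; ring
  refine (setLIntegral_mono' measurableSet_Ioo hin).trans ?_
  refine (lintegral_mono_set Ioo_subset_Ioi_self).trans ?_
  rw [lintegral_lintegral_swap (by fun_prop)]
  have hin2 : ∀ σ ∈ Ioi δ, ∫⁻ s in Ioi 0, ENNReal.ofReal (B * σ ^ (-β)) *
      ENNReal.ofReal ((σ + s) ^ (-2 : ℝ)) = ENNReal.ofReal B * ENNReal.ofReal (σ ^ (-1 - β)) := by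
    intro σ hσ
    have hσ0 : 0 < σ := hδ.trans hσ
    rw [lintegral_const_mul _ (by fun_prop)]
    have := (measurePreserving_add_left (volume : Measure ℝ) σ).setLIntegral_comp_preimage
      (s := Ioi σ) measurableSet_Ioi
      (f := fun v => ENNReal.ofReal (v ^ (-2 : ℝ))) (by fun_prop)
    have hset : (fun x => σ + x) ⁻¹' Ioi σ = Ioi 0 := by ext v; simp
    rw [hset, lint_rpow_Ioi _ _ (by norm_num) hσ0] at this
    rw [this, ← ENNReal.ofReal_mul (by positivity), ← ENNReal.ofReal_mul (by positivity)]
    congr 1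
    have e1 : σ ^ (-1 - β) = σ ^ (-β) * σ ^ (-2 + 1 : ℝ) := by
      rw [← Real.rpow_add hσ0]; congr 1; ring
    rw [e1]
    ring
  rw [setLIntegral_congr_fun measurableSet_Ioi hin2, lintegral_const_mul _ (by fun_prop),
    lint_rpow_Ioi _ _ (by linarith) hδ, ← ENNReal.ofReal_mul hB.le]
  apply le_of_eq
  congr 2
  rw [show -1 - β + 1 = -β by ring]
  field_simp

lemma abs_le_of_enorm {I M : ℝ} (hM : 0 ≤ M) (h : ‖I‖ₑ ≤ ENNReal.ofReal M) : |I| ≤ M := by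
  rw [Real.enorm_eq_ofReal_abs] at h
  exact (ENNReal.ofReal_le_ofReal_iff hM).1 h

lemma enorm_div_sqrt_le {a b w : ℝ} (h : |a| ≤ b) :
    ‖a / √w‖ₑ ≤ ENNReal.ofReal b * ENNReal.ofReal ((√w)⁻¹) := by
  rw [← ENNReal.ofReal_mul ((abs_nonneg a).trans h), Real.enorm_eq_ofReal_abs]
  apply ENNReal.ofReal_le_ofReal
  rw [abs_div, abs_of_nonneg (Real.sqrt_nonneg w), div_eq_mul_inv]
  gcongr

/-- Lemma 6.1 (Lemma `lm1`): decay estimate for the solution of the linear wave equation on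
`ℝ²` given by the standard representation formula, under point-wise decay assumptions on the
data `(u₀, u₁)` and the forcing term `F`. The constant `C ≥ 1` depends only on `α` and `β`. -/
theorem stmt_6 (α β : ℝ) (hα : 0 < α) (hα' : α < 1 / 2) (hβ : 0 < β) (hβ' : β < 1 / 2) :
    ∃ C : ℝ, 1 ≤ C ∧
      ∀ (T R A B : ℝ), 0 < T → 0 < R → 0 < A → 0 < B →
      ∀ (u₀ u₁ : EuclideanSpace ℝ (Fin 2) → ℝ)
        (F : EuclideanSpace ℝ (Fin 2) → ℝ → ℝ)
        (u : EuclideanSpace ℝ (Fin 2) → ℝ → ℝ),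
        ContDiff ℝ 1 u₀ →
        Continuous u₁ →
        ContinuousOn (fun p : EuclideanSpace ℝ (Fin 2) × ℝ => F p.1 p.2)
          (Set.univ ×ˢ Set.Icc 0 T) →
        (∀ x : EuclideanSpace ℝ (Fin 2), R < ‖x‖ →
          |u₀ x| ≤ A * ‖x‖ ^ (-(1 / 2) - α)) →
        (∀ x : EuclideanSpace ℝ (Fin 2), R < ‖x‖ →
          ‖fderiv ℝ u₀ x‖ ≤ A * ‖x‖ ^ (-(3 / 2) - α)) →
        (∀ x : EuclideanSpace ℝ (Fin 2), R < ‖x‖ →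
          |u₁ x| ≤ A * ‖x‖ ^ (-(3 / 2) - α)) →
        (∀ (x : EuclideanSpace ℝ (Fin 2)) (t : ℝ), t ∈ Set.Icc 0 T → R + t < ‖x‖ →
          |F x t| ≤ B * ‖x‖ ^ (-(5 / 2) : ℝ) * (‖x‖ - t) ^ (-β)) →
        (∀ x : EuclideanSpace ℝ (Fin 2), u x 0 = u₀ x) →
        (∀ (x : EuclideanSpace ℝ (Fin 2)) (t : ℝ), t ∈ Set.Ioc 0 T →
          u x t =
            (1 / (2 * Real.pi * t ^ 2)) *
              ∫ y in Metric.ball x t,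
                (t * u₀ y + t ^ 2 * u₁ y + t * (fderiv ℝ u₀ y (y - x))) /
                  Real.sqrt (t ^ 2 - ‖y - x‖ ^ 2)
            + (1 / (2 * Real.pi)) *
              ∫ s in Set.Ioo 0 t, ∫ y in Metric.ball x (t - s),
                F y s / Real.sqrt ((t - s) ^ 2 - ‖y - x‖ ^ 2)) →
        ∀ (x : EuclideanSpace ℝ (Fin 2)) (t : ℝ), t ∈ Set.Icc 0 T → R + t < ‖x‖ →
          |u x t| ≤ C * ‖x‖ ^ (-(1 / 2) : ℝ) *
            (A * (‖x‖ - t) ^ (-α) + B * (‖x‖ - t) ^ (-β)) := by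
  obtain ⟨K, hK, hkey⟩ := polar_key
  refine ⟨1 + K * (2 + 2 / α) + K / β, ?_, ?_⟩
  · have : 0 ≤ K * (2 + 2 / α) := by positivity
    have : 0 ≤ K / β := by positivity
    linarith
  intro T R A B hT hR hA hB u₀ u₁ F u _ _ _ hu₀ hdu₀ hu₁ hF hu0 hu x t ht hxt
  have hr : 0 < ‖x‖ := by linarith [ht.1]
  have hδ : 0 < ‖x‖ - t := by linarith
  have pr : 0 < ‖x‖ ^ (-(1 / 2) : ℝ) := Real.rpow_pos_of_pos hr _
  have pα : 0 < (‖x‖ - t) ^ (-α) := Real.rpow_pos_of_pos hδ _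
  have pβ : 0 < (‖x‖ - t) ^ (-β) := Real.rpow_pos_of_pos hδ _
  rcases ht.1.eq_or_lt with h0 | htpos
  · subst h0
    rw [hu0]
    refine (hu₀ x (by linarith)).trans ?_
    rw [sub_zero] at *
    have e : ‖x‖ ^ (-(1 / 2) - α) = ‖x‖ ^ (-(1 / 2) : ℝ) * ‖x‖ ^ (-α) := by
      rw [← Real.rpow_add hr]; congr 1
    rw [e]
    have h1 : 1 ≤ 1 + K * (2 + 2 / α) + K / β := by
      have : 0 ≤ K * (2 + 2 / α) := by positivity
      have : 0 ≤ K / β := by positivity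
      linarith
    calc A * (‖x‖ ^ (-(1 / 2) : ℝ) * ‖x‖ ^ (-α)) =
        1 * ‖x‖ ^ (-(1 / 2) : ℝ) * (A * ‖x‖ ^ (-α) + 0) := by ring
      _ ≤ _ := by gcongr; positivity
  have hball : ∀ (τ : ℝ) (y : EuclideanSpace ℝ (Fin 2)), y ∈ ball x τ → ‖x‖ - τ < ‖y‖ := by
    intro τ y hy
    rw [mem_ball, dist_eq_norm] at hy
    have h1 : ‖x‖ ≤ ‖y‖ + ‖y - x‖ := by
      have := norm_sub_le y (y - x)
      rwa [sub_sub_cancel] at this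
    linarith
  have hsq : (√‖x‖)⁻¹ = ‖x‖ ^ (-(1 / 2) : ℝ) := by
    rw [Real.sqrt_eq_rpow, Real.rpow_neg hr.le]
  -- homogeneous part
  have hI1 : ∫⁻ y in Metric.ball x t,
                ‖(t * u₀ y + t ^ 2 * u₁ y + t * (fderiv ℝ u₀ y (y - x))) /
                  Real.sqrt (t ^ 2 - ‖y - x‖ ^ 2)‖ₑ ≤
      ENNReal.ofReal
        (K * ‖x‖ ^ (-(1 / 2) : ℝ) * (A * (t ^ 2 * ((2 + 2 / α) * (‖x‖ - t) ^ (-α))))) := by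
    have hm : Measurable fun ρ : ℝ =>
      ENNReal.ofReal (A * (t * ρ ^ (-(1 / 2) - α) + 2 * t ^ 2 * ρ ^ (-(3 / 2) - α))) := by
      fun_prop
    refine le_trans ?_ ((setLIntegral_le_lintegral (ball x t) _).trans
      ((hkey x t htpos (by linarith) _ hm).trans ?_))
    · refine setLIntegral_mono' measurableSet_ball ?_
      intro y hy
      apply enorm_div_sqrt_le
      have hy1 := hball t y hy
      have hyR : R < ‖y‖ := by linarith
      have hy0 : 0 < ‖y‖ := by linarith
      have b0 := hu₀ y hyR
      have b1 := hu₁ y hyR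
      have b2 := hdu₀ y hyR
      have b3 : |fderiv ℝ u₀ y (y - x)| ≤ A * ‖y‖ ^ (-(3 / 2) - α) * t := by
        have h1 := (fderiv ℝ u₀ y).le_opNorm (y - x)
        rw [Real.norm_eq_abs] at h1
        refine h1.trans ?_
        have h2 : ‖y - x‖ ≤ t := by
          rw [mem_ball, dist_eq_norm] at hy; exact hy.le
        gcongr
      calc |t * u₀ y + t ^ 2 * u₁ y + t * (fderiv ℝ u₀ y (y - x))|
          ≤ |t * u₀ y| + |t ^ 2 * u₁ y| + |t * (fderiv ℝ u₀ y (y - x))| := abs_add_three _ _ _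
        _ = t * |u₀ y| + t ^ 2 * |u₁ y| + t * |fderiv ℝ u₀ y (y - x)| := by
            rw [abs_mul, abs_mul, abs_mul, abs_of_pos htpos, abs_of_pos (by positivity : 0 < t ^ 2)]
        _ ≤ t * (A * ‖y‖ ^ (-(1 / 2) - α)) + t ^ 2 * (A * ‖y‖ ^ (-(3 / 2) - α)) +
            t * (A * ‖y‖ ^ (-(3 / 2) - α) * t) := by gcongr
        _ = _ := by ring
    · rw [hsq, ENNReal.ofReal_mul (p := K * ‖x‖ ^ (-(1 / 2) : ℝ)) (by positivity)]
      gcongr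
      exact hom_bound α A ‖x‖ t hα hA htpos (by linarith)
  -- forcing part
  have hI2 : |∫ s in Set.Ioo 0 t, ∫ y in Metric.ball x (t - s),
                F y s / Real.sqrt ((t - s) ^ 2 - ‖y - x‖ ^ 2)| ≤
      K * ‖x‖ ^ (-(1 / 2) : ℝ) * (B * ((‖x‖ - t) ^ (-β) / β)) := by
    apply abs_le_of_enorm (by positivity)
    refine (enorm_integral_le_lintegral_enorm _).trans ?_
    have hs : ∀ s ∈ Ioo 0 t, ‖∫ y in Metric.ball x (t - s),
                F y s / Real.sqrt ((t - s) ^ 2 - ‖y - x‖ ^ 2)‖ₑ ≤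
        ENNReal.ofReal (K * ‖x‖ ^ (-(1 / 2) : ℝ)) *
          ∫⁻ ρ in Ioo (‖x‖ - (t - s)) (‖x‖ + (t - s)),
            ENNReal.ofReal (B * ρ ^ (-(5 / 2) : ℝ) * (ρ - s) ^ (-β)) * ENNReal.ofReal (√ρ) := by
      intro s hs
      refine (enorm_integral_le_lintegral_enorm _).trans ?_
      have hm : Measurable fun ρ : ℝ =>
        ENNReal.ofReal (B * ρ ^ (-(5 / 2) : ℝ) * (ρ - s) ^ (-β)) := by
        fun_prop
      have hk := hkey x (t - s) (by linarith [hs.2]) (by linarith [hs.1]) _ hm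
      rw [hsq] at hk
      refine le_trans ?_ ((setLIntegral_le_lintegral (ball x (t - s)) _).trans hk)
      refine setLIntegral_mono' measurableSet_ball ?_
      intro y hy
      apply enorm_div_sqrt_le
      have hy1 := hball (t - s) y hy
      exact hF y s ⟨hs.1.le, hs.2.le.trans ht.2⟩ (by linarith)
    refine (setLIntegral_mono' measurableSet_Ioo hs).trans ?_
    rw [lintegral_const_mul' _ _ ENNReal.ofReal_ne_top,
      ENNReal.ofReal_mul (p := K * ‖x‖ ^ (-(1 / 2) : ℝ)) (by positivity)]
    gcongr
    exact force_bound β B ‖x‖ t hβ hB (by linarith)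
  rw [hu x t ⟨htpos, ht.2⟩]
  -- in the frozen statement the forcing term sits inside the integral over `ball x t`
  set J := ∫ s in Set.Ioo 0 t, ∫ y in Metric.ball x (t - s),
                F y s / Real.sqrt ((t - s) ^ 2 - ‖y - x‖ ^ 2) with hJ
  have hpi := Real.pi_pos
  have hcJ : |1 / (2 * Real.pi) * J| ≤
      K * ‖x‖ ^ (-(1 / 2) : ℝ) * (B * ((‖x‖ - t) ^ (-β) / β)) := by
    rw [abs_mul]
    have c2 : |1 / (2 * Real.pi)| ≤ 1 := by
      rw [abs_of_pos (by positivity), div_le_one (by positivity)]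
      linarith [Real.two_le_pi]
    calc _ ≤ 1 * |J| := by gcongr
      _ ≤ _ := by rw [one_mul]; exact hI2
  have hI : |∫ y in Metric.ball x t,
                ((t * u₀ y + t ^ 2 * u₁ y + t * (fderiv ℝ u₀ y (y - x))) /
                  Real.sqrt (t ^ 2 - ‖y - x‖ ^ 2) + 1 / (2 * Real.pi) * J)| ≤
      K * ‖x‖ ^ (-(1 / 2) : ℝ) * (A * (t ^ 2 * ((2 + 2 / α) * (‖x‖ - t) ^ (-α)))) +
      K * ‖x‖ ^ (-(1 / 2) : ℝ) * (B * ((‖x‖ - t) ^ (-β) / β)) * (t ^ 2 * Real.pi) := by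
    apply abs_le_of_enorm (by positivity)
    refine (enorm_integral_le_lintegral_enorm _).trans ?_
    refine (lintegral_mono (fun y => enorm_add_le _ _)).trans ?_
    rw [lintegral_add_right _ measurable_const, setLIntegral_const,
      EuclideanSpace.volume_ball_fin_two, Real.enorm_eq_ofReal_abs,
      ENNReal.ofReal_add (by positivity) (by positivity)]
    refine add_le_add hI1 ?_
    rw [ENNReal.ofReal_mul (p := K * ‖x‖ ^ (-(1 / 2) : ℝ) * (B * ((‖x‖ - t) ^ (-β) / β)))
      (by positivity), ENNReal.ofReal_mul (p := t ^ 2) (by positivity),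
      ENNReal.ofReal_pow htpos.le]
    exact mul_le_mul' (ENNReal.ofReal_le_ofReal hcJ) le_rfl
  rw [abs_mul, abs_of_pos (by positivity : 0 < 1 / (2 * Real.pi * t ^ 2))]
  have m1 : 0 ≤ K * ‖x‖ ^ (-(1 / 2) : ℝ) * (A * ((2 + 2 / α) * (‖x‖ - t) ^ (-α))) := by positivity
  have m2 : 0 ≤ K * ‖x‖ ^ (-(1 / 2) : ℝ) * (B * ((‖x‖ - t) ^ (-β) / β)) := by positivity
  calc _ ≤ 1 / (2 * Real.pi * t ^ 2) *
        (K * ‖x‖ ^ (-(1 / 2) : ℝ) * (A * (t ^ 2 * ((2 + 2 / α) * (‖x‖ - t) ^ (-α)))) +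
      K * ‖x‖ ^ (-(1 / 2) : ℝ) * (B * ((‖x‖ - t) ^ (-β) / β)) * (t ^ 2 * Real.pi)) := by
        gcongr
    _ = 1 / (2 * Real.pi) *
          (K * ‖x‖ ^ (-(1 / 2) : ℝ) * (A * ((2 + 2 / α) * (‖x‖ - t) ^ (-α)))) +
        1 / 2 * (K * ‖x‖ ^ (-(1 / 2) : ℝ) * (B * ((‖x‖ - t) ^ (-β) / β))) := by
        field_simp
    _ ≤ 1 * (K * ‖x‖ ^ (-(1 / 2) : ℝ) * (A * ((2 + 2 / α) * (‖x‖ - t) ^ (-α)))) +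
        1 * (K * ‖x‖ ^ (-(1 / 2) : ℝ) * (B * ((‖x‖ - t) ^ (-β) / β))) := by
        refine add_le_add (mul_le_mul_of_nonneg_right ?_ m1) (mul_le_mul_of_nonneg_right ?_ m2)
        · rw [div_le_one (by positivity)]
          linarith [Real.two_le_pi]
        · norm_num
    _ = (K * (2 + 2 / α)) * (‖x‖ ^ (-(1 / 2) : ℝ) * (A * (‖x‖ - t) ^ (-α))) +
        (K / β) * (‖x‖ ^ (-(1 / 2) : ℝ) * (B * (‖x‖ - t) ^ (-β))) := by
        field_simp
    _ ≤ (1 + K * (2 + 2 / α) + K / β) * (‖x‖ ^ (-(1 / 2) : ℝ) * (A * (‖x‖ - t) ^ (-α))) +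
        (1 + K * (2 + 2 / α) + K / β) * (‖x‖ ^ (-(1 / 2) : ℝ) * (B * (‖x‖ - t) ^ (-β))) := by
        have q1 : 0 ≤ K * (2 + 2 / α) := by positivity
        have q2 : 0 ≤ K / β := by positivity
        refine add_le_add (mul_le_mul_of_nonneg_right ?_ ?_) (mul_le_mul_of_nonneg_right ?_ ?_)
        · linarith
        · positivity
        · linarith
        · positivity
    _ = _ := by ring
end

section
/- Let ε, A > 0 and let u₀ ∈ C¹(ℝ²), u₁ ∈ C(ℝ²) be radially symmetric with |∇u₀(x)| ≤ A (1 + |x|)^{−3/2−ε}, |u₁(x)| ≤ A (1 + |x|)^{−3/2−ε}, and |u₀(x)| ≤ A (1 + |x|)^{−1/2−ε} for all x ∈ ℝ². Then there exists a constant C = C(ε, A) < ∞, depending only on ε and A, such that every twice continuously differentiable global solution u : ℝ² × ℝ → ℝ of the defocusing quintic wave equation ∂ₜ²u − Δu = −|u|⁴u with u(·,0) = u₀ and ∂ₜu(·,0) = u₁ has finite space-time sextic norm: ∫_ℝ ∫_{ℝ²} |u(x,t)|⁶ dx dt ≤ C. -/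
open MeasureTheory Set

/-- A radial solution `U(t,r)` of the equation together with its derivatives. -/
structure RadSol (U q p qt qr pr : ℝ → ℝ → ℝ) : Prop where
  hU : ∀ t r, HasFDerivAt (fun z : ℝ × ℝ => U z.1 z.2)
    (q t r • ContinuousLinearMap.fst ℝ ℝ ℝ + p t r • ContinuousLinearMap.snd ℝ ℝ ℝ) (t, r)
  hq : ∀ t r, HasFDerivAt (fun z : ℝ × ℝ => q z.1 z.2)
    (qt t r • ContinuousLinearMap.fst ℝ ℝ ℝ + qr t r • ContinuousLinearMap.snd ℝ ℝ ℝ) (t, r)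
  hp : ∀ t r, HasFDerivAt (fun z : ℝ × ℝ => p z.1 z.2)
    (qr t r • ContinuousLinearMap.fst ℝ ℝ ℝ + pr t r • ContinuousLinearMap.snd ℝ ℝ ℝ) (t, r)
  cqt : Continuous (fun z : ℝ × ℝ => qt z.1 z.2)
  cqr : Continuous (fun z : ℝ × ℝ => qr z.1 z.2)
  cpr : Continuous (fun z : ℝ × ℝ => pr z.1 z.2)
  eq : ∀ t r, 0 < r → qt t r = pr t r + p t r / r - (U t r) ^ 5

theorem chain2 {F : ℝ → ℝ → ℝ} {f1 f2 t r : ℝ}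
    (h : HasFDerivAt (fun z : ℝ × ℝ => F z.1 z.2)
      (f1 • ContinuousLinearMap.fst ℝ ℝ ℝ + f2 • ContinuousLinearMap.snd ℝ ℝ ℝ) (t, r))
    {a b : ℝ → ℝ} {a' b' x : ℝ} (ha : HasDerivAt a a' x) (hb : HasDerivAt b b' x)
    (ea : a x = t) (eb : b x = r) :
    HasDerivAt (fun x => F (a x) (b x)) (f1 * a' + f2 * b') x := by
  subst ea eb
  have := HasFDerivAt.comp_hasDerivAt (l := fun z : ℝ × ℝ => F z.1 z.2)
    (f := fun x => (a x, b x)) x h (ha.prodMk hb)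
  refine HasDerivAt.congr_deriv (f := fun x => F (a x) (b x)) this ?_
  simp

theorem cmp_deriv {f g f' g' : ℝ → ℝ} {a b : ℝ} (hab : a ≤ b)
    (hf : ContinuousOn f (Icc a b)) (hg : ContinuousOn g (Icc a b))
    (hf' : ∀ x ∈ Ioo a b, HasDerivAt f (f' x) x)
    (hg' : ∀ x ∈ Ioo a b, HasDerivAt g (g' x) x)
    (h : ∀ x ∈ Ioo a b, |f' x| ≤ g' x) : |f b - f a| ≤ g b - g a := by
  have h1 : MonotoneOn (fun x => g x - f x) (Icc a b) := by
    apply monotoneOn_of_deriv_nonneg (convex_Icc a b) (hg.sub hf)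
    · intro x hx
      rw [interior_Icc] at hx
      exact ((hg' x hx).sub (hf' x hx)).differentiableAt.differentiableWithinAt
    · intro x hx
      rw [interior_Icc] at hx
      rw [((hg' x hx).sub (hf' x hx)).deriv]
      have := abs_le.1 (h x hx)
      linarith [this.2]
  have h2 : MonotoneOn (fun x => g x + f x) (Icc a b) := by
    apply monotoneOn_of_deriv_nonneg (convex_Icc a b) (hg.add hf)
    · intro x hx
      rw [interior_Icc] at hx
      exact ((hg' x hx).add (hf' x hx)).differentiableAt.differentiableWithinAt
    · intro x hx
      rw [interior_Icc] at hx
      rw [((hg' x hx).add (hf' x hx)).deriv]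
      have := abs_le.1 (h x hx)
      linarith [this.1]
  have i1 := h1 (left_mem_Icc.2 hab) (right_mem_Icc.2 hab) hab
  have i2 := h2 (left_mem_Icc.2 hab) (right_mem_Icc.2 hab) hab
  simp only at i1 i2
  rw [abs_le]; constructor <;> linarith

section
variable {U q p qt qr pr : ℝ → ℝ → ℝ}

theorem RadSol.cU (h : RadSol U q p qt qr pr) : Continuous (fun z : ℝ × ℝ => U z.1 z.2) :=
  continuous_iff_continuousAt.2 fun z => (h.hU z.1 z.2).continuousAt
theorem RadSol.cq (h : RadSol U q p qt qr pr) : Continuous (fun z : ℝ × ℝ => q z.1 z.2) :=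
  continuous_iff_continuousAt.2 fun z => (h.hq z.1 z.2).continuousAt
theorem RadSol.cp (h : RadSol U q p qt qr pr) : Continuous (fun z : ℝ × ℝ => p z.1 z.2) :=
  continuous_iff_continuousAt.2 fun z => (h.hp z.1 z.2).continuousAt

/-- outgoing derivative of `√r U` -/
theorem RadSol.outW (h : RadSol U q p qt qr pr) (c x : ℝ) (hx : 0 < c + x) :
    HasDerivAt (fun x => √(c + x) * U x (c + x))
      (√(c + x) * (q x (c + x) + p x (c + x)) + U x (c + x) / (2 * √(c + x))) x := by
  have hb : HasDerivAt (fun x => c + x) 1 x := by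
    simpa using (hasDerivAt_id x).const_add c
  have h1 := chain2 (h.hU x (c + x)) (hasDerivAt_id x) hb rfl rfl
  have h2 := (hb.sqrt hx.ne').mul h1
  refine h2.congr_deriv ?_
  simp; ring

theorem RadSol.inL (h : RadSol U q p qt qr pr) (c x : ℝ) (hx : 0 < c - x) :
    HasDerivAt (fun x => √(c - x) * (q x (c - x) + p x (c - x)) + U x (c - x) / (2 * √(c - x)))
      (√(c - x) * U x (c - x) * (1 / 4 - (√(c - x) * U x (c - x)) ^ 4) / (c - x) ^ 2) x := by
  have hb : HasDerivAt (fun x => c - x) (-1) x := by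
    simpa using (hasDerivAt_id x).const_sub c
  have h1 := chain2 (h.hU x (c - x)) (hasDerivAt_id x) hb rfl rfl
  have h2 := chain2 (h.hq x (c - x)) (hasDerivAt_id x) hb rfl rfl
  have h3 := chain2 (h.hp x (c - x)) (hasDerivAt_id x) hb rfl rfl
  have hs : 0 < √(c - x) := Real.sqrt_pos.2 hx
  have h4 := hb.sqrt hx.ne'
  have h5 := (h4.fun_mul (h2.fun_add h3)).fun_add (h1.fun_div (h4.const_mul 2) (by positivity))
  refine h5.congr_deriv ?_
  have e := h.eq x (c - x) hx
  have hsq : √(c - x) ^ 2 = c - x := Real.sq_sqrt hx.le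
  simp only [id] at *
  rw [e]
  generalize √(c - x) = s at *
  rw [← hsq]
  field_simp
  ring

set_option maxHeartbeats 2000000 in
theorem RadSol.step (h : RadSol U q p qt qr pr) {ε A R : ℝ} (hε : 0 < ε) (hε' : ε ≤ 1 / 16)
    (hA : 0 < A) (hR : 1 ≤ R)
    (d0 : ∀ r, 1 ≤ r → √r * |U 0 r| ≤ A * r ^ (-ε))
    (d1 : ∀ r, 1 ≤ r → |√r * (q 0 r + p 0 r) + U 0 r / (2 * √r)| ≤ 5 / 2 * A * (r ^ (-ε) / r))
    (t r : ℝ) (ht : 0 ≤ t) (hr : t + R ≤ r)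
    (H : ∀ t' r', 0 ≤ t' → t' < t → r - t ≤ r' - t' → r' + t' ≤ r + t →
      √r' * |U t' r'| ≤ 1 / 2 ∧
      √(r' - t') * (√r' * |U t' r'|) ≤ 28 * A * (√(r' + t') * (r' + t') ^ (-ε))) :
    |√r * (q t r + p t r) + U t r / (2 * √r)| ≤ 47 / 2 * A * ((r + t) ^ (-ε) / (r + t)) ∧
    √r * |U t r| ≤ (A + 47 / 4 * A / ε) * (r - t) ^ (-ε) ∧
    √(r - t) * (√r * |U t r|) < 28 * A * (√(r + t) * (r + t) ^ (-ε)) := by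
  -- bound on the outgoing derivative
  have hL : ∀ t2 r2, 0 ≤ t2 → t2 ≤ t → r2 - t2 = r - t →
      |√r2 * (q t2 r2 + p t2 r2) + U t2 r2 / (2 * √r2)|
        ≤ 47 / 2 * A * ((r2 + t2) ^ (-ε) / (r2 + t2)) := by
    intro t2 r2 h0 h1 h2
    obtain ⟨v, hv⟩ : ∃ v, v = r2 + t2 := ⟨_, rfl⟩
    have hr2 : r2 = v - t2 := by linarith
    have hv1 : 1 ≤ v := by linarith
    have hv0 : 0 < v := by linarith
    set ev := v ^ (-ε) with hev
    have hevp : 0 < ev := Real.rpow_pos_of_pos hv0 _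
    have hsv : 0 < √v := Real.sqrt_pos.2 hv0
    have hsv2 : √v ^ 2 = v := Real.sq_sqrt hv0.le
    have key := cmp_deriv (a := 0) (b := t2) h0
      (f := fun x => √(v - x) * (q x (v - x) + p x (v - x)) + U x (v - x) / (2 * √(v - x)))
      (g := fun x => 28 * A * ev * √v / v ^ 2 *
        (-√(v - 2 * x) + (v - 2 * x) * √(v - 2 * x) / (4 * v)))
      (f' := fun x => √(v - x) * U x (v - x) * (1 / 4 - (√(v - x) * U x (v - x)) ^ 4)
        / (v - x) ^ 2)
      (g' := fun x => 28 * A * ev * √v / v ^ 2 *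
        (1 / √(v - 2 * x) - 3 * √(v - 2 * x) / (4 * v))) ?_ ?_ ?_ ?_ ?_
    · simp only [sub_zero, mul_zero] at key
      rw [← hr2] at key
      have k2 := d1 v hv1
      rw [← hev] at k2
      set Y := √r2 * (q t2 r2 + p t2 r2) + U t2 r2 / (2 * √r2)
      have k3 : |Y| ≤ |√v * (q 0 v + p 0 v) + U 0 v / (2 * √v)| +
          |Y - (√v * (q 0 v + p 0 v) + U 0 v / (2 * √v))| := by
        have := abs_add_le (√v * (q 0 v + p 0 v) + U 0 v / (2 * √v))
          (Y - (√v * (q 0 v + p 0 v) + U 0 v / (2 * √v)))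
        simpa using this
      have k4 : 28 * A * ev * √v / v ^ 2 *
          (-√(v - 2 * t2) + (v - 2 * t2) * √(v - 2 * t2) / (4 * v)) -
          28 * A * ev * √v / v ^ 2 * (-√v + v * √v / (4 * v)) ≤ 21 * A * (ev / v) := by
        have e1 : -√v + v * √v / (4 * v) = -(3/4) * √v := by field_simp; ring
        rw [e1]
        have e2 : -√(v - 2 * t2) + (v - 2 * t2) * √(v - 2 * t2) / (4 * v) ≤ 0 := by
          have : (v - 2 * t2) * √(v - 2 * t2) / (4 * v) ≤ √(v - 2 * t2) := by
            rw [div_le_iff₀ (by positivity)]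
            have := Real.sqrt_nonneg (v - 2 * t2)
            nlinarith
          linarith
        have e3 : 28 * A * ev * √v / v ^ 2 * (-(3/4) * √v) = - (21 * A * (ev / v)) := by
          have : 28 * A * ev * √v / v ^ 2 * (-(3/4) * √v) = -(21 * A * ev * √v ^ 2 / v ^ 2) := by
            ring
          rw [this, hsv2]; field_simp
        rw [e3]
        have : 0 ≤ 28 * A * ev * √v / v ^ 2 := by positivity
        nlinarith [mul_nonneg this (sub_nonneg.2 e2)]
      rw [← hv, ← hev]
      linarith
    · have hm : ∀ x ∈ Icc 0 t2, 0 < v - x := fun x hx => by linarith [hx.2]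
      intro x hx
      exact (h.inL v x (hm x hx)).continuousAt.continuousWithinAt
    · fun_prop
    · intro x hx
      exact h.inL v x (by linarith [hx.2])
    · intro x hx
      have hp : 0 < v - 2 * x := by linarith [hx.2]
      have hb : HasDerivAt (fun x => v - 2 * x) (-2) x := by
        simpa using ((hasDerivAt_id x).const_mul 2).const_sub v
      have hs := hb.sqrt hp.ne'
      have hs0 : 0 < √(v - 2 * x) := Real.sqrt_pos.2 hp
      have hs2 : √(v - 2 * x) ^ 2 = v - 2 * x := Real.sq_sqrt hp.le
      refine ((hs.fun_neg.fun_add ((hb.fun_mul hs).div_const (4 * v))).const_mul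
        (28 * A * ev * √v / v ^ 2)).congr_deriv ?_
      congr 1
      generalize √(v - 2 * x) = s at *
      rw [← hs2]
      field_simp
      ring
    · intro x hx
      have hp : 0 < v - 2 * x := by linarith [hx.2]
      have hvx : 0 < v - x := by linarith [hx.1]
      obtain ⟨b1, b2⟩ := H x (v - x) hx.1.le (by linarith [hx.2]) (by linarith [hx.2])
        (by linarith)
      rw [show v - x - x = v - 2 * x by ring, show v - x + x = v by ring, ← hev] at b2
      have hs0 : 0 < √(v - 2 * x) := Real.sqrt_pos.2 hp
      have hs2 : √(v - 2 * x) ^ 2 = v - 2 * x := Real.sq_sqrt hp.le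
      set w := √(v - x) * U x (v - x) with hw
      have hwa : |w| = √(v - x) * |U x (v - x)| := by
        rw [hw, abs_mul, abs_of_nonneg (Real.sqrt_nonneg _)]
      rw [← hwa] at b1 b2
      have hw4 : w ^ 4 ≤ 1 / 16 := by
        have : |w| ^ 4 ≤ (1 / 2) ^ 4 := pow_le_pow_left₀ (abs_nonneg _) b1 4
        rw [Even.pow_abs (by decide)] at this
        norm_num at this ⊢; exact this
      have hw40 : 0 ≤ w ^ 4 := by positivity
      have e1 : |w * (1 / 4 - w ^ 4) / (v - x) ^ 2| ≤ |w| / (4 * (v - x) ^ 2) := by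
        rw [abs_div, abs_mul, abs_of_nonneg (by positivity : 0 ≤ (v - x) ^ 2),
          abs_of_nonneg (by linarith : 0 ≤ 1 / 4 - w ^ 4), div_le_div_iff₀ (by positivity)
          (by positivity)]
        have := abs_nonneg w
        have e : |w| * (1 / 4 - w ^ 4) ≤ |w| * (1 / 4) := by
          apply mul_le_mul_of_nonneg_left _ this; linarith
        nlinarith [mul_le_mul_of_nonneg_right e (by positivity : 0 ≤ 4 * (v - x) ^ 2)]
      refine e1.trans ?_
      have e2 : |w| ≤ 28 * A * (√v * ev) / √(v - 2 * x) := by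
        rw [le_div_iff₀ hs0]; linarith
      have e3 : |w| / (4 * (v - x) ^ 2) ≤
          (28 * A * (√v * ev) / √(v - 2 * x)) / (4 * (v - x) ^ 2) := by gcongr
      refine e3.trans ?_
      set s := √(v - 2 * x)
      have hx' : x = (v - s ^ 2) / 2 := by linarith
      have e4 : 1 / s - 3 * s / (4 * v) = (1 / s) * ((4 * v - 3 * s ^ 2) / (4 * v)) := by
        field_simp
      rw [e4]
      have e5 : (28 * A * (√v * ev) / s) / (4 * (v - x) ^ 2) =
        28 * A * (√v * ev) * (1 / s) * (1 / (4 * (v - x) ^ 2)) := by field_simp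
      have e6 : 28 * A * ev * √v / v ^ 2 * (1 / s * ((4 * v - 3 * s ^ 2) / (4 * v))) =
        28 * A * (√v * ev) * (1 / s) * ((4 * v - 3 * s ^ 2) / (4 * v) / v ^ 2) := by field_simp
      rw [e5, e6]
      apply mul_le_mul_of_nonneg_left _ (by positivity)
      rw [div_div, div_le_div_iff₀ (by positivity) (by positivity)]
      rw [hs2]
      obtain ⟨hx0, hx1⟩ := hx
      have : 0 ≤ x * (v - 2 * x) * (5 * v + -6 * x ) := by
        apply mul_nonneg (by positivity); linarith
      nlinarith
  have hW : ∀ g : ℝ → ℝ, ContinuousOn g (Icc 0 t) → ∀ g' : ℝ → ℝ,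
      (∀ x ∈ Ioo 0 t, HasDerivAt g (g' x) x) →
      (∀ x ∈ Ioo 0 t, 47 / 2 * A * ((r - t + 2 * x) ^ (-ε) / (r - t + 2 * x)) ≤ g' x) →
      √r * |U t r| ≤ A * (r - t) ^ (-ε) + (g t - g 0) := by
    intro g hg g' hg' hgb
    have key := cmp_deriv (a := 0) (b := t) ht (f := fun x => √(r - t + x) * U x (r - t + x))
      (g := g) (f' := fun x => √(r - t + x) * (q x (r - t + x) + p x (r - t + x)) +
        U x (r - t + x) / (2 * √(r - t + x))) (g' := g') ?_ hg ?_ hg' ?_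
    · simp only [add_zero, sub_add_cancel] at key
      have k1 := d0 (r - t) (by linarith)
      have k2 : |√r * U t r| ≤ |√(r-t) * U 0 (r - t)| +
        |√r * U t r - √(r-t) * U 0 (r - t)| := by
        have := abs_add_le (√(r-t) * U 0 (r - t)) (√r * U t r - √(r-t) * U 0 (r - t))
        simpa using this
      rw [abs_mul, abs_of_nonneg (Real.sqrt_nonneg _), abs_mul,
        abs_of_nonneg (Real.sqrt_nonneg _)] at k2
      linarith
    · intro x hx
      exact (h.outW (r - t) x (by linarith [hx.1])).continuousAt.continuousWithinAt
    · intro x hx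
      exact h.outW (r - t) x (by linarith [hx.1])
    · intro x hx
      refine (hL x (r - t + x) hx.1.le hx.2.le (by ring)).trans ?_
      have := hgb x hx
      rw [show r - t + x + x = r - t + 2 * x by ring]
      exact this
  have hu : 1 ≤ r - t := by linarith
  have hdb : ∀ x, HasDerivAt (fun x => r - t + 2 * x) 2 x := fun x => by
    simpa using ((hasDerivAt_id x).const_mul 2).const_add (r - t)
  refine ⟨hL t r ht le_rfl rfl, ?_, ?_⟩
  · have := hW (fun x => -(47 / 4 * A / ε) * (r - t + 2 * x) ^ (-ε)) ?_
      (fun x => 47 / 2 * A * ((r - t + 2 * x) ^ (-ε) / (r - t + 2 * x))) ?_ ?_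
    · simp only [mul_zero, add_zero] at this
      have h3 : 0 ≤ (47 / 4 * A / ε) * (r - t + 2 * t) ^ (-ε) := by
        have : 0 ≤ (r - t + 2 * t) ^ (-ε) := Real.rpow_nonneg (by linarith) _
        positivity
      linarith
    · apply ContinuousOn.mul continuousOn_const
      apply ContinuousOn.rpow_const (by fun_prop)
      intro x hx; left; linarith [hx.1]
    · intro x hx
      have hpos : 0 < r - t + 2 * x := by linarith [hx.1]
      refine (((hdb x).rpow_const (p := -ε) (Or.inl hpos.ne')).const_mul
        (-(47 / 4 * A / ε))).congr_deriv ?_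
      rw [Real.rpow_sub_one hpos.ne']
      field_simp
      norm_num
    · intro x hx; exact le_rfl
  · have := hW (fun x => 47 / 2 * A / √(r - t) / (1 - 2 * ε) * (r - t + 2 * x) ^ (1 / 2 - ε)) ?_
      (fun x => 47 / 2 * A / √(r - t) * (√(r - t + 2 * x) * (r - t + 2 * x) ^ (-ε)
        / (r - t + 2 * x))) ?_ ?_
    · simp only [mul_zero, add_zero] at this
      have hv : r - t + 2 * t = r + t := by ring
      have hvp : 0 < r + t := by linarith
      rw [hv, Real.rpow_sub hvp, ← Real.sqrt_eq_rpow] at this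
      have hs : 0 < √(r - t) := Real.sqrt_pos.2 (by linarith)
      have h0 : 0 ≤ 47 / 2 * A / √(r - t) / (1 - 2 * ε) * (r - t) ^ (1 / 2 - ε) := by
        have : 0 ≤ (r - t) ^ (1 / 2 - ε) := Real.rpow_nonneg (by linarith) _
        have : 0 < 1 - 2 * ε := by linarith
        positivity
      have hu0 : √(r - t) * (r - t) ^ (-ε) ≤ √(r + t) * (r + t) ^ (-ε) := by
        rw [Real.sqrt_eq_rpow, Real.sqrt_eq_rpow, ← Real.rpow_add (by linarith),
          ← Real.rpow_add hvp]
        apply Real.rpow_le_rpow <;> linarith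
      have hneg : (r + t) ^ (-ε) = ((r + t) ^ ε)⁻¹ := Real.rpow_neg hvp.le _
      rw [hneg] at hu0 ⊢
      set Z := √(r + t) * ((r + t) ^ ε)⁻¹ with hZ
      have hZ0 : 0 < Z := by
        have : 0 < (r + t) ^ ε := Real.rpow_pos_of_pos hvp _
        have : 0 < √(r + t) := Real.sqrt_pos.2 hvp
        positivity
      rw [div_eq_mul_inv (√(r + t)), ← hZ] at this
      have h2 : √(r - t) * (47 / 2 * A / √(r - t) / (1 - 2 * ε) * Z) ≤ 47 / 2 * (8 / 7) * A * Z := by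
        have e : √(r - t) * (47 / 2 * A / √(r - t) / (1 - 2 * ε) * Z) =
          47 / 2 * A * Z * (1 / (1 - 2 * ε)) := by field_simp
        have e2 : 1 / (1 - 2 * ε) ≤ 8 / 7 := by
          rw [div_le_div_iff₀ (by linarith) (by norm_num)]; linarith
        rw [e]
        calc _ ≤ 47 / 2 * A * Z * (8 / 7) := by gcongr
          _ = _ := by ring
      have h3 := mul_le_mul_of_nonneg_left this hs.le
      have h4 : √(r - t) * (A * (r - t) ^ (-ε)) ≤ A * Z := by
        calc _ = A * (√(r - t) * (r - t) ^ (-ε)) := by ring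
          _ ≤ _ := by gcongr
      have h5 := mul_nonneg hs.le h0
      have h6 : 0 < A * Z := by positivity
      nlinarith
    · apply ContinuousOn.mul continuousOn_const
      apply ContinuousOn.rpow_const (by fun_prop)
      intro x hx; left; linarith [hx.1]
    · intro x hx
      have hpos : 0 < r - t + 2 * x := by linarith [hx.1]
      refine (((hdb x).rpow_const (p := 1 / 2 - ε) (Or.inl hpos.ne')).const_mul _).congr_deriv ?_
      rw [Real.rpow_sub_one hpos.ne', Real.sqrt_eq_rpow (r - t + 2 * x),
        ← Real.rpow_add hpos, ← sub_eq_add_neg]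
      have : 0 < 1 - 2 * ε := by linarith
      have : 0 < √(r - t) := Real.sqrt_pos.2 (by linarith)
      field_simp
    · intro x hx
      have hpos : 0 < r - t + 2 * x := by linarith [hx.1]
      have hs : 0 < √(r - t) := Real.sqrt_pos.2 (by linarith)
      have hss : √(r - t) ≤ √(r - t + 2 * x) := Real.sqrt_le_sqrt (by linarith [hx.1])
      have he : 0 < (r - t + 2 * x) ^ (-ε) := Real.rpow_pos_of_pos hpos _
      have e : 47 / 2 * A / √(r - t) * (√(r - t + 2 * x) * (r - t + 2 * x) ^ (-ε)
        / (r - t + 2 * x)) = 47 / 2 * A * ((r - t + 2 * x) ^ (-ε) / (r - t + 2 * x)) *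
          (√(r - t + 2 * x) / √(r - t)) := by field_simp
      rw [e]
      apply le_mul_of_one_le_right (by positivity)
      rw [le_div_iff₀ hs]; linarith

theorem RadSol.ext (h : RadSol U q p qt qr pr) {ε A R : ℝ} (hε : 0 < ε) (hε' : ε ≤ 1 / 16)
    (hA : 0 < A) (hR : 1 ≤ R) (hRB : (A + 47 / 4 * A / ε) * R ^ (-ε) < 1 / 2)
    (d0 : ∀ r, 1 ≤ r → √r * |U 0 r| ≤ A * r ^ (-ε))
    (d1 : ∀ r, 1 ≤ r → |√r * (q 0 r + p 0 r) + U 0 r / (2 * √r)| ≤ 5 / 2 * A * (r ^ (-ε) / r))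
    (t r : ℝ) (ht : 0 ≤ t) (hr : t + R ≤ r) :
    |√r * (q t r + p t r) + U t r / (2 * √r)| ≤ 47 / 2 * A * ((r + t) ^ (-ε) / (r + t)) ∧
    √r * |U t r| ≤ (A + 47 / 4 * A / ε) * (r - t) ^ (-ε) ∧ √r * |U t r| ≤ 1 / 2 := by
  have small : ∀ t r, t + R ≤ r → (A + 47 / 4 * A / ε) * (r - t) ^ (-ε) < 1 / 2 := by
    intro t r hr
    refine lt_of_le_of_lt ?_ hRB
    have : (r - t) ^ (-ε) ≤ R ^ (-ε) :=
      Real.rpow_le_rpow_of_nonpos (by linarith) (by linarith) (by linarith)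
    gcongr
  have main : ∀ t' r', 0 ≤ t' → r - t ≤ r' - t' → r' + t' ≤ r + t →
      √r' * |U t' r'| < 1 / 2 ∧
      √(r' - t') * (√r' * |U t' r'|) < 28 * A * (√(r' + t') * (r' + t') ^ (-ε)) := by
    by_contra hcon
    push Not at hcon
    let S : Set (ℝ × ℝ) := {z | (0 ≤ z.1 ∧ r - t ≤ z.2 - z.1 ∧ z.2 + z.1 ≤ r + t)}
    have hS : IsCompact S := by
      apply Metric.isCompact_of_isClosed_isBounded
      · apply IsClosed.inter
        · exact isClosed_le continuous_const continuous_fst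
        apply IsClosed.inter
        · exact isClosed_le continuous_const (continuous_snd.sub continuous_fst)
        · exact isClosed_le (continuous_snd.add continuous_fst) continuous_const
      · apply (Metric.isBounded_Icc (0 : ℝ × ℝ) (r + t, r + t)).subset
        rintro ⟨a, b⟩ ⟨h1, h2, h3⟩
        simp only at h1 h2 h3
        constructor <;> constructor <;> simp <;> linarith
    have hc : ContinuousOn (fun z : ℝ × ℝ => min (1 / 2 - √z.2 * |U z.1 z.2|)
        (28 * A * (√(z.2 + z.1) * (z.2 + z.1) ^ (-ε)) -
          √(z.2 - z.1) * (√z.2 * |U z.1 z.2|))) S := by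
      have cU := h.cU
      have c1 : ContinuousOn (fun z : ℝ × ℝ => (z.2 + z.1) ^ (-ε)) S := by
        apply ContinuousOn.rpow_const (by fun_prop)
        rintro ⟨a, b⟩ ⟨h1, h2, h3⟩
        left; simp only at *; linarith
      fun_prop
    let T := S ∩ {z : ℝ × ℝ | min (1 / 2 - √z.2 * |U z.1 z.2|)
        (28 * A * (√(z.2 + z.1) * (z.2 + z.1) ^ (-ε)) -
          √(z.2 - z.1) * (√z.2 * |U z.1 z.2|)) ≤ 0}
    have hT : IsCompact T := by
      apply hS.of_isClosed_subset _ inter_subset_left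
      exact hc.preimage_isClosed_of_isClosed hS.isClosed isClosed_Iic
    have hTn : T.Nonempty := by
      obtain ⟨t', r', h1, h2, h3, h4⟩ := hcon
      refine ⟨(t', r'), ⟨h1, h2, h3⟩, ?_⟩
      simp only [mem_ofPred_eq]
      rw [min_le_iff]
      by_cases h5 : √r' * |U t' r'| < 1 / 2
      · right; linarith [h4 h5]
      · left; linarith
    obtain ⟨⟨a, b⟩, hab, hmin⟩ := hT.exists_isMinOn hTn continuous_fst.continuousOn
    obtain ⟨⟨h1, h2, h3⟩, h4⟩ := hab
    simp only at h1 h2 h3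
    have hs := h.step hε hε' hA hR d0 d1 a b h1 (by linarith) ?_
    · obtain ⟨-, i2, i3⟩ := hs
      simp only [mem_ofPred_eq] at h4
      rw [min_le_iff] at h4
      have := small a b (by linarith)
      rcases h4 with h4 | h4 <;> linarith
    · intro t' r' j1 j2 j3 j4
      by_contra hcc
      have hmem : (t', r') ∈ T := by
        refine ⟨⟨j1, by simp only; linarith, by simp only; linarith⟩, ?_⟩
        simp only [mem_ofPred_eq]
        by_contra hneg
        push Not at hneg
        rw [lt_min_iff] at hneg
        exact hcc ⟨by linarith [hneg.1], by linarith [hneg.2]⟩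
      have := hmin hmem
      simp only [mem_ofPred_eq] at this
      linarith
  have hs := h.step hε hε' hA hR d0 d1 t r ht hr ?_
  · exact ⟨hs.1, hs.2.1, hs.2.1.trans (small t r hr).le⟩
  · intro t' r' j1 j2 j3 j4
    exact ⟨(main t' r' j1 j3 j4).1.le, (main t' r' j1 j3 j4).2.le⟩
end

theorem cone_div {Pt Pr a b c d : ℝ → ℝ → ℝ} {R T : ℝ} (hR : 0 < R) (hT : 0 ≤ T)
    (hPt : ∀ t r, 0 ≤ t → 0 ≤ r → r ≤ t + R → HasFDerivAt (fun z : ℝ × ℝ => Pt z.1 z.2)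
      (a t r • ContinuousLinearMap.fst ℝ ℝ ℝ + b t r • ContinuousLinearMap.snd ℝ ℝ ℝ) (t, r))
    (hPr : ∀ t r, 0 ≤ t → 0 ≤ r → r ≤ t + R → HasFDerivAt (fun z : ℝ × ℝ => Pr z.1 z.2)
      (c t r • ContinuousLinearMap.fst ℝ ℝ ℝ + d t r • ContinuousLinearMap.snd ℝ ℝ ℝ) (t, r))
    (hc : ContinuousOn (fun z : ℝ × ℝ => a z.1 z.2 + d z.1 z.2)
      {z | 0 ≤ z.1 ∧ 0 ≤ z.2 ∧ z.2 ≤ z.1 + R}) :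
    (∫ t in 0..T, ∫ x in (0:ℝ)..1, (t + R) * (a t (x * (t + R)) + d t (x * (t + R)))) =
      ((∫ t in 0..T, (Pr t (t + R) - Pt t (t + R))) - ∫ t in 0..T, Pr t 0) +
      (∫ x in (0:ℝ)..1, (T + R) * Pt T (x * (T + R))) - ∫ x in (0:ℝ)..1, R * Pt 0 (x * R) := by
  have hm : ∀ z : ℝ × ℝ, HasFDerivAt (fun z : ℝ × ℝ => (z.1, z.2 * (z.1 + R)))
      ((ContinuousLinearMap.fst ℝ ℝ ℝ).prod (z.2 • ContinuousLinearMap.fst ℝ ℝ ℝ +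
        (z.1 + R) • ContinuousLinearMap.snd ℝ ℝ ℝ)) z := by
    intro z
    have h1 : HasFDerivAt (fun z : ℝ × ℝ => z.1) (ContinuousLinearMap.fst ℝ ℝ ℝ) z :=
      hasFDerivAt_fst
    have h2 : HasFDerivAt (fun z : ℝ × ℝ => z.2) (ContinuousLinearMap.snd ℝ ℝ ℝ) z :=
      hasFDerivAt_snd
    exact h1.prodMk (h2.mul (h1.add_const R))
  have reg : ∀ z : ℝ × ℝ, 0 ≤ z.1 → 0 ≤ z.2 → z.2 ≤ 1 →
      0 ≤ z.2 * (z.1 + R) ∧ z.2 * (z.1 + R) ≤ z.1 + R := by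
    intro z h1 h2 h3
    constructor
    · positivity
    · nlinarith
  have hfP : ∀ z : ℝ × ℝ, 0 ≤ z.1 → 0 ≤ z.2 → z.2 ≤ 1 →
      HasFDerivAt (fun z : ℝ × ℝ => Pt z.1 (z.2 * (z.1 + R)))
      ((a z.1 (z.2 * (z.1 + R)) + z.2 * b z.1 (z.2 * (z.1 + R))) • ContinuousLinearMap.fst ℝ ℝ ℝ +
        ((z.1 + R) * b z.1 (z.2 * (z.1 + R))) • ContinuousLinearMap.snd ℝ ℝ ℝ) z := by
    intro z h1 h2 h3
    obtain ⟨r1, r2⟩ := reg z h1 h2 h3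
    have := (hPt z.1 (z.2 * (z.1 + R)) h1 r1 r2).comp z (hm z)
    refine HasFDerivAt.congr_fderiv (f := fun z : ℝ × ℝ => Pt z.1 (z.2 * (z.1 + R))) this ?_
    ext <;> simp <;> ring
  have hgP : ∀ z : ℝ × ℝ, 0 ≤ z.1 → 0 ≤ z.2 → z.2 ≤ 1 →
      HasFDerivAt (fun z : ℝ × ℝ => Pr z.1 (z.2 * (z.1 + R)))
      ((c z.1 (z.2 * (z.1 + R)) + z.2 * d z.1 (z.2 * (z.1 + R))) • ContinuousLinearMap.fst ℝ ℝ ℝ +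
        ((z.1 + R) * d z.1 (z.2 * (z.1 + R))) • ContinuousLinearMap.snd ℝ ℝ ℝ) z := by
    intro z h1 h2 h3
    obtain ⟨r1, r2⟩ := reg z h1 h2 h3
    have := (hPr z.1 (z.2 * (z.1 + R)) h1 r1 r2).comp z (hm z)
    refine HasFDerivAt.congr_fderiv (f := fun z : ℝ × ℝ => Pr z.1 (z.2 * (z.1 + R))) this ?_
    ext <;> simp <;> ring
  have hf : ∀ z : ℝ × ℝ, 0 ≤ z.1 → 0 ≤ z.2 → z.2 ≤ 1 → HasFDerivAt
      (fun z : ℝ × ℝ => (z.1 + R) * Pt z.1 (z.2 * (z.1 + R))) _ z := fun z h1 h2 h3 =>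
    ((hasFDerivAt_fst (𝕜 := ℝ) (p := z)).add_const R).fun_mul (hfP z h1 h2 h3)
  have hg : ∀ z : ℝ × ℝ, 0 ≤ z.1 → 0 ≤ z.2 → z.2 ≤ 1 → HasFDerivAt
      (fun z : ℝ × ℝ => Pr z.1 (z.2 * (z.1 + R)) - z.2 * Pt z.1 (z.2 * (z.1 + R))) _ z :=
    fun z h1 h2 h3 =>
    (hgP z h1 h2 h3).fun_sub ((hasFDerivAt_snd (𝕜 := ℝ) (p := z)).fun_mul (hfP z h1 h2 h3))
  have key := integral2_divergence_prod_of_hasFDerivAt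
    (fun z : ℝ × ℝ => (z.1 + R) * Pt z.1 (z.2 * (z.1 + R)))
    (fun z : ℝ × ℝ => Pr z.1 (z.2 * (z.1 + R)) - z.2 * Pt z.1 (z.2 * (z.1 + R)))
    _ _ 0 0 T 1 ?_ ?_ (fun z hz => hf z ?_ ?_ ?_) (fun z hz => hg z ?_ ?_ ?_) ?_
  · simp only [one_mul, zero_mul, sub_zero, zero_add] at key
    rw [← key]
    refine intervalIntegral.integral_congr fun t _ => intervalIntegral.integral_congr fun x _ => ?_
    simp
    ring
  · rw [uIcc_of_le hT, uIcc_of_le zero_le_one]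
    rintro z ⟨h1, h2⟩
    exact (hf z h1.1 h2.1 h2.2).continuousAt.continuousWithinAt
  · rw [uIcc_of_le hT, uIcc_of_le zero_le_one]
    rintro z ⟨h1, h2⟩
    exact (hg z h1.1 h2.1 h2.2).continuousAt.continuousWithinAt
  all_goals try (rw [min_eq_left hT, max_eq_right hT, min_eq_left zero_le_one,
    max_eq_right zero_le_one] at hz)
  · exact hz.1.1.le
  · exact hz.2.1.le
  · exact hz.2.2.le
  · exact hz.1.1.le
  · exact hz.2.1.le
  · exact hz.2.2.le
  · rw [uIcc_of_le hT, uIcc_of_le zero_le_one]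
    apply ContinuousOn.integrableOn_compact (isCompact_Icc.prod isCompact_Icc)
    have hcc : ContinuousOn (fun z : ℝ × ℝ => (z.1 + R) * (a z.1 (z.2 * (z.1 + R)) +
        d z.1 (z.2 * (z.1 + R)))) (Icc 0 T ×ˢ Icc 0 1) := by
      apply ContinuousOn.mul (by fun_prop)
      refine hc.comp (f := fun z : ℝ × ℝ => (z.1, z.2 * (z.1 + R))) (by fun_prop) ?_
      rintro z ⟨h1, h2⟩
      exact ⟨h1.1, reg z h1.1 h2.1 h2.2⟩
    refine hcc.congr ?_
    intro z _
    simp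
    ring

theorem hasFDerivAt_of_slices {F : ℝ → ℝ → ℝ} {f1 f2 t r : ℝ}
    (hd : DifferentiableAt ℝ (fun z : ℝ × ℝ => F z.1 z.2) (t, r))
    (h1 : HasDerivAt (fun x => F x r) f1 t) (h2 : HasDerivAt (fun x => F t x) f2 r) :
    HasFDerivAt (fun z : ℝ × ℝ => F z.1 z.2)
      (f1 • ContinuousLinearMap.fst ℝ ℝ ℝ + f2 • ContinuousLinearMap.snd ℝ ℝ ℝ) (t, r) := by
  have h := hd.hasFDerivAt
  set L := fderiv ℝ (fun z : ℝ × ℝ => F z.1 z.2) (t, r)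
  have e1 := HasFDerivAt.comp_hasDerivAt (l := fun z : ℝ × ℝ => F z.1 z.2)
    (f := fun x => (x, r)) t h ((hasDerivAt_id t).prodMk (hasDerivAt_const t r))
  have e2 := HasFDerivAt.comp_hasDerivAt (l := fun z : ℝ × ℝ => F z.1 z.2)
    (f := fun x => (t, x)) r h ((hasDerivAt_const r t).prodMk (hasDerivAt_id r))
  have g1 : L (1, 0) = f1 := e1.unique h1
  have g2 : L (0, 1) = f2 := e2.unique h2
  refine h.congr_fderiv ?_
  ext
  · simp [g1]
  · simp [g2]

/-- hyperbolic time -/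
noncomputable def tauF (R t r : ℝ) : ℝ := √((t + R + 1) ^ 2 - r ^ 2)

noncomputable def ZF (R t r : ℝ) : ℝ := r ^ 2 + (t + R + 1) ^ 2 - (t + R + 1) * tauF R t r

noncomputable def PtF (R : ℝ) (U q p : ℝ → ℝ → ℝ) (t r : ℝ) : ℝ :=
  r * ((2 * (t + R + 1) - tauF R t r) * ((q t r ^ 2 + p t r ^ 2) / 2 + U t r ^ 6 / 6)
    + U t r * q t r) + ZF R t r * (q t r * p t r)

noncomputable def PrF (R : ℝ) (U q p : ℝ → ℝ → ℝ) (t r : ℝ) : ℝ :=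
  -(r * ((2 * (t + R + 1) - tauF R t r) * (q t r * p t r) + U t r * p t r))
    - ZF R t r * ((q t r ^ 2 + p t r ^ 2) / 2 - U t r ^ 6 / 6)

noncomputable def PttF (R : ℝ) (U q p qt qr : ℝ → ℝ → ℝ) (t r : ℝ) : ℝ :=
  r * ((2 - (t + R + 1) / tauF R t r) * ((q t r ^ 2 + p t r ^ 2) / 2 + U t r ^ 6 / 6)
    + (2 * (t + R + 1) - tauF R t r) * (q t r * qt t r + p t r * qr t r + U t r ^ 5 * q t r)
    + q t r * q t r + U t r * qt t r)
  + (2 * (t + R + 1) - tauF R t r - (t + R + 1) * ((t + R + 1) / tauF R t r)) * (q t r * p t r)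
  + ZF R t r * (qt t r * p t r + q t r * qr t r)

noncomputable def PrrF (R : ℝ) (U q p qr pr : ℝ → ℝ → ℝ) (t r : ℝ) : ℝ :=
  -((2 * (t + R + 1) - tauF R t r) * (q t r * p t r) + U t r * p t r)
  - r * (r / tauF R t r * (q t r * p t r)
      + (2 * (t + R + 1) - tauF R t r) * (qr t r * p t r + q t r * pr t r)
      + p t r * p t r + U t r * pr t r)
  - (2 * r + (t + R + 1) * (r / tauF R t r)) * ((q t r ^ 2 + p t r ^ 2) / 2 - U t r ^ 6 / 6)
  - ZF R t r * (q t r * qr t r + p t r * pr t r - U t r ^ 5 * p t r)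

section
variable {U q p qt qr pr : ℝ → ℝ → ℝ}

theorem tau_arg_pos {R t r : ℝ} (hR : 0 < R) (ht : 0 ≤ t) (hr : 0 ≤ r) (h : r ≤ t + R) :
    0 < (t + R + 1) ^ 2 - r ^ 2 := by nlinarith

theorem tau_pos {R t r : ℝ} (hR : 0 < R) (ht : 0 ≤ t) (hr : 0 ≤ r) (h : r ≤ t + R) :
    0 < tauF R t r := Real.sqrt_pos.2 (tau_arg_pos hR ht hr h)

theorem tau_sq {R t r : ℝ} (hR : 0 < R) (ht : 0 ≤ t) (hr : 0 ≤ r) (h : r ≤ t + R) :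
    tauF R t r ^ 2 = (t + R + 1) ^ 2 - r ^ 2 := Real.sq_sqrt (tau_arg_pos hR ht hr h).le

theorem tau_dt {R t r : ℝ} (hR : 0 < R) (ht : 0 ≤ t) (hr : 0 ≤ r) (h : r ≤ t + R) :
    HasDerivAt (fun x => tauF R x r) ((t + R + 1) / tauF R t r) t := by
  have h1 : HasDerivAt (fun x => (x + R + 1) ^ 2 - r ^ 2) (2 * (t + R + 1)) t := by
    have := ((((hasDerivAt_id t).add_const R).add_const 1).fun_pow 2).sub_const (r ^ 2)
    simpa using this
  refine (h1.sqrt (tau_arg_pos hR ht hr h).ne').congr_deriv ?_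
  unfold tauF
  rw [mul_div_mul_left _ _ two_ne_zero]

theorem tau_dr {R t r : ℝ} (hR : 0 < R) (ht : 0 ≤ t) (hr : 0 ≤ r) (h : r ≤ t + R) :
    HasDerivAt (fun x => tauF R t x) (-(r / tauF R t r)) r := by
  have h1 : HasDerivAt (fun x => (t + R + 1) ^ 2 - x ^ 2) (-(2 * r)) r := by
    have := ((hasDerivAt_id r).fun_pow 2).const_sub ((t + R + 1) ^ 2)
    simpa using this
  refine (h1.sqrt (tau_arg_pos hR ht hr h).ne').congr_deriv ?_
  unfold tauF
  rw [neg_div, mul_div_mul_left _ _ two_ne_zero]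

theorem tau_diff {R t r : ℝ} (hR : 0 < R) (ht : 0 ≤ t) (hr : 0 ≤ r) (h : r ≤ t + R) :
    DifferentiableAt ℝ (fun z : ℝ × ℝ => tauF R z.1 z.2) (t, r) := by
  unfold tauF
  apply DifferentiableAt.sqrt (by fun_prop)
  exact (tau_arg_pos hR ht hr h).ne'

theorem Z_dt {R t r : ℝ} (hR : 0 < R) (ht : 0 ≤ t) (hr : 0 ≤ r) (h : r ≤ t + R) :
    HasDerivAt (fun x => ZF R x r)
      (2 * (t + R + 1) - tauF R t r - (t + R + 1) * ((t + R + 1) / tauF R t r)) t := by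
  have h1 : HasDerivAt (fun x => x + R + 1) 1 t :=
    ((hasDerivAt_id t).add_const R).add_const 1
  refine (((h1.fun_pow 2).const_add (r ^ 2)).fun_sub
    (h1.fun_mul (tau_dt hR ht hr h))).congr_deriv ?_
  simp; ring

theorem Z_dr {R t r : ℝ} (hR : 0 < R) (ht : 0 ≤ t) (hr : 0 ≤ r) (h : r ≤ t + R) :
    HasDerivAt (fun x => ZF R t x) (2 * r + (t + R + 1) * (r / tauF R t r)) r := by
  refine ((((hasDerivAt_id r).fun_pow 2).add_const ((t + R + 1) ^ 2)).fun_sub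
    ((tau_dr hR ht hr h).const_mul (t + R + 1))).congr_deriv ?_
  simp

theorem RadSol.slt (h : RadSol U q p qt qr pr) (t r : ℝ) :
    HasDerivAt (fun x => U x r) (q t r) t ∧ HasDerivAt (fun x => q x r) (qt t r) t ∧
    HasDerivAt (fun x => p x r) (qr t r) t := by
  refine ⟨?_, ?_, ?_⟩
  · simpa using chain2 (h.hU t r) (hasDerivAt_id t) (hasDerivAt_const t r) rfl rfl
  · simpa using chain2 (h.hq t r) (hasDerivAt_id t) (hasDerivAt_const t r) rfl rfl
  · simpa using chain2 (h.hp t r) (hasDerivAt_id t) (hasDerivAt_const t r) rfl rfl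

theorem RadSol.slr (h : RadSol U q p qt qr pr) (t r : ℝ) :
    HasDerivAt (fun x => U t x) (p t r) r ∧ HasDerivAt (fun x => q t x) (qr t r) r ∧
    HasDerivAt (fun x => p t x) (pr t r) r := by
  refine ⟨?_, ?_, ?_⟩
  · simpa using chain2 (h.hU t r) (hasDerivAt_const r t) (hasDerivAt_id r) rfl rfl
  · simpa using chain2 (h.hq t r) (hasDerivAt_const r t) (hasDerivAt_id r) rfl rfl
  · simpa using chain2 (h.hp t r) (hasDerivAt_const r t) (hasDerivAt_id r) rfl rfl

theorem RadSol.Pt_diff (h : RadSol U q p qt qr pr)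
    {R t r : ℝ} (hR : 0 < R) (ht : 0 ≤ t) (hr : 0 ≤ r) (hh : r ≤ t + R) :
    DifferentiableAt ℝ (fun z : ℝ × ℝ => PtF R U q p z.1 z.2) (t, r) ∧
    DifferentiableAt ℝ (fun z : ℝ × ℝ => PrF R U q p z.1 z.2) (t, r) := by
  have h1 := tau_diff hR ht hr hh
  have h2 := (h.hU t r).differentiableAt
  have h3 := (h.hq t r).differentiableAt
  have h4 := (h.hp t r).differentiableAt
  unfold PtF PrF ZF
  constructor <;> fun_prop

theorem RadSol.Pt_dt (h : RadSol U q p qt qr pr)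
    {R t r : ℝ} (hR : 0 < R) (ht : 0 ≤ t) (hr : 0 ≤ r) (hh : r ≤ t + R) :
    HasDerivAt (fun x => PtF R U q p x r) (PttF R U q p qt qr t r) t := by
  obtain ⟨hU, hq, hp⟩ := h.slt t r
  have hs : HasDerivAt (fun x => x + R + 1) 1 t :=
    ((hasDerivAt_id t).add_const R).add_const 1
  have hy := (hs.const_mul 2).fun_sub (tau_dt hR ht hr hh)
  have hZ := Z_dt hR ht hr hh
  have := (((hy.fun_mul ((((hq.fun_pow 2).fun_add (hp.fun_pow 2)).div_const 2).fun_add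
    ((hU.fun_pow 6).div_const 6))).fun_add (hU.fun_mul hq)).const_mul r).fun_add
    (hZ.fun_mul (hq.fun_mul hp))
  refine HasDerivAt.congr_deriv (f := fun x => PtF R U q p x r) this ?_
  unfold PttF
  simp; ring

theorem RadSol.Pr_dr (h : RadSol U q p qt qr pr)
    {R t r : ℝ} (hR : 0 < R) (ht : 0 ≤ t) (hr : 0 ≤ r) (hh : r ≤ t + R) :
    HasDerivAt (fun x => PrF R U q p t x) (PrrF R U q p qr pr t r) r := by
  obtain ⟨hU, hq, hp⟩ := h.slr t r
  have hy := (tau_dr hR ht hr hh).const_sub (2 * (t + R + 1))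
  have hZ := Z_dr hR ht hr hh
  have := ((hasDerivAt_id r).fun_mul ((hy.fun_mul (hq.fun_mul hp)).fun_add
    (hU.fun_mul hp))).fun_neg.fun_sub
    (hZ.fun_mul ((((hq.fun_pow 2).fun_add (hp.fun_pow 2)).div_const 2).fun_sub
    ((hU.fun_pow 6).div_const 6)))
  refine HasDerivAt.congr_deriv (f := fun x => PrF R U q p t x) this ?_
  unfold PrrF
  simp; ring

theorem RadSol.div_id (h : RadSol U q p qt qr pr)
    {R t r : ℝ} (hR : 0 < R) (ht : 0 ≤ t) (hr : 0 < r) (hh : r ≤ t + R) :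
    PttF R U q p qt qr t r + PrrF R U q p qr pr t r ≤ -(r * U t r ^ 6 / 3) := by
  have e := h.eq t r hr
  have hτ := tau_pos hR ht hr.le hh
  have hτ2 := tau_sq hR ht hr.le hh
  have hs : 0 < t + R + 1 := by linarith
  have : PttF R U q p qt qr t r + PrrF R U q p qr pr t r =
    -(r * U t r ^ 6 / 3) - r * (r * q t r + (t + R + 1) * p t r) ^ 2 /
      (tauF R t r * (tauF R t r + (t + R + 1))) := by
    unfold PttF PrrF ZF
    rw [e]
    generalize tauF R t r = τ at *
    generalize t + R + 1 = s at *
    generalize U t r = u at *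
    generalize q t r = a at *
    generalize p t r = b at *
    generalize qr t r = c at *
    generalize pr t r = d at *
    have hr2 : r ^ 2 = s ^ 2 - τ ^ 2 := by linarith
    have hst : τ + s ≠ 0 := by positivity
    field_simp
    linear_combination (36 * r ^ 2 * a ^ 2 - 36 * s * τ * b ^ 2 + 36 * r * (s - τ) * a * b) * hr2
  rw [this]
  have : 0 ≤ r * (r * q t r + (t + R + 1) * p t r) ^ 2 /
      (tauF R t r * (tauF R t r + (t + R + 1))) := by positivity
  linarith
end

section
variable {U q p qt qr pr : ℝ → ℝ → ℝ}

theorem RadSol.div_cont (h : RadSol U q p qt qr pr) {R : ℝ} (hR : 0 < R) :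
    ContinuousOn (fun z : ℝ × ℝ => PttF R U q p qt qr z.1 z.2 + PrrF R U q p qr pr z.1 z.2)
      {z | 0 ≤ z.1 ∧ 0 ≤ z.2 ∧ z.2 ≤ z.1 + R} := by
  have hU := h.cU
  have hq := h.cq
  have hp := h.cp
  have hqt := h.cqt
  have hqr := h.cqr
  have hpr := h.cpr
  have hτ : Continuous (fun z : ℝ × ℝ => tauF R z.1 z.2) := by unfold tauF; fun_prop
  have h1 : ContinuousOn (fun z : ℝ × ℝ => (z.1 + R + 1) / tauF R z.1 z.2)
      {z | 0 ≤ z.1 ∧ 0 ≤ z.2 ∧ z.2 ≤ z.1 + R} := by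
    apply ContinuousOn.div (by fun_prop) hτ.continuousOn
    rintro z ⟨h1, h2, h3⟩
    exact (tau_pos hR h1 h2 h3).ne'
  have h2 : ContinuousOn (fun z : ℝ × ℝ => z.2 / tauF R z.1 z.2)
      {z | 0 ≤ z.1 ∧ 0 ≤ z.2 ∧ z.2 ≤ z.1 + R} := by
    apply ContinuousOn.div (by fun_prop) hτ.continuousOn
    rintro z ⟨h1, h2, h3⟩
    exact (tau_pos hR h1 h2 h3).ne'
  unfold PttF PrrF ZF
  fun_prop

theorem Pr_zero (R t : ℝ) (hs : 0 < t + R + 1) : PrF R U q p t 0 = 0 := by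
  unfold PrF ZF tauF
  have : √((t + R + 1) ^ 2 - 0 ^ 2) = t + R + 1 := by
    rw [zero_pow two_ne_zero, sub_zero, Real.sqrt_sq hs.le]
  rw [this]
  ring

theorem RadSol.mor (h : RadSol U q p qt qr pr) {R T : ℝ} (hR : 0 < R) (hT : 0 ≤ T) :
    (∫ t in 0..T, ∫ x in (0:ℝ)..1, (t + R) * (x * (t + R) * U t (x * (t + R)) ^ 6 / 3)) ≤
      (∫ t in 0..T, (PtF R U q p t (t + R) - PrF R U q p t (t + R))) -
      (∫ x in (0:ℝ)..1, (T + R) * PtF R U q p T (x * (T + R))) +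
      ∫ x in (0:ℝ)..1, R * PtF R U q p 0 (x * R) := by
  have key := cone_div (Pt := PtF R U q p) (Pr := PrF R U q p) (a := PttF R U q p qt qr)
    (d := PrrF R U q p qr pr) (b := fun t r => deriv (fun x => PtF R U q p t x) r)
    (c := fun t r => deriv (fun x => PrF R U q p x r) t) hR hT
    (fun t r ht hr hh => hasFDerivAt_of_slices (h.Pt_diff hR ht hr hh).1
      (h.Pt_dt hR ht hr hh) (by
        have := (h.Pt_diff hR ht hr hh).1
        exact (DifferentiableAt.comp (f := fun x : ℝ => (t, x)) r this
          (by fun_prop)).hasDerivAt))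
    (fun t r ht hr hh => hasFDerivAt_of_slices (h.Pt_diff hR ht hr hh).2
      (by
        have := (h.Pt_diff hR ht hr hh).2
        exact (DifferentiableAt.comp (f := fun x : ℝ => (x, r)) t this
          (by fun_prop)).hasDerivAt) (h.Pr_dr hR ht hr hh))
    (h.div_cont hR)
  have z0 : ∫ t in 0..T, PrF R U q p t 0 = 0 := by
    rw [intervalIntegral.integral_congr (g := fun _ => (0:ℝ))]
    · simp
    · intro t ht
      rw [uIcc_of_le hT] at ht
      exact Pr_zero R t (by linarith [ht.1])
  have hneg : ∫ t in 0..T, (PrF R U q p t (t + R) - PtF R U q p t (t + R)) =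
      -∫ t in 0..T, (PtF R U q p t (t + R) - PrF R U q p t (t + R)) := by
    rw [← intervalIntegral.integral_neg]
    simp
  rw [z0, hneg] at key
  suffices hs : (∫ t in 0..T, ∫ x in (0:ℝ)..1,
      (t + R) * (x * (t + R) * U t (x * (t + R)) ^ 6 / 3)) ≤
      -(∫ t in 0..T, ∫ x in (0:ℝ)..1, (t + R) * (PttF R U q p qt qr t (x * (t + R)) +
        PrrF R U q p qr pr t (x * (t + R)))) by linarith
  clear key
  rw [← intervalIntegral.integral_neg]
  have hUc := h.cU
  -- clamped version
  set G : ℝ → ℝ → ℝ := fun t x => (t + R) * (PttF R U q p qt qr t (x * (t + R)) +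
        PrrF R U q p qr pr t (x * (t + R))) with hG
  have hGc : Continuous (fun z : ℝ × ℝ => G (max z.1 0) (max (min z.2 1) 0)) := by
    apply Continuous.mul (by fun_prop)
    refine (h.div_cont hR).comp_continuous
      (f := fun z : ℝ × ℝ => (max z.1 0, max (min z.2 1) 0 * (max z.1 0 + R))) (by fun_prop) ?_
    intro z
    have a1 : 0 ≤ max z.1 0 := le_max_right _ _
    have a2 : 0 ≤ max (min z.2 1) 0 := le_max_right _ _
    have a3 : max (min z.2 1) 0 ≤ 1 := max_le (min_le_right _ _) zero_le_one
    exact ⟨a1, by positivity, by dsimp only; nlinarith⟩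
  have hGe : ∀ t x, 0 ≤ t → 0 ≤ x → x ≤ 1 → G (max t 0) (max (min x 1) 0) = G t x := by
    intro t x h1 h2 h3
    rw [max_eq_left h1, min_eq_left h3, max_eq_left h2]
  have hFc : Continuous (fun z : ℝ × ℝ =>
      (z.1 + R) * (z.2 * (z.1 + R) * U z.1 (z.2 * (z.1 + R)) ^ 6 / 3)) := by
    have : Continuous (fun z : ℝ × ℝ => U z.1 (z.2 * (z.1 + R))) :=
      hUc.comp (f := fun z : ℝ × ℝ => (z.1, z.2 * (z.1 + R))) (by fun_prop)
    fun_prop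
  have hin : ∀ t, 0 ≤ t → ∫ x in (0:ℝ)..1, G t x =
      ∫ x in (0:ℝ)..1, G (max t 0) (max (min x 1) 0) := by
    intro t ht
    refine intervalIntegral.integral_congr fun x hx => ?_
    rw [uIcc_of_le zero_le_one] at hx
    exact (hGe t x ht hx.1 hx.2).symm
  have hout : -(∫ t in 0..T, ∫ x in (0:ℝ)..1, G t x) =
      -(∫ t in 0..T, ∫ x in (0:ℝ)..1, G (max t 0) (max (min x 1) 0)) := by
    congr 1
    refine intervalIntegral.integral_congr fun t ht => ?_
    rw [uIcc_of_le hT] at ht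
    exact hin t ht.1
  rw [intervalIntegral.integral_neg, hout, ← intervalIntegral.integral_neg]
  apply intervalIntegral.integral_mono_on hT
  · apply Continuous.intervalIntegrable
    exact intervalIntegral.continuous_parametric_intervalIntegral_of_continuous' hFc _ _
  · apply Continuous.intervalIntegrable
    exact (intervalIntegral.continuous_parametric_intervalIntegral_of_continuous' 
      (f := fun t x => G (max t 0) (max (min x 1) 0)) hGc 0 1).neg
  · intro t ht
    rw [← intervalIntegral.integral_neg]
    apply intervalIntegral.integral_mono_on_of_le_Ioo zero_le_one
    · apply Continuous.intervalIntegrable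
      exact hFc.comp (g := fun z : ℝ × ℝ =>
        (z.1 + R) * (z.2 * (z.1 + R) * U z.1 (z.2 * (z.1 + R)) ^ 6 / 3))
        (f := fun x => (t, x)) (by fun_prop)
    · apply Continuous.intervalIntegrable
      exact (hGc.comp (g := fun z : ℝ × ℝ => G (max z.1 0) (max (min z.2 1) 0)) (f := fun x => (t, x)) (by fun_prop)).neg
    · intro x hx
      rw [hGe t x ht.1 hx.1.le hx.2.le]
      have htR : 0 < t + R := by linarith [ht.1]
      have := h.div_id hR ht.1 (r := x * (t + R)) (mul_pos hx.1 htR) (by nlinarith [hx.2])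
      simp only [hG]
      nlinarith
end

section
variable {U q p qt qr pr : ℝ → ℝ → ℝ}

theorem alg_lower {r s τ Z u a b : ℝ} (hr : 0 < r) (hs : 0 < s) (hτ : τ ≤ s)
    (hZ0 : 0 ≤ Z) (hZ : Z ≤ r * (2 * s - τ)) :
    0 ≤ r * ((2 * s - τ) * ((a ^ 2 + b ^ 2) / 2 + u ^ 6 / 6) + u * a) + Z * (a * b) +
      (r * (4 * s - τ) * u ^ 2 / (2 * (2 * s - τ) ^ 2) + Z * u * b / (2 * s - τ)) := by
  obtain ⟨y, hy⟩ : ∃ y, y = 2 * s - τ := ⟨_, rfl⟩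
  obtain ⟨z, rfl⟩ : ∃ z, Z = r * z := ⟨Z / r, by field_simp⟩
  have hτ' : τ = 2 * s - y := by linarith
  rw [← hy] at *
  have hyp : 0 < y := by linarith
  have hz0 : 0 ≤ z := by
    by_contra hc
    push Not at hc
    nlinarith
  have hz : z ≤ y := le_of_mul_le_mul_left hZ hr
  have : r * (y * ((a ^ 2 + b ^ 2) / 2 + u ^ 6 / 6) + u * a) + r * z * (a * b) +
      (r * (4 * s - τ) * u ^ 2 / (2 * y ^ 2) + r * z * u * b / y) =
      r * (y / 2 * (a + (z * b + u) / y) ^ 2 + (y - z) * (y + z) * b ^ 2 / (2 * y) +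
        u ^ 2 * s / y ^ 2 + y * u ^ 6 / 6) := by
    rw [hτ']
    field_simp
    ring
  rw [this]
  have : 0 ≤ y - z := by linarith
  have h6 : 0 ≤ u ^ 6 := by positivity
  positivity

theorem tau_bds {R t r : ℝ} (hR : 0 < R) (ht : 0 ≤ t) (hr : 0 ≤ r) (h : r ≤ t + R) :
    tauF R t r ≤ t + R + 1 ∧ t + R + 1 - r ≤ tauF R t r ∧ 0 ≤ ZF R t r ∧
    ZF R t r ≤ r * (2 * (t + R + 1) - tauF R t r) := by
  have h1 := tau_pos hR ht hr h
  have h2 := tau_sq hR ht hr h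
  have h3 : tauF R t r ≤ t + R + 1 := by nlinarith [sq_nonneg r]
  have h4 : t + R + 1 - r ≤ tauF R t r := by
    unfold tauF
    apply Real.le_sqrt_of_sq_le
    nlinarith
  refine ⟨h3, h4, ?_, ?_⟩
  · unfold ZF
    nlinarith [sq_nonneg r]
  · unfold ZF
    nlinarith

theorem RadSol.Pt_cont (h : RadSol U q p qt qr pr) (R : ℝ) :
    Continuous (fun z : ℝ × ℝ => PtF R U q p z.1 z.2) ∧
    Continuous (fun z : ℝ × ℝ => PrF R U q p z.1 z.2) := by
  have hU := h.cU
  have hq := h.cq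
  have hp := h.cp
  have hτ : Continuous (fun z : ℝ × ℝ => tauF R z.1 z.2) := by unfold tauF; fun_prop
  unfold PtF PrF ZF
  constructor <;> fun_prop

theorem RadSol.lowerT (h : RadSol U q p qt qr pr) {R T : ℝ} (hR : 0 < R) (hT : 0 ≤ T)
    (hb : √(T + R) * |U T (T + R)| ≤ 1 / 2) :
    -(1 / 8) ≤ ∫ x in (0:ℝ)..1, (T + R) * PtF R U q p T (x * (T + R)) := by
  have hS : 0 < T + R := by linarith
  set S := T + R with hSd
  have hder : ∀ x ∈ Icc (0:ℝ) 1, HasDerivAt (fun x => -(ZF R T (x * S) * U T (x * S) ^ 2 /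
      (2 * (2 * (T + R + 1) - tauF R T (x * S)))))
      (-((x * S * (4 * (T + R + 1) - tauF R T (x * S)) * U T (x * S) ^ 2 /
        (2 * (2 * (T + R + 1) - tauF R T (x * S)) ^ 2) +
        ZF R T (x * S) * U T (x * S) * p T (x * S) / (2 * (T + R + 1) - tauF R T (x * S))) * S)) x := by
    intro x hx
    have hr : 0 ≤ x * S := mul_nonneg hx.1 hS.le
    have hr2 : x * S ≤ T + R := by nlinarith [hx.2]
    obtain ⟨b1, b2, b3, b4⟩ := tau_bds hR hT hr hr2
    have b5 := tau_pos hR hT hr hr2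
    have b6 := tau_sq hR hT hr hr2
    have hy : HasDerivAt (fun r => 2 * (2 * (T + R + 1) - tauF R T r))
      (2 * (x * S / tauF R T (x * S))) (x * S) := by
      simpa using ((tau_dr hR hT hr hr2).const_sub (2 * (T + R + 1))).const_mul 2
    have hU := (h.slr T (x * S)).1
    have hne : (2 * (T + R + 1) - tauF R T (x * S)) ≠ 0 := by linarith
    have hne' : 2 * (2 * (T + R + 1) - tauF R T (x * S)) ≠ 0 := by
      intro h0; apply hne; linarith
    have h1 := (((Z_dr hR hT hr hr2).fun_mul (hU.fun_pow 2)).fun_div hy hne').fun_neg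
    have h2 : HasDerivAt (fun x => x * S) S x := by
      simpa using (hasDerivAt_id x).mul_const S
    have h3 := HasDerivAt.comp x h1 h2
    refine HasDerivAt.congr_deriv (f := fun x => -(ZF R T (x * S) * U T (x * S) ^ 2 /
      (2 * (2 * (T + R + 1) - tauF R T (x * S))))) h3 ?_
    have hs : 0 < T + R + 1 := by linarith
    unfold ZF
    generalize tauF R T (x * S) = τ at *
    generalize x * S = r at *
    generalize T + R + 1 = s at *
    generalize U T r = u at *
    generalize p T r = b at *
    have hτ0 := b5.ne'
    simp only [Nat.cast_ofNat, Nat.add_one_sub_one, pow_one]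
    have hr2 : r ^ 2 = s ^ 2 - τ ^ 2 := by linarith
    rw [hr2]
    field_simp
    ring
  have key := intervalIntegral.sub_le_integral_of_hasDeriv_right_of_le (zero_le_one (α := ℝ))
    (fun x hx => (hder x hx).continuousAt.continuousWithinAt)
    (fun x hx => (hder x ⟨hx.1.le, hx.2.le⟩).hasDerivWithinAt)
    (φ := fun x => S * PtF R U q p T (x * S)) ?_ ?_
  · refine le_trans ?_ key
    simp only [zero_mul, one_mul]
    have hz : ZF R T 0 = 0 := by
      unfold ZF tauF
      rw [zero_pow two_ne_zero, sub_zero, Real.sqrt_sq (by linarith)]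
      ring
    rw [hz]
    obtain ⟨b1, b2, b3, b4⟩ := tau_bds hR hT hS.le le_rfl
    have b5 := tau_pos hR hT hS.le le_rfl
    have hu : S * U T S ^ 2 ≤ 1 / 4 := by
      have e1 : S * U T S ^ 2 = (√S * |U T S|) ^ 2 := by
        rw [mul_pow, Real.sq_sqrt hS.le, sq_abs]
      rw [e1]
      have : 0 ≤ √S * |U T S| := by positivity
      nlinarith
    rw [← hSd] at *
    have hy : 0 < 2 * (S + 1) - tauF R T S := by linarith
    have : ZF R T S * U T S ^ 2 / (2 * (2 * (S + 1) - tauF R T S)) ≤ 1 / 8 := by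
      rw [div_le_iff₀ (by positivity)]
      have := mul_le_mul_of_nonneg_right b4 (sq_nonneg (U T S))
      nlinarith
    simp only [zero_div, neg_zero, zero_mul]
    linarith
  · apply ContinuousOn.integrableOn_Icc
    apply Continuous.continuousOn
    apply Continuous.mul continuous_const
    exact (h.Pt_cont R).1.comp (g := fun z : ℝ × ℝ => PtF R U q p z.1 z.2)
        (f := fun x => (T, x * S)) (by fun_prop)
  · intro x hx
    have hr : 0 < x * S := mul_pos hx.1 hS
    have hr2 : x * S ≤ T + R := by nlinarith [hx.2]
    obtain ⟨b1, b2, b3, b4⟩ := tau_bds hR hT hr.le hr2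
    have := alg_lower (u := U T (x * S)) (a := q T (x * S)) (b := p T (x * S)) hr
      (by linarith : 0 < T + R + 1) b1 b3 b4
    simp only [PtF]
    nlinarith

set_option maxHeartbeats 2000000 in
theorem alg_flux {r τ w u g C δ : ℝ} (hr : 1 ≤ r) (hτ : 1 ≤ τ) (hτ2 : τ ^ 2 = 2 * r + 1)
    (hw : 0 < w) (hw2 : w ^ 2 = r) (hC : 0 ≤ C) (hδ : 1 / r ^ 2 ≤ δ) (hδ2 : r * δ ≤ 1)
    (hl : |w * g + u / (2 * w)| ≤ C * δ) (hω : w * |u| ≤ 1 / 2) :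
    ((2 * r + 1) ^ 2 - (2 * r + 1) * τ) / 2 * g ^ 2 + (τ - 1) * u ^ 6 / 6 + r * (u * g) ≤
      (9 / 2 * C ^ 2 + 2 * C + 1) * δ := by
  obtain ⟨l, hl'⟩ : ∃ l, l = w * g + u / (2 * w) := ⟨_, rfl⟩
  obtain ⟨ω, hω'⟩ : ∃ ω, ω = w * u := ⟨_, rfl⟩
  obtain ⟨M, hM⟩ : ∃ M, M = (2 * r + 1) ^ 2 - (2 * r + 1) * τ := ⟨_, rfl⟩
  rw [← hM]
  rw [← hl'] at hl
  have hwa : |ω| ≤ 1 / 2 := by rw [hω', abs_mul, abs_of_pos hw]; exact hω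
  have hr0 : 0 < r := by linarith
  have hid : M / 2 * g ^ 2 + (τ - 1) * u ^ 6 / 6 + r * (u * g) =
      M / (2 * r) * l ^ 2 + ω * l * (1 - M / (2 * r ^ 2)) + ω ^ 2 * (M - 4 * r ^ 2) / (8 * r ^ 3)
      + (τ - 1) * ω ^ 6 / (6 * r ^ 3) := by
    rw [hl', hω', ← hw2]
    field_simp
    ring
  rw [hid]
  clear hid hl' hω' hω hw2
  have hδ0 : 0 < δ := lt_of_lt_of_le (by positivity) hδ
  have hτr : τ ≤ 2 * r + 1 := by nlinarith
  have M0 : 0 ≤ M := by rw [hM]; nlinarith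
  have M1 : M ≤ 9 * r ^ 2 := by rw [hM]; nlinarith
  have M2 : M - 4 * r ^ 2 ≤ 2 * r := by rw [hM]; nlinarith
  have hl2 : l ^ 2 ≤ (C * δ) ^ 2 := sq_le_sq' (by linarith [(abs_le.1 hl).1]) (abs_le.1 hl).2
  have t1 : M / (2 * r) * l ^ 2 ≤ 9 / 2 * C ^ 2 * δ := by
    have : M / (2 * r) ≤ 9 / 2 * r := by
      rw [div_le_iff₀ (by positivity)]; nlinarith
    calc M / (2 * r) * l ^ 2 ≤ 9 / 2 * r * (C * δ) ^ 2 := by gcongr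
      _ = 9 / 2 * C ^ 2 * δ * (r * δ) := by ring
      _ ≤ 9 / 2 * C ^ 2 * δ * 1 := by gcongr
      _ = _ := by ring
  have t2 : ω * l * (1 - M / (2 * r ^ 2)) ≤ 2 * C * δ := by
    have m1 : M / (2 * r ^ 2) ≤ 9 / 2 := by
      rw [div_le_iff₀ (by positivity)]; nlinarith
    have m0 : 0 ≤ M / (2 * r ^ 2) := by positivity
    have : |1 - M / (2 * r ^ 2)| ≤ 4 := by rw [abs_le]; constructor <;> linarith
    calc ω * l * (1 - M / (2 * r ^ 2)) ≤ |ω * l * (1 - M / (2 * r ^ 2))| := le_abs_self _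
      _ = |ω| * |l| * |1 - M / (2 * r ^ 2)| := by rw [abs_mul, abs_mul]
      _ ≤ 1 / 2 * (C * δ) * 4 := by gcongr
      _ = _ := by ring
  have ω2 : ω ^ 2 ≤ 1 / 4 := by
    rw [← sq_abs]; nlinarith [abs_nonneg ω]
  have ω6 : ω ^ 6 ≤ 1 := by
    have : ω ^ 6 = (ω ^ 2) ^ 3 := by ring
    rw [this]
    exact pow_le_one₀ (sq_nonneg _) (by linarith)
  have t3 : ω ^ 2 * (M - 4 * r ^ 2) / (8 * r ^ 3) ≤ 1 / 16 * (1 / r ^ 2) := by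
    rw [div_le_iff₀ (by positivity)]
    have : 1 / 16 * (1 / r ^ 2) * (8 * r ^ 3) = r / 2 := by field_simp; norm_num
    rw [this]
    nlinarith [sq_nonneg ω]
  have t4 : (τ - 1) * ω ^ 6 / (6 * r ^ 3) ≤ 1 / 3 * (1 / r ^ 2) := by
    rw [div_le_iff₀ (by positivity)]
    have : 1 / 3 * (1 / r ^ 2) * (6 * r ^ 3) = 2 * r := by field_simp; norm_num
    rw [this]
    have : 0 ≤ ω ^ 6 := by positivity
    nlinarith
  have : 0 < 1 / r ^ 2 := by positivity
  linarith

theorem RadSol.flux (h : RadSol U q p qt qr pr) {ε C R T : ℝ} (hε : 0 < ε) (hε1 : ε ≤ 1)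
    (hC : 0 ≤ C) (hR : 1 ≤ R) (hT : 0 ≤ T)
    (hl : ∀ t r, 0 ≤ t → r = t + R →
      |√r * (q t r + p t r) + U t r / (2 * √r)| ≤ C * (r ^ (-ε) / r))
    (hb : ∀ t r, 0 ≤ t → r = t + R → √r * |U t r| ≤ 1 / 2) :
    ∫ t in 0..T, (PtF R U q p t (t + R) - PrF R U q p t (t + R)) ≤
      (9 / 2 * C ^ 2 + 2 * C + 1) / ε := by
  set K := 9 / 2 * C ^ 2 + 2 * C + 1 with hK
  have hK0 : 0 < K := by positivity
  have hder : ∀ t, 0 ≤ t → HasDerivAt (fun t => -(K / ε) * (t + R) ^ (-ε))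
      (K * ((t + R) ^ (-ε) / (t + R))) t := by
    intro t ht
    have hp : 0 < t + R := by linarith
    have h1 : HasDerivAt (fun t => t + R) 1 t := (hasDerivAt_id t).add_const R
    refine ((h1.rpow_const (p := -ε) (Or.inl hp.ne')).const_mul (-(K / ε))).congr_deriv ?_
    rw [Real.rpow_sub_one hp.ne']
    field_simp
  have key := intervalIntegral.integral_le_sub_of_hasDeriv_right_of_le hT
    (fun x hx => (hder x hx.1).continuousAt.continuousWithinAt)
    (fun x hx => (hder x hx.1.le).hasDerivWithinAt)
    (φ := fun t => PtF R U q p t (t + R) - PrF R U q p t (t + R)) ?_ ?_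
  · refine key.trans ?_
    have a1 : 0 ≤ (T + R) ^ (-ε) := by positivity
    have a2 : (0 + R) ^ (-ε) ≤ 1 := Real.rpow_le_one_of_one_le_of_nonpos (by linarith) (by linarith)
    have : 0 < K / ε := by positivity
    nlinarith
  · apply ContinuousOn.integrableOn_Icc
    apply Continuous.continuousOn
    exact ((h.Pt_cont R).1.comp (g := fun z : ℝ × ℝ => PtF R U q p z.1 z.2)
        (f := fun x => (x, x + R)) (by fun_prop)).sub
        ((h.Pt_cont R).2.comp (g := fun z : ℝ × ℝ => PrF R U q p z.1 z.2)
        (f := fun x => (x, x + R)) (by fun_prop))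
  · intro t ht
    have ht := ht.1.le
    have hl' := hl t (t + R) ht rfl
    have hb' := hb t (t + R) ht rfl
    have hR0 : 0 < R := by linarith
    have hp : 0 ≤ t + R := by linarith
    obtain ⟨b1, b2, b3, b4⟩ := tau_bds hR0 ht hp le_rfl
    have b6 := tau_sq hR0 ht hp le_rfl
    have hr1 : 1 ≤ t + R := by linarith
    simp only [PtF, PrF, ZF]
    generalize tauF R t (t + R) = τ at *
    generalize U t (t + R) = u at *
    generalize q t (t + R) = a at *
    generalize p t (t + R) = b at *
    generalize t + R = r at *
    have hr0 : 0 < r := by linarith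
    have hδ2 : r * (r ^ (-ε) / r) ≤ 1 := by
      rw [mul_div_cancel₀ _ hr0.ne']
      exact Real.rpow_le_one_of_one_le_of_nonpos hr1 (by linarith)
    have hδ : 1 / r ^ 2 ≤ r ^ (-ε) / r := by
      have : 1 / r ^ 2 = r ^ (-1:ℝ) / r := by
        rw [Real.rpow_neg_one]; field_simp
      rw [this]
      gcongr
    have := alg_flux (τ := τ) hr1 (by linarith) (by linarith) (Real.sqrt_pos.2 hr0)
      (Real.sq_sqrt hr0.le) hC hδ hδ2 hl' hb'
    refine le_trans (le_of_eq ?_) this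
    ring

theorem RadSol.init (h : RadSol U q p qt qr pr) {A R : ℝ} (hA : 0 < A) (hR : 0 < R)
    (hU : ∀ r, 0 ≤ r → |U 0 r| ≤ A) (hq : ∀ r, 0 ≤ r → |q 0 r| ≤ A)
    (hp : ∀ r, 0 ≤ r → |p 0 r| ≤ A) :
    ∫ x in (0:ℝ)..1, R * PtF R U q p 0 (x * R) ≤
      R * (R * (2 * (R + 1) * (A ^ 2 + A ^ 6 / 6) + A ^ 2) + R * (2 * (R + 1)) * A ^ 2) := by
  have : ∫ x in (0:ℝ)..1, R * PtF R U q p 0 (x * R) ≤ ∫ x in (0:ℝ)..1,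
      R * (R * (2 * (R + 1) * (A ^ 2 + A ^ 6 / 6) + A ^ 2) + R * (2 * (R + 1)) * A ^ 2) := by
    apply intervalIntegral.integral_mono_on zero_le_one
    · apply Continuous.intervalIntegrable
      apply Continuous.mul continuous_const
      exact (h.Pt_cont R).1.comp (g := fun z : ℝ × ℝ => PtF R U q p z.1 z.2)
        (f := fun x => (0, x * R)) (by fun_prop)
    · exact intervalIntegrable_const
    · intro x hx
      have r0 : 0 ≤ x * R := mul_nonneg hx.1 hR.le
      have r1 : x * R ≤ R := by nlinarith [hx.2]
      have hU := hU _ r0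
      have hq := hq _ r0
      have hp := hp _ r0
      obtain ⟨b1, b2, b3, b4⟩ := tau_bds hR le_rfl r0 (by linarith : x * R ≤ 0 + R)
      have b5 := tau_pos hR le_rfl r0 (by linarith : x * R ≤ 0 + R)
      apply mul_le_mul_of_nonneg_left _ hR.le
      unfold PtF
      generalize ZF R 0 (x * R) = Z at *
      generalize tauF R 0 (x * R) = τ at *
      generalize U 0 (x * R) = u at *
      generalize q 0 (x * R) = a at *
      generalize p 0 (x * R) = b at *
      generalize x * R = r at *
      rw [zero_add] at *
      have e6 : u ^ 6 ≤ A ^ 6 := by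
        rw [← Even.pow_abs (by decide : Even 6)]; gcongr
      have ea : a ^ 2 ≤ A ^ 2 := by rw [← sq_abs]; gcongr
      have eb : b ^ 2 ≤ A ^ 2 := by rw [← sq_abs]; gcongr
      have eua : u * a ≤ A ^ 2 := by
        calc u * a ≤ |u * a| := le_abs_self _
          _ = |u| * |a| := abs_mul _ _
          _ ≤ A * A := by gcongr
          _ = A ^ 2 := by ring
      have eab : a * b ≤ A ^ 2 := by
        calc a * b ≤ |a * b| := le_abs_self _
          _ = |a| * |b| := abs_mul _ _
          _ ≤ A * A := by gcongr
          _ = A ^ 2 := by ring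
      have hy0 : 0 ≤ 2 * (R + 1) - τ := by linarith
      have hy1 : 2 * (R + 1) - τ ≤ 2 * (R + 1) := by linarith
      have hZ : Z ≤ R * (2 * (R + 1)) := b4.trans (by gcongr)
      have s1 : (2 * (R + 1) - τ) * ((a ^ 2 + b ^ 2) / 2 + u ^ 6 / 6) ≤
          2 * (R + 1) * (A ^ 2 + A ^ 6 / 6) := by
        have : 0 ≤ u ^ 6 := by positivity
        gcongr
        linarith
      have s2 : r * ((2 * (R + 1) - τ) * ((a ^ 2 + b ^ 2) / 2 + u ^ 6 / 6) + u * a) ≤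
          R * (2 * (R + 1) * (A ^ 2 + A ^ 6 / 6) + A ^ 2) := by
        calc _ ≤ r * (2 * (R + 1) * (A ^ 2 + A ^ 6 / 6) + A ^ 2) := by gcongr
          _ ≤ _ := by gcongr
      have s3 : Z * (a * b) ≤ R * (2 * (R + 1)) * A ^ 2 := by
        calc _ ≤ Z * A ^ 2 := by gcongr
          _ ≤ _ := by gcongr
      linarith
  simpa using this

/-- Interior estimate. -/
theorem RadSol.interior (h : RadSol U q p qt qr pr) {ε C A R T : ℝ} (hε : 0 < ε) (hε1 : ε ≤ 1)
    (hC : 0 ≤ C) (hA : 0 < A) (hR : 1 ≤ R) (hT : 0 ≤ T)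
    (hl : ∀ t r, 0 ≤ t → r = t + R →
      |√r * (q t r + p t r) + U t r / (2 * √r)| ≤ C * (r ^ (-ε) / r))
    (hb : ∀ t r, 0 ≤ t → r = t + R → √r * |U t r| ≤ 1 / 2)
    (hU : ∀ r, 0 ≤ r → |U 0 r| ≤ A) (hq : ∀ r, 0 ≤ r → |q 0 r| ≤ A)
    (hp : ∀ r, 0 ≤ r → |p 0 r| ≤ A) :
    (∫ t in 0..T, ∫ x in (0:ℝ)..1, (t + R) * (x * (t + R) * U t (x * (t + R)) ^ 6 / 3)) ≤
      (9 / 2 * C ^ 2 + 2 * C + 1) / ε + 1 / 8 +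
      R * (R * (2 * (R + 1) * (A ^ 2 + A ^ 6 / 6) + A ^ 2) + R * (2 * (R + 1)) * A ^ 2) := by
  have hR0 : 0 < R := by linarith
  have h1 := h.mor hR0 hT
  have h2 := h.lowerT hR0 hT (hb T _ hT rfl)
  have h3 := h.flux hε hε1 hC hR hT hl hb
  have h4 := h.init hA hR0 hU hq hp
  linarith
end

theorem lint_norm (f : ℝ → ENNReal) (hf : Measurable f) :
    ∫⁻ x : EuclideanSpace ℝ (Fin 2), f ‖x‖ =
      ((volume : Measure (EuclideanSpace ℝ (Fin 2))).toSphere univ) *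
        ∫⁻ r in Ioi (0:ℝ), ENNReal.ofReal r * f r := by
  set μ := (volume : Measure (EuclideanSpace ℝ (Fin 2)))
  have hfin : Module.finrank ℝ (EuclideanSpace ℝ (Fin 2)) - 1 = 1 := by simp
  have h1 := μ.measurePreserving_homeomorphUnitSphereProd.lintegral_comp_emb
    (Homeomorph.measurableEmbedding _) (fun z => f z.2.1)
  simp only [homeomorphUnitSphereProd_apply_snd_coe] at h1
  rw [hfin] at h1
  have h2 : ∫⁻ x : EuclideanSpace ℝ (Fin 2), f ‖x‖ ∂μ =
      ∫⁻ x : ({(0 : EuclideanSpace ℝ (Fin 2))}ᶜ : Set _), f ‖(x : EuclideanSpace ℝ (Fin 2))‖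
        ∂(μ.comap Subtype.val) := by
    rw [lintegral_subtype_comap (measurableSet_singleton _).compl (fun x => f ‖x‖),
      restrict_compl_singleton]
  rw [h2, h1, lintegral_prod _ (by fun_prop)]
  simp only [lintegral_const]
  rw [mul_comm]
  congr 1
  rw [Measure.volumeIoiPow, lintegral_withDensity_eq_lintegral_mul _ (by fun_prop) (by fun_prop)]
  simp only [pow_one]
  rw [← lintegral_subtype_comap measurableSet_Ioi (fun r => ENNReal.ofReal r * f r)]
  rfl

theorem lint_pow {a c κ : ℝ} (hκ : 0 < κ) (hac : 1 ≤ a + c) :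
    ∫⁻ x in Ioi a, ENNReal.ofReal ((x + c) ^ (-1 - κ)) ≤ ENNReal.ofReal (1 / κ) := by
  have hder : ∀ x ∈ Ici a, HasDerivAt (fun x => -(1 / κ) * (x + c) ^ (-κ))
      ((x + c) ^ (-1 - κ)) x := by
    intro x hx
    have hx : a ≤ x := hx
    have hp : 0 < x + c := by linarith
    have h1 : HasDerivAt (fun t => t + c) 1 x := (hasDerivAt_id x).add_const c
    refine ((h1.rpow_const (p := -κ) (Or.inl hp.ne')).const_mul (-(1 / κ))).congr_deriv ?_
    rw [show -1 - κ = -κ - 1 by ring]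
    field_simp
  have hpos : ∀ x ∈ Ioi a, 0 ≤ (x + c) ^ (-1 - κ) := by
    intro x hx
    have hx : a < x := hx
    exact Real.rpow_nonneg (by linarith) _
  have hlim : Filter.Tendsto (fun x => -(1 / κ) * (x + c) ^ (-κ)) Filter.atTop (nhds 0) := by
    have := ((tendsto_rpow_neg_atTop hκ).comp
      (Filter.tendsto_atTop_add_const_right Filter.atTop c Filter.tendsto_id)).const_mul (-(1 / κ))
    simpa [Function.comp_def] using this
  rw [← ofReal_integral_eq_lintegral_ofReal (integrableOn_Ioi_deriv_of_nonneg' hder hpos hlim)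
    ((ae_restrict_iff' measurableSet_Ioi).2 (Filter.Eventually.of_forall hpos)),
    integral_Ioi_of_hasDerivAt_of_nonneg' hder hpos hlim]
  apply ENNReal.ofReal_le_ofReal
  have : (a + c) ^ (-κ) ≤ 1 := Real.rpow_le_one_of_one_le_of_nonpos hac (by linarith)
  have h2 : 0 < 1 / κ := by positivity
  nlinarith

section
variable {U q p qt qr pr : ℝ → ℝ → ℝ}

theorem ext_pt {B ε t r u R : ℝ} (hB : 0 ≤ B) (hε : 0 < ε) (hε' : ε ≤ 1 / 16) (hR : 1 ≤ R)
    (ht : 0 ≤ t) (hr : t + R ≤ r) (h : √r * |u| ≤ B * (r - t) ^ (-ε)) :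
    r * |u| ^ 6 ≤ (B ^ 6 * (t + 1) ^ (-1 - 3 * ε)) * (r + -t) ^ (-1 - 3 * ε) := by
  have hr0 : 0 < r := by linarith
  have hσ : 1 ≤ r - t := by linarith
  have hσ0 : 0 < r - t := by linarith
  have e1 : r * |u| ^ 6 = (√r * |u|) ^ 6 * r ^ (-2 : ℝ) := by
    have : √r ^ 6 = r ^ 3 := by
      calc √r ^ 6 = (√r ^ 2) ^ 3 := by ring
        _ = r ^ 3 := by rw [Real.sq_sqrt hr0.le]
    rw [mul_pow, this, Real.rpow_neg hr0.le]
    norm_cast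
    field_simp
  have e2 : r ^ (-2 : ℝ) ≤ (t + 1) ^ (-1 - 3 * ε) * (r - t) ^ (-1 + 3 * ε) := by
    have : (-2 : ℝ) = (-1 - 3 * ε) + (-1 + 3 * ε) := by ring
    rw [this, Real.rpow_add hr0]
    apply mul_le_mul
    · exact Real.rpow_le_rpow_of_nonpos (by linarith) (by linarith) (by linarith)
    · exact Real.rpow_le_rpow_of_nonpos (by linarith) (by linarith) (by linarith)
    · positivity
    · positivity
  rw [e1]
  calc (√r * |u|) ^ 6 * r ^ (-2 : ℝ) ≤ (B * (r - t) ^ (-ε)) ^ 6 *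
      ((t + 1) ^ (-1 - 3 * ε) * (r - t) ^ (-1 + 3 * ε)) := by gcongr
    _ = (B ^ 6 * (t + 1) ^ (-1 - 3 * ε)) *
      (((r - t) ^ (-ε)) ^ (6:ℕ) * (r - t) ^ (-1 + 3 * ε)) := by ring
    _ = _ := by
      congr 1
      rw [← Real.rpow_natCast, ← Real.rpow_mul hσ0.le, ← Real.rpow_add hσ0, ← sub_eq_add_neg]
      congr 1
      push_cast
      ring

theorem RadSol.total_ext (h : RadSol U q p qt qr pr) {ε B R : ℝ} (hε : 0 < ε)
    (hε' : ε ≤ 1 / 16) (hB : 0 ≤ B) (hR : 1 ≤ R)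
    (hb : ∀ t r, 0 ≤ t → t + R ≤ r → √r * |U t r| ≤ B * (r - t) ^ (-ε)) :
    ∫⁻ t in Ioi (0:ℝ), ∫⁻ r in Ioi (t + R), ENNReal.ofReal (r * |U t r| ^ 6) ≤
      ENNReal.ofReal (B ^ 6 * (1 / (3 * ε)) * (1 / (3 * ε))) := by
  have h3 : 0 < 3 * ε := by positivity
  have hB6 : 0 ≤ B ^ 6 := by positivity
  calc ∫⁻ t in Ioi (0:ℝ), ∫⁻ r in Ioi (t + R), ENNReal.ofReal (r * |U t r| ^ 6)
      ≤ ∫⁻ t in Ioi (0:ℝ), ENNReal.ofReal (B ^ 6 * (1 / (3 * ε))) *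
        ENNReal.ofReal ((t + 1) ^ (-1 - 3 * ε)) := by
        apply setLIntegral_mono' measurableSet_Ioi
        intro t ht
        have ht : 0 < t := ht
        calc ∫⁻ r in Ioi (t + R), ENNReal.ofReal (r * |U t r| ^ 6)
            ≤ ∫⁻ r in Ioi (t + R), ENNReal.ofReal (B ^ 6 * (t + 1) ^ (-1 - 3 * ε)) *
              ENNReal.ofReal ((r + -t) ^ (-1 - 3 * ε)) := by
              apply setLIntegral_mono' measurableSet_Ioi
              intro r hr
              have hr : t + R < r := hr
              rw [← ENNReal.ofReal_mul (by positivity)]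
              exact ENNReal.ofReal_le_ofReal
                (ext_pt hB hε hε' hR ht.le hr.le (hb t r ht.le hr.le))
          _ = ENNReal.ofReal (B ^ 6 * (t + 1) ^ (-1 - 3 * ε)) *
              ∫⁻ r in Ioi (t + R), ENNReal.ofReal ((r + -t) ^ (-1 - 3 * ε)) :=
              lintegral_const_mul' _ _ ENNReal.ofReal_ne_top
          _ ≤ ENNReal.ofReal (B ^ 6 * (t + 1) ^ (-1 - 3 * ε)) * ENNReal.ofReal (1 / (3 * ε)) := by
              gcongr
              exact lint_pow h3 (by linarith)
          _ = _ := by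
              rw [← ENNReal.ofReal_mul (by positivity), ← ENNReal.ofReal_mul (by positivity)]
              congr 1
              ring
    _ = ENNReal.ofReal (B ^ 6 * (1 / (3 * ε))) *
        ∫⁻ t in Ioi (0:ℝ), ENNReal.ofReal ((t + 1) ^ (-1 - 3 * ε)) :=
        lintegral_const_mul' _ _ ENNReal.ofReal_ne_top
    _ ≤ ENNReal.ofReal (B ^ 6 * (1 / (3 * ε))) * ENNReal.ofReal (1 / (3 * ε)) := by
        gcongr
        exact lint_pow h3 (by linarith)
    _ = _ := by rw [← ENNReal.ofReal_mul (by positivity)]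

theorem RadSol.total_int (h : RadSol U q p qt qr pr) {R K : ℝ} (hR : 1 ≤ R)
    (hK : ∀ T, 0 ≤ T → (∫ t in 0..T, ∫ x in (0:ℝ)..1,
      (t + R) * (x * (t + R) * U t (x * (t + R)) ^ 6 / 3)) ≤ K) :
    ∫⁻ t in Ioi (0:ℝ), ∫⁻ r in Ioc 0 (t + R), ENNReal.ofReal (r * |U t r| ^ 6) ≤
      ENNReal.ofReal (3 * K) := by
  have hUc := h.cU
  have hFc : Continuous (fun z : ℝ × ℝ =>
      (z.1 + R) * (z.2 * (z.1 + R) * U z.1 (z.2 * (z.1 + R)) ^ 6 / 3)) := by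
    have : Continuous (fun z : ℝ × ℝ => U z.1 (z.2 * (z.1 + R))) :=
      hUc.comp (f := fun z : ℝ × ℝ => (z.1, z.2 * (z.1 + R))) (by fun_prop)
    fun_prop
  have hIc := intervalIntegral.continuous_parametric_intervalIntegral_of_continuous'
    (μ := volume) (f := fun t x => (t + R) * (x * (t + R) * U t (x * (t + R)) ^ 6 / 3)) hFc 0 1
  set I : ℝ → ℝ := fun t => ∫ x in (0:ℝ)..1,
    (t + R) * (x * (t + R) * U t (x * (t + R)) ^ 6 / 3) with hI
  have hIn : ∀ t, 0 ≤ t → 0 ≤ I t := by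
    intro t ht
    apply intervalIntegral.integral_nonneg zero_le_one
    intro x hx
    have := hx.1
    have : 0 ≤ U t (x * (t + R)) ^ 6 := by positivity
    positivity
  have hin : ∀ t, 0 < t → ∫⁻ r in Ioc 0 (t + R), ENNReal.ofReal (r * |U t r| ^ 6) =
      ENNReal.ofReal (3 * I t) := by
    intro t ht
    have htR : 0 < t + R := by linarith
    have hc : Continuous (fun r => r * |U t r| ^ 6) := by
      have : Continuous (fun r => U t r) :=
        hUc.comp (g := fun z : ℝ × ℝ => U z.1 z.2) (f := fun r => (t, r)) (by fun_prop)
      fun_prop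
    rw [← ofReal_integral_eq_lintegral_ofReal (hc.integrableOn_Ioc)
      ((ae_restrict_iff' measurableSet_Ioc).2 (Filter.Eventually.of_forall
        (fun r hr => mul_nonneg hr.1.le (by positivity)))),
      ← intervalIntegral.integral_of_le htR.le]
    congr 1
    have := intervalIntegral.integral_comp_mul_right (a := 0) (b := 1)
      (fun r => r * |U t r| ^ 6) htR.ne'
    rw [zero_mul, one_mul, smul_eq_mul] at this
    rw [hI]
    simp only
    rw [← intervalIntegral.integral_const_mul]
    have e : ∀ x, 3 * ((t + R) * (x * (t + R) * U t (x * (t + R)) ^ 6 / 3)) =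
        (t + R) * (x * (t + R) * |U t (x * (t + R))| ^ 6) := by
      intro x
      rw [Even.pow_abs (by decide : Even 6)]
      ring
    simp_rw [e]
    rw [intervalIntegral.integral_const_mul, this]
    field_simp
  have hun : Ioi (0:ℝ) = ⋃ n : ℕ, Ioc (0:ℝ) n := by
    ext x
    simp only [mem_Ioi, mem_iUnion, mem_Ioc]
    constructor
    · intro hx
      obtain ⟨n, hn⟩ := exists_nat_ge x
      exact ⟨n, hx, hn⟩
    · rintro ⟨n, hn⟩
      exact hn.1
  rw [setLIntegral_congr_fun measurableSet_Ioi (fun t ht => hin t ht), hun,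
    setLIntegral_iUnion_of_directed]
  · apply iSup_le
    intro n
    rw [← ofReal_integral_eq_lintegral_ofReal (by
        apply Continuous.integrableOn_Ioc
        exact continuous_const.mul hIc)
      ((ae_restrict_iff' measurableSet_Ioc).2 (Filter.Eventually.of_forall
        (fun r hr => mul_nonneg zero_le_three (hIn r hr.1.le)))),
      ← intervalIntegral.integral_of_le (Nat.cast_nonneg n), intervalIntegral.integral_const_mul]
    apply ENNReal.ofReal_le_ofReal
    have := hK n (Nat.cast_nonneg n)
    linarith
  · apply Monotone.directed_le
    intro m n hmn
    apply Ioc_subset_Ioc_right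
    exact_mod_cast hmn

noncomputable def cInt (ε A R : ℝ) : ℝ :=
  3 * ((9 / 2 * (47 / 2 * A) ^ 2 + 2 * (47 / 2 * A) + 1) / ε + 1 / 8 +
      R * (R * (2 * (R + 1) * (A ^ 2 + A ^ 6 / 6) + A ^ 2) + R * (2 * (R + 1)) * A ^ 2))
noncomputable def cExt (ε A : ℝ) : ℝ :=
  (A + 47 / 4 * A / ε) ^ 6 * (1 / (3 * ε)) * (1 / (3 * ε))

theorem RadSol.total (h : RadSol U q p qt qr pr) {ε A R : ℝ} (hε : 0 < ε)
    (hε' : ε ≤ 1 / 16) (hA : 0 < A) (hR : 1 ≤ R) (hRB : (A + 47 / 4 * A / ε) * R ^ (-ε) < 1 / 2)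
    (d0 : ∀ r, 1 ≤ r → √r * |U 0 r| ≤ A * r ^ (-ε))
    (d1 : ∀ r, 1 ≤ r → |√r * (q 0 r + p 0 r) + U 0 r / (2 * √r)| ≤ 5 / 2 * A * (r ^ (-ε) / r))
    (hU : ∀ r, 0 ≤ r → |U 0 r| ≤ A) (hq : ∀ r, 0 ≤ r → |q 0 r| ≤ A)
    (hp : ∀ r, 0 ≤ r → |p 0 r| ≤ A) :
    ∫⁻ t in Ioi (0:ℝ), ∫⁻ r in Ioi (0:ℝ), ENNReal.ofReal r * ENNReal.ofReal (|U t r| ^ 6) ≤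
      ENNReal.ofReal (cInt ε A R) + ENNReal.ofReal (cExt ε A) := by
  have hext := h.ext hε hε' hA hR hRB d0 d1
  have h1 : ∫⁻ t in Ioi (0:ℝ), ∫⁻ r in Ioc 0 (t + R), ENNReal.ofReal (r * |U t r| ^ 6) ≤
      ENNReal.ofReal (cInt ε A R) := by
    refine h.total_int hR fun T hT => ?_
    refine h.interior hε (by linarith) (by positivity) hA hR hT ?_ ?_ hU hq hp
    · intro t r ht hr
      refine ((hext t r ht hr.symm.le).1).trans ?_
      have hr0 : 0 < r := by linarith
      have : (r + t) ^ (-ε) ≤ r ^ (-ε) :=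
        Real.rpow_le_rpow_of_nonpos hr0 (by linarith) (by linarith)
      gcongr
      linarith
    · intro t r ht hr
      exact (hext t r ht hr.symm.le).2.2
  have h2 := h.total_ext hε hε' (by positivity : 0 ≤ A + 47 / 4 * A / ε) hR
    (fun t r ht hr => (hext t r ht hr).2.1)
  refine le_trans ?_ (add_le_add h1 h2)
  have hm : Measurable fun t : ℝ =>
      ∫⁻ r in Ioi (t + R), ENNReal.ofReal (r * |U t r| ^ 6) := by
    have e : (fun t : ℝ => ∫⁻ r in Ioi (t + R), ENNReal.ofReal (r * |U t r| ^ 6)) =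
      fun t : ℝ => ∫⁻ r, ({z : ℝ × ℝ | z.1 + R < z.2}.indicator
        (fun z => ENNReal.ofReal (z.2 * |U z.1 z.2| ^ 6)) (t, r)) := by
      ext t
      rw [← lintegral_indicator measurableSet_Ioi]
      rfl
    rw [e]
    apply Measurable.lintegral_prod_right'
    apply Measurable.indicator
    · have := h.cU
      apply Continuous.measurable
      apply ENNReal.continuous_ofReal.comp
      fun_prop
    · exact measurableSet_lt (by fun_prop) (by fun_prop)
  rw [← lintegral_add_right _ hm]
  apply setLIntegral_mono' measurableSet_Ioi
  intro t ht
  have ht : 0 < t := ht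
  have hu : Ioi (0:ℝ) = Ioc 0 (t + R) ∪ Ioi (t + R) := (Ioc_union_Ioi_eq_Ioi (by linarith)).symm
  rw [setLIntegral_congr_fun (g := fun r => ENNReal.ofReal (r * |U t r| ^ 6)) measurableSet_Ioi
    (fun r (hr : 0 < r) => (ENNReal.ofReal_mul hr.le).symm)]
  rw [hu]
  exact lintegral_union_le _ _ _
end

/-- first partial derivatives -/
noncomputable def GG (W : (Fin 3 → ℝ) → ℝ) (i : Fin 3) (p : Fin 3 → ℝ) : ℝ :=
  fderiv ℝ W p (Pi.single i 1)

/-- second partial derivatives -/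
noncomputable def HH (W : (Fin 3 → ℝ) → ℝ) (i j : Fin 3) (p : Fin 3 → ℝ) : ℝ :=
  fderiv ℝ (GG W i) p (Pi.single j 1)

theorem GG_c1 {W : (Fin 3 → ℝ) → ℝ} (hW : ContDiff ℝ 2 W) (i : Fin 3) : ContDiff ℝ 1 (GG W i) := by
  unfold GG
  exact (hW.fderiv_right (m := 1) (by norm_num)).clm_apply contDiff_const

theorem HH_cont {W : (Fin 3 → ℝ) → ℝ} (hW : ContDiff ℝ 2 W) (i j : Fin 3) :
    Continuous (HH W i j) := by
  unfold HH
  exact ((GG_c1 hW i).continuous_fderiv (by norm_num)).clm_apply continuous_const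

theorem HH_eq {W : (Fin 3 → ℝ) → ℝ} (hW : ContDiff ℝ 2 W) (i j : Fin 3) (p : Fin 3 → ℝ) :
    HH W i j p = fderiv ℝ (fderiv ℝ W) p (Pi.single j 1) (Pi.single i 1) := by
  unfold HH GG
  have h1 : DifferentiableAt ℝ (fderiv ℝ W) p :=
    (hW.fderiv_right (m := 1) (by norm_num)).differentiable (by norm_num) p
  have := (h1.hasFDerivAt.clm_apply (hasFDerivAt_const (Pi.single i (1:ℝ)) p)).fderiv
  rw [this]
  simp

theorem HH_symm {W : (Fin 3 → ℝ) → ℝ} (hW : ContDiff ℝ 2 W) (i j : Fin 3) (p : Fin 3 → ℝ) :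
    HH W i j p = HH W j i p := by
  rw [HH_eq hW, HH_eq hW]
  exact (hW.contDiffAt.isSymmSndFDerivAt (by simp)).eq _ _

theorem hfd_sq {f : (Fin 3 → ℝ) → ℝ} {f' : (Fin 3 → ℝ) →L[ℝ] ℝ} {x : Fin 3 → ℝ}
    (h : HasFDerivAt f f' x) : HasFDerivAt (fun y => f y ^ 2) ((2 * f x) • f') x := by
  have := h.fun_mul h
  simp only [sq]
  refine this.congr_fderiv ?_
  ext
  simp
  ring

theorem hasDerivAt_maxsq (y : ℝ) : HasDerivAt (fun y : ℝ => (max y 0) ^ 2) (2 * max y 0) y := by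
  apply hasDerivAt_of_hasDerivAt_of_ne' (x := 0) (f := fun y : ℝ => (max y 0) ^ 2)
    (g := fun y : ℝ => 2 * max y 0)
  · intro y hy
    rcases lt_or_gt_of_ne hy with h | h
    · have : (fun y : ℝ => (max y 0) ^ 2) =ᶠ[nhds y] fun _ => 0 := by
        filter_upwards [Iio_mem_nhds h] with z hz
        rw [max_eq_right (le_of_lt hz)]; simp
      rw [max_eq_right h.le, mul_zero]
      exact (hasDerivAt_const y (0:ℝ)).congr_of_eventuallyEq this
    · have : (fun y : ℝ => (max y 0) ^ 2) =ᶠ[nhds y] fun y => y ^ 2 := by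
        filter_upwards [Ioi_mem_nhds h] with z hz
        rw [max_eq_left (le_of_lt hz)]
      rw [max_eq_left h.le]
      refine HasDerivAt.congr_of_eventuallyEq ?_ this
      simpa using hasDerivAt_pow 2 y
  · fun_prop
  · fun_prop

noncomputable def rhoF (B : ℝ) (p : Fin 3 → ℝ) : ℝ := B - p 0 - √(1 + p 1 ^ 2 + p 2 ^ 2)

noncomputable def phiF (lam B : ℝ) (p : Fin 3 → ℝ) : ℝ :=
  Real.exp (-lam * p 0) * (max (rhoF B p) 0) ^ 2

theorem rho_d (B : ℝ) (p : Fin 3 → ℝ) : ∃ L : (Fin 3 → ℝ) →L[ℝ] ℝ, HasFDerivAt (rhoF B) L p ∧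
    L (Pi.single 0 1) = -1 ∧ L (Pi.single 1 1) = -(p 1 / √(1 + p 1 ^ 2 + p 2 ^ 2)) ∧
    L (Pi.single 2 1) = -(p 2 / √(1 + p 1 ^ 2 + p 2 ^ 2)) := by
  have h0 := hasFDerivAt_apply (𝕜 := ℝ) (F' := fun _ : Fin 3 => ℝ) 0 p
  have h1 := hasFDerivAt_apply (𝕜 := ℝ) (F' := fun _ : Fin 3 => ℝ) 1 p
  have h2 := hasFDerivAt_apply (𝕜 := ℝ) (F' := fun _ : Fin 3 => ℝ) 2 p
  have hne : 1 + p 1 ^ 2 + p 2 ^ 2 ≠ 0 := by positivity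
  have := (h0.const_sub B).fun_sub ((((hfd_sq h1).const_add 1).fun_add (hfd_sq h2)).sqrt hne)
  have hs : √(1 + p 1 ^ 2 + p 2 ^ 2) ≠ 0 := by positivity
  refine ⟨_, this, ?_, ?_, ?_⟩
  · simp
  · simp
    field_simp
  · simp
    field_simp

theorem phi_d (lam B : ℝ) (p : Fin 3 → ℝ) : ∃ L : (Fin 3 → ℝ) →L[ℝ] ℝ,
    HasFDerivAt (phiF lam B) L p ∧
    L (Pi.single 0 1) = -lam * phiF lam B p - 2 * Real.exp (-lam * p 0) * max (rhoF B p) 0 ∧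
    L (Pi.single 1 1) = -(2 * Real.exp (-lam * p 0) * max (rhoF B p) 0) *
      (p 1 / √(1 + p 1 ^ 2 + p 2 ^ 2)) ∧
    L (Pi.single 2 1) = -(2 * Real.exp (-lam * p 0) * max (rhoF B p) 0) *
      (p 2 / √(1 + p 1 ^ 2 + p 2 ^ 2)) := by
  obtain ⟨L, hL, l0, l1, l2⟩ := rho_d B p
  have h0 := hasFDerivAt_apply (𝕜 := ℝ) (F' := fun _ : Fin 3 => ℝ) 0 p
  have := ((h0.const_mul (-lam)).exp).fun_mul ((hasDerivAt_maxsq (rhoF B p)).comp_hasFDerivAt p hL)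
  refine ⟨_, this, ?_, ?_, ?_⟩
  · simp [l0, phiF]
    ring
  · simp [l1]
    ring
  · simp [l2]
    ring

theorem rho_cont (B : ℝ) : Continuous (rhoF B) := by unfold rhoF; fun_prop
theorem phi_cont (lam B : ℝ) : Continuous (phiF lam B) := by
  have := rho_cont B
  unfold phiF; fun_prop

theorem alg_uniq {g0 g1 g2 d c lam x y n m E : ℝ} (hn : 0 < n) (hn2 : n ^ 2 = 1 + x ^ 2 + y ^ 2)
    (hm : 0 ≤ m) (hE : 0 < E) (hl : 1 + |c| ≤ lam) :
    (-lam * (E * m ^ 2) - 2 * E * m) * ((g0 ^ 2 + g1 ^ 2 + g2 ^ 2 + d ^ 2) / 2)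
      - (-(2 * E * m) * (x / n)) * (g0 * g1) - (-(2 * E * m) * (y / n)) * (g0 * g2)
      + E * m ^ 2 * g0 * (c * d + d) ≤ 0 := by
  have hxy : (x / n) ^ 2 + (y / n) ^ 2 ≤ 1 := by
    rw [div_pow, div_pow, ← add_div, div_le_one (by positivity)]
    linarith
  generalize x / n = a at *
  generalize y / n = b at *
  have s1 : g0 * (a * g1 + b * g2) ≤ (g0 ^ 2 + g1 ^ 2 + g2 ^ 2 + d ^ 2) / 2 := by
    have : (a * g1 + b * g2) ^ 2 ≤ g1 ^ 2 + g2 ^ 2 := by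
      nlinarith [sq_nonneg (a * g2 - b * g1), sq_nonneg g1, sq_nonneg g2]
    nlinarith [sq_nonneg (g0 - (a * g1 + b * g2)), sq_nonneg d]
  have s2 : g0 * (c * d + d) ≤ lam * ((g0 ^ 2 + g1 ^ 2 + g2 ^ 2 + d ^ 2) / 2) := by
    have h1 : g0 * (c * d + d) ≤ |g0 * d| * (1 + |c|) := by
      calc g0 * (c * d + d) = (g0 * d) * (1 + c) := by ring
        _ ≤ |(g0 * d) * (1 + c)| := le_abs_self _
        _ = |g0 * d| * |1 + c| := abs_mul _ _
        _ ≤ _ := by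
          gcongr
          calc |1 + c| ≤ |1| + |c| := abs_add_le _ _
            _ = _ := by simp
    have h2 : |g0 * d| ≤ (g0 ^ 2 + g1 ^ 2 + g2 ^ 2 + d ^ 2) / 2 := by
      rw [abs_le]
      constructor <;> nlinarith [sq_nonneg (g0 - d), sq_nonneg (g0 + d), sq_nonneg g1, sq_nonneg g2]
    have h3 : 0 ≤ |g0 * d| := abs_nonneg _
    have h4 : 0 ≤ 1 + |c| := by positivity
    calc _ ≤ |g0 * d| * (1 + |c|) := h1
      _ ≤ ((g0 ^ 2 + g1 ^ 2 + g2 ^ 2 + d ^ 2) / 2) * lam := by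
        apply mul_le_mul h2 hl h4
        positivity
      _ = _ := by ring
  have k1 := mul_le_mul_of_nonneg_left s1 (by positivity : 0 ≤ 2 * E * m)
  have k2 := mul_le_mul_of_nonneg_left s2 (by positivity : 0 ≤ E * m ^ 2)
  linarith

/-- the energy flux field -/
noncomputable def fld (lam B : ℝ) (D : (Fin 3 → ℝ) → ℝ) (i : Fin 3) (p : Fin 3 → ℝ) : ℝ :=
  if i = 0 then
    phiF lam B p * ((GG D 0 p ^ 2 + GG D 1 p ^ 2 + GG D 2 p ^ 2 + D p ^ 2) / 2)
  else -(phiF lam B p * (GG D 0 p * GG D i p))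

theorem fld_d {D : (Fin 3 → ℝ) → ℝ} (hD : ContDiff ℝ 2 D) (lam B : ℝ) (i : Fin 3) (p : Fin 3 → ℝ) :
    DifferentiableAt ℝ (fld lam B D i) p := by
  obtain ⟨L, hL, -⟩ := phi_d lam B p
  have h1 := hL.differentiableAt
  have h2 : ∀ i, DifferentiableAt ℝ (GG D i) p := fun i => (GG_c1 hD i).differentiable (by norm_num) p
  have h3 : DifferentiableAt ℝ D p := hD.differentiable (by norm_num) p
  unfold fld
  split_ifs
  · have a0 := h2 0
    have a1 := h2 1
    have a2 := h2 2
    fun_prop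
  · have a0 := h2 0
    have a1 := h2 i
    fun_prop

theorem fld_div {D : (Fin 3 → ℝ) → ℝ} (hD : ContDiff ℝ 2 D) (lam B : ℝ) (p : Fin 3 → ℝ) :
    ∑ i, fderiv ℝ (fld lam B D i) p (Pi.single i 1) =
      (-lam * phiF lam B p - 2 * Real.exp (-lam * p 0) * max (rhoF B p) 0) *
        ((GG D 0 p ^ 2 + GG D 1 p ^ 2 + GG D 2 p ^ 2 + D p ^ 2) / 2)
      - (-(2 * Real.exp (-lam * p 0) * max (rhoF B p) 0) *
          (p 1 / √(1 + p 1 ^ 2 + p 2 ^ 2))) * (GG D 0 p * GG D 1 p)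
      - (-(2 * Real.exp (-lam * p 0) * max (rhoF B p) 0) *
          (p 2 / √(1 + p 1 ^ 2 + p 2 ^ 2))) * (GG D 0 p * GG D 2 p)
      + phiF lam B p * GG D 0 p * (HH D 0 0 p - HH D 1 1 p - HH D 2 2 p + D p) := by
  obtain ⟨L, hL, l0, l1, l2⟩ := phi_d lam B p
  have hG : ∀ i, HasFDerivAt (GG D i) (fderiv ℝ (GG D i) p) p :=
    fun i => ((GG_c1 hD i).differentiable (by norm_num) p).hasFDerivAt
  have h3 : HasFDerivAt D (fderiv ℝ D p) p := (hD.differentiable (by norm_num) p).hasFDerivAt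
  have e0 : HasFDerivAt (fld lam B D 0) _ p := hL.fun_mul
    (((((hfd_sq (hG 0)).fun_add (hfd_sq (hG 1))).fun_add (hfd_sq (hG 2))).fun_add
      (hfd_sq h3)).mul_const (2⁻¹ : ℝ))
  have e1 : HasFDerivAt (fld lam B D 1) _ p := (hL.fun_mul ((hG 0).fun_mul (hG 1))).fun_neg
  have e2 : HasFDerivAt (fld lam B D 2) _ p := (hL.fun_mul ((hG 0).fun_mul (hG 2))).fun_neg
  rw [Fin.sum_univ_three, e0.fderiv, e1.fderiv, e2.fderiv]
  have k : ∀ i j, fderiv ℝ (GG D i) p (Pi.single j 1) = HH D i j p := fun i j => rfl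
  have k' : ∀ j, fderiv ℝ D p (Pi.single j 1) = GG D j p := fun j => rfl
  simp only [ContinuousLinearMap.add_apply, ContinuousLinearMap.smul_apply,
    ContinuousLinearMap.neg_apply, smul_eq_mul, l0, l1, l2, k, k', HH_symm hD 1 0, HH_symm hD 2 0]
  simp
  ring

theorem uniq_lin {D c : (Fin 3 → ℝ) → ℝ} (hD : ContDiff ℝ 2 D) (hc : Continuous c)
    (eq : ∀ p, HH D 0 0 p - HH D 1 1 p - HH D 2 2 p = c p * D p)
    (i0 : ∀ p, p 0 = 0 → D p = 0) (i1 : ∀ p, p 0 = 0 → GG D 0 p = 0)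
    (p : Fin 3 → ℝ) (hp : 0 ≤ p 0) : D p = 0 := by
  obtain ⟨T, hT⟩ : ∃ T, T = p 0 := ⟨_, rfl⟩
  rw [← hT] at hp
  obtain ⟨B, hB⟩ : ∃ B, B = T + √(1 + p 1 ^ 2 + p 2 ^ 2) + 1 := ⟨_, rfl⟩
  have hsq1 : |p 1| ≤ √(1 + p 1 ^ 2 + p 2 ^ 2) := Real.abs_le_sqrt (by nlinarith [sq_nonneg (p 2)])
  have hsq2 : |p 2| ≤ √(1 + p 1 ^ 2 + p 2 ^ 2) := Real.abs_le_sqrt (by nlinarith [sq_nonneg (p 1)])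
  have hB0 : 0 < B := by rw [hB]; positivity
  set a : Fin 3 → ℝ := ![0, -B, -B] with ha
  set b : Fin 3 → ℝ := ![T, B, B] with hb
  have hab : a ≤ b := by
    intro i
    fin_cases i <;> simp [ha, hb] <;> linarith
  obtain ⟨K, hK⟩ : ∃ K, ∀ x ∈ Icc a b, ‖c x‖ ≤ K :=
    isCompact_Icc.exists_bound_of_continuousOn hc.continuousOn
  obtain ⟨lam, hlam⟩ : ∃ lam, lam = 1 + K := ⟨_, rfl⟩
  have hGc : ∀ i, Continuous (GG D i) := fun i => (GG_c1 hD i).continuous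
  have hDc := hD.continuous
  have hφc := phi_cont lam B
  have hρc := rho_cont B
  have hfc : ∀ i, Continuous (fld lam B D i) := fun i =>
    continuous_iff_continuousAt.2 fun x => (fld_d hD lam B i x).continuousAt
  have hdivc : Continuous fun x => ∑ i, fderiv ℝ (fld lam B D i) x (Pi.single i 1) := by
    simp_rw [fld_div hD lam B]
    have h00 := HH_cont hD 0 0
    have h11 := HH_cont hD 1 1
    have h22 := HH_cont hD 2 2
    have hG0 := hGc 0
    have hG1 := hGc 1
    have hG2 := hGc 2
    have hs : ∀ x : Fin 3 → ℝ, √(1 + x 1 ^ 2 + x 2 ^ 2) ≠ 0 := fun x => by positivity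
    have hd1 : Continuous fun x : Fin 3 → ℝ => x 1 / √(1 + x 1 ^ 2 + x 2 ^ 2) :=
      Continuous.div (by fun_prop) (by fun_prop) hs
    have hd2 : Continuous fun x : Fin 3 → ℝ => x 2 / √(1 + x 1 ^ 2 + x 2 ^ 2) :=
      Continuous.div (by fun_prop) (by fun_prop) hs
    fun_prop
  have key := integral_divergence_of_hasFDerivAt_off_countable' a b hab (fld lam B D)
    (fun i x => fderiv ℝ (fld lam B D i) x) ∅ countable_empty
    (fun i => (hfc i).continuousOn) (fun x _ i => (fld_d hD lam B i x).hasFDerivAt)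
    (hdivc.continuousOn.integrableOn_compact isCompact_Icc)
  have hle : ∫ x in Icc a b, ∑ i, fderiv ℝ (fld lam B D i) x (Pi.single i 1) ≤ 0 := by
    apply setIntegral_nonpos measurableSet_Icc
    intro x hx
    rw [fld_div hD lam B x, eq x]
    have := alg_uniq (g0 := GG D 0 x) (g1 := GG D 1 x) (g2 := GG D 2 x) (d := D x) (c := c x)
      (lam := lam) (x := x 1) (y := x 2) (n := √(1 + x 1 ^ 2 + x 2 ^ 2)) (m := max (rhoF B x) 0)
      (E := Real.exp (-lam * x 0)) (by positivity) (Real.sq_sqrt (by positivity))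
      (le_max_right _ _) (Real.exp_pos _) (by
        have := hK x hx
        rw [Real.norm_eq_abs] at this
        linarith)
    exact this
  -- vanishing of the weight on the lateral faces
  have hlat : ∀ (x : Fin 3 → ℝ), 0 ≤ x 0 → (B ^ 2 ≤ x 1 ^ 2 ∨ B ^ 2 ≤ x 2 ^ 2) →
      phiF lam B x = 0 := by
    intro x h0 h
    have : rhoF B x ≤ 0 := by
      unfold rhoF
      have : B ≤ √(1 + x 1 ^ 2 + x 2 ^ 2) := by
        apply Real.le_sqrt_of_sq_le
        rcases h with h | h <;> nlinarith [sq_nonneg (x 1), sq_nonneg (x 2)]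
      linarith
    unfold phiF
    rw [max_eq_right this]
    simp
  have hz : ∀ (x : Fin 3 → ℝ) (i : Fin 3), phiF lam B x = 0 → fld lam B D i x = 0 := by
    intro x i h
    unfold fld
    split_ifs <;> simp [h]
  rw [Fin.sum_univ_three] at key
  have f1 : ∀ s : ℝ, s ^ 2 = B ^ 2 → ∫ x : Fin 2 → ℝ in Icc (a ∘ (1 : Fin 3).succAbove)
      (b ∘ (1 : Fin 3).succAbove), fld lam B D 1 ((1 : Fin 3).insertNth s x) = 0 := by
    intro s hs
    apply setIntegral_eq_zero_of_forall_eq_zero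
    intro x hx
    apply hz
    apply hlat
    · exact hx.1 0
    · left
      exact hs.symm.le
  have f2 : ∀ s : ℝ, s ^ 2 = B ^ 2 → ∫ x : Fin 2 → ℝ in Icc (a ∘ (2 : Fin 3).succAbove)
      (b ∘ (2 : Fin 3).succAbove), fld lam B D 2 ((2 : Fin 3).insertNth s x) = 0 := by
    intro s hs
    apply setIntegral_eq_zero_of_forall_eq_zero
    intro x hx
    apply hz
    apply hlat
    · exact hx.1 0
    · right
      exact hs.symm.le
  have f0 : ∫ x : Fin 2 → ℝ in Icc (a ∘ (0 : Fin 3).succAbove)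
      (b ∘ (0 : Fin 3).succAbove), fld lam B D 0 ((0 : Fin 3).insertNth (a 0) x) = 0 := by
    apply setIntegral_eq_zero_of_forall_eq_zero
    intro x hx
    have hzero : ((0 : Fin 3).insertNth (a 0) x : Fin 3 → ℝ) 0 = 0 := rfl
    generalize ((0 : Fin 3).insertNth (a 0) x : Fin 3 → ℝ) = y at hzero
    have hi : ∀ i : Fin 3, i ≠ 0 → GG D i y = 0 := by
      intro i hi
      have h1 : HasDerivAt (fun s : ℝ => y + s • (Pi.single i (1:ℝ) : Fin 3 → ℝ))
          (Pi.single i (1:ℝ)) 0 := by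
        simpa using ((hasDerivAt_id (0:ℝ)).smul_const (Pi.single i (1:ℝ) : Fin 3 → ℝ)).const_add y
      have h2 : HasFDerivAt D (fderiv ℝ D y) (y + (0:ℝ) • (Pi.single i (1:ℝ) : Fin 3 → ℝ)) := by
        rw [zero_smul, add_zero]
        exact (hD.differentiable (by norm_num) y).hasFDerivAt
      have h3 := h2.comp_hasDerivAt (0:ℝ) h1
      have h4 : HasDerivAt (D ∘ fun s : ℝ => y + s • (Pi.single i (1:ℝ) : Fin 3 → ℝ)) 0 0 := by
        have : (D ∘ fun s : ℝ => y + s • (Pi.single i (1:ℝ) : Fin 3 → ℝ)) = fun _ => 0 := by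
          funext s
          apply i0
          simp [hzero, Pi.single_apply, hi.symm]
        rw [this]
        exact hasDerivAt_const _ _
      exact h3.unique h4
    unfold fld
    rw [if_pos rfl, i0 y hzero, i1 y hzero, hi 1 (by decide), hi 2 (by decide)]
    simp
  have hB2 : (-B) ^ 2 = B ^ 2 := by ring
  have fa1 := f1 (a 1) hB2
  have fb1 := f1 (b 1) rfl
  have fa2 := f2 (a 2) hB2
  have fb2 := f2 (b 2) rfl
  rw [f0, fa1, fb1, fa2, fb2] at key
  have hnn : ∀ x, 0 ≤ fld lam B D 0 x := by
    intro x
    unfold fld phiF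
    rw [if_pos rfl]
    positivity
  have hfin : ∫ x : Fin 2 → ℝ in Icc (a ∘ (0 : Fin 3).succAbove)
      (b ∘ (0 : Fin 3).succAbove), fld lam B D 0 ((0 : Fin 3).insertNth (b 0) x) = 0 := by
    apply le_antisymm
    · linarith
    · exact setIntegral_nonneg measurableSet_Icc fun x _ => hnn _
  have hcont : Continuous fun x : Fin 2 → ℝ => fld lam B D 0 ((0 : Fin 3).insertNth (b 0) x) := by
    apply (hfc 0).comp
    fun_prop
  rw [setIntegral_eq_zero_iff_of_nonneg_ae (Filter.Eventually.of_forall fun x => hnn _)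
    (hcont.continuousOn.integrableOn_compact isCompact_Icc)] at hfin
  have hsub : (univ.pi fun _ : Fin 2 => Ioo (-B) B) ⊆ Icc (a ∘ (0 : Fin 3).succAbove)
      (b ∘ (0 : Fin 3).succAbove) := by
    intro x hx
    have hx0 := hx 0 (mem_univ _)
    have hx1 := hx 1 (mem_univ _)
    constructor
    · intro i
      fin_cases i
      · exact hx0.1.le
      · exact hx1.1.le
    · intro i
      fin_cases i
      · exact hx0.2.le
      · exact hx1.2.le
  have hopen : IsOpen (univ.pi fun _ : Fin 2 => Ioo (-B) B) :=
    isOpen_set_pi finite_univ fun _ _ => isOpen_Ioo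
  have heq := Measure.eqOn_open_of_ae_eq
    (ae_mono (Measure.restrict_mono hsub le_rfl) hfin) hopen hcont.continuousOn
    continuous_const.continuousOn
  have hp1 := abs_le.1 hsq1
  have hp2 := abs_le.1 hsq2
  have hmem : (![p 1, p 2] : Fin 2 → ℝ) ∈ (univ.pi fun _ : Fin 2 => Ioo (-B) B) := by
    intro i _
    fin_cases i
    · constructor
      · simp; linarith
      · simp; linarith
    · constructor
      · simp; linarith
      · simp; linarith
  have hpt := heq hmem
  have hpe : ((0 : Fin 3).insertNth (b 0) (![p 1, p 2] : Fin 2 → ℝ) : Fin 3 → ℝ) = p := by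
    funext i
    fin_cases i
    · exact hT
    · rfl
    · rfl
  simp only [hpe] at hpt
  unfold fld at hpt
  rw [if_pos rfl] at hpt
  have hφ : 0 < phiF lam B p := by
    unfold phiF
    have : 0 < rhoF B p := by
      unfold rhoF
      linarith
    rw [max_eq_left this.le]
    positivity
  have h5 : (GG D 0 p ^ 2 + GG D 1 p ^ 2 + GG D 2 p ^ 2 + D p ^ 2) / 2 = 0 := by
    rcases mul_eq_zero.1 hpt with h | h
    · exact absurd h hφ.ne'
    · exact h
  have : D p ^ 2 = 0 := by
    nlinarith [sq_nonneg (GG D 0 p), sq_nonneg (GG D 1 p), sq_nonneg (GG D 2 p), sq_nonneg (D p)]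
  exact pow_eq_zero_iff two_ne_zero |>.1 this

/-- shorthand for the plane -/
abbrev VV : Type := EuclideanSpace ℝ (Fin 2)

theorem fst_comp {X Y : Type*} [NormedAddCommGroup X] [NormedSpace ℝ X] [NormedAddCommGroup Y]
    [NormedSpace ℝ Y] {F : X → ℝ} (hF : ContDiff ℝ 2 F) (ℓ : Y →L[ℝ] X) (a : X) (y v : Y) :
    fderiv ℝ (fun z' => F (a + ℓ z')) y v = fderiv ℝ F (a + ℓ y) (ℓ v) := by
  have h1 : HasFDerivAt (fun z' => a + ℓ z') ℓ y := ℓ.hasFDerivAt.const_add a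
  have h2 : HasFDerivAt F (fderiv ℝ F (a + ℓ y)) (a + ℓ y) :=
    (hF.differentiable (by norm_num) _).hasFDerivAt
  have h3 := (HasFDerivAt.comp y h2 h1).fderiv
  have h4 : fderiv ℝ (fun z' => F (a + ℓ z')) y = (fderiv ℝ F (a + ℓ y)).comp ℓ := h3
  rw [h4]; rfl

theorem snd_comp {X Y : Type*} [NormedAddCommGroup X] [NormedSpace ℝ X] [NormedAddCommGroup Y]
    [NormedSpace ℝ Y] {F : X → ℝ} (hF : ContDiff ℝ 2 F) (ℓ : Y →L[ℝ] X) (a : X) (y v w : Y) :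
    fderiv ℝ (fun z => fderiv ℝ (fun z' => F (a + ℓ z')) z v) y w =
      fderiv ℝ (fderiv ℝ F) (a + ℓ y) (ℓ w) (ℓ v) := by
  have h0 : (fun z => fderiv ℝ (fun z' => F (a + ℓ z')) z v)
      = fun z => fderiv ℝ F (a + ℓ z) (ℓ v) := by
    funext z; exact fst_comp hF ℓ a z v
  rw [h0]
  have h1 : HasFDerivAt (fun z' => a + ℓ z') ℓ y := ℓ.hasFDerivAt.const_add a
  have h2 : HasFDerivAt (fderiv ℝ F) (fderiv ℝ (fderiv ℝ F) (a + ℓ y)) (a + ℓ y) :=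
    ((hF.fderiv_right (m := 1) (by norm_num)).differentiable (by norm_num) _).hasFDerivAt
  have h3 : HasFDerivAt (fun z => fderiv ℝ F (a + ℓ z))
      ((fderiv ℝ (fderiv ℝ F) (a + ℓ y)).comp ℓ) y := HasFDerivAt.comp y h2 h1
  rw [(h3.clm_apply (hasFDerivAt_const (ℓ v) y)).fderiv]
  simp

/-- the frozen equation in invariant form -/
theorem pde_inv {u : VV → ℝ → ℝ} (hu : ContDiff ℝ 2 (fun p : VV × ℝ => u p.1 p.2))
    {x : VV} {t : ℝ} (h : deriv (deriv (u x)) t -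
            (∑ i : Fin 2,
              fderiv ℝ (fun x' => fderiv ℝ (fun x'' => u x'' t) x'
                (EuclideanSpace.single i (1 : ℝ))) x (EuclideanSpace.single i (1 : ℝ)))
            = -(|u x t| ^ 4 * u x t)) :
    fderiv ℝ (fderiv ℝ (fun p : VV × ℝ => u p.1 p.2)) (x, t) (0, 1) (0, 1)
      - fderiv ℝ (fderiv ℝ (fun p : VV × ℝ => u p.1 p.2)) (x, t)
        (EuclideanSpace.single 0 1, 0) (EuclideanSpace.single 0 1, 0)
      - fderiv ℝ (fderiv ℝ (fun p : VV × ℝ => u p.1 p.2)) (x, t)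
        (EuclideanSpace.single 1 1, 0) (EuclideanSpace.single 1 1, 0) = - (u x t) ^ 5 := by
  have e1 : deriv (deriv (u x)) t
      = fderiv ℝ (fderiv ℝ (fun p : VV × ℝ => u p.1 p.2)) (x, t) (0, 1) (0, 1) := by
    have := snd_comp hu (ContinuousLinearMap.inr ℝ VV ℝ) (x, 0) t 1 1
    simpa using this
  have e2 : ∀ i : Fin 2, fderiv ℝ (fun x' => fderiv ℝ (fun x'' => u x'' t) x'
        (EuclideanSpace.single i (1 : ℝ))) x (EuclideanSpace.single i (1 : ℝ))
      = fderiv ℝ (fderiv ℝ (fun p : VV × ℝ => u p.1 p.2)) (x, t)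
        (EuclideanSpace.single i 1, 0) (EuclideanSpace.single i 1, 0) := by
    intro i
    have := snd_comp hu (ContinuousLinearMap.inl ℝ VV ℝ) (0, t) x
      (EuclideanSpace.single i (1 : ℝ)) (EuclideanSpace.single i (1 : ℝ))
    simpa using this
  rw [e1, Fin.sum_univ_two, e2, e2] at h
  have : |u x t| ^ 4 * u x t = u x t ^ 5 := by
    rw [show |u x t| ^ 4 = u x t ^ 4 from (by decide : Even 4).pow_abs _]; ring
  rw [this] at h
  linarith

/-- rotated and time-reflected coordinates -/
noncomputable def ell (σ c s : ℝ) : (Fin 3 → ℝ) →L[ℝ] VV × ℝ :=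
  ContinuousLinearMap.prod
    ((c • ContinuousLinearMap.proj 1 - s • ContinuousLinearMap.proj 2 :
        (Fin 3 → ℝ) →L[ℝ] ℝ).smulRight (EuclideanSpace.single 0 1 : VV)
      + (s • ContinuousLinearMap.proj 1 + c • ContinuousLinearMap.proj 2 :
        (Fin 3 → ℝ) →L[ℝ] ℝ).smulRight (EuclideanSpace.single 1 1 : VV))
    (σ • ContinuousLinearMap.proj 0 : (Fin 3 → ℝ) →L[ℝ] ℝ)

theorem ell_apply (σ c s : ℝ) (p : Fin 3 → ℝ) : ell σ c s p =
    ((c * p 1 - s * p 2) • (EuclideanSpace.single 0 1 : VV)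
      + (s * p 1 + c * p 2) • (EuclideanSpace.single 1 1 : VV), σ * p 0) := by
  simp [ell]

theorem norm_comb (a b : ℝ) : ‖a • (EuclideanSpace.single 0 1 : VV)
    + b • (EuclideanSpace.single 1 1 : VV)‖ = √(a ^ 2 + b ^ 2) := by
  rw [EuclideanSpace.norm_eq]
  simp

/-- pulled-back solution -/
noncomputable def WW (u : VV → ℝ → ℝ) (σ c s : ℝ) (p : Fin 3 → ℝ) : ℝ :=
  u (ell σ c s p).1 (ell σ c s p).2

theorem WW_c2 {u : VV → ℝ → ℝ} (hu : ContDiff ℝ 2 (fun p : VV × ℝ => u p.1 p.2)) (σ c s : ℝ) :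
    ContDiff ℝ 2 (WW u σ c s) :=
  hu.comp (ell σ c s).contDiff

theorem WW_eq {u : VV → ℝ → ℝ} (hu : ContDiff ℝ 2 (fun p : VV × ℝ => u p.1 p.2))
    (h : ∀ (x : VV) (t : ℝ), deriv (deriv (u x)) t -
            (∑ i : Fin 2,
              fderiv ℝ (fun x' => fderiv ℝ (fun x'' => u x'' t) x'
                (EuclideanSpace.single i (1 : ℝ))) x (EuclideanSpace.single i (1 : ℝ)))
            = -(|u x t| ^ 4 * u x t)) {σ c s : ℝ} (hσ : σ ^ 2 = 1) (hcs : c ^ 2 + s ^ 2 = 1)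
    (p : Fin 3 → ℝ) :
    HH (WW u σ c s) 0 0 p - HH (WW u σ c s) 1 1 p - HH (WW u σ c s) 2 2 p
      = - (WW u σ c s p) ^ 5 := by
  have key : ∀ i, HH (WW u σ c s) i i p
      = fderiv ℝ (fderiv ℝ (fun p : VV × ℝ => u p.1 p.2)) (ell σ c s p)
        (ell σ c s (Pi.single i 1)) (ell σ c s (Pi.single i 1)) := by
    intro i
    have := snd_comp hu (ell σ c s) 0 p (Pi.single i 1) (Pi.single i 1)
    simp only [zero_add] at this
    exact this
  have hp := pde_inv hu (h (ell σ c s p).1 (ell σ c s p).2)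
  rw [key, key, key]
  have a0 : ell σ c s (Pi.single 0 1) = σ • ((0, 1) : VV × ℝ) := by
    rw [ell_apply]; simp
  have a1 : ell σ c s (Pi.single 1 1) = c • ((EuclideanSpace.single 0 1, 0) : VV × ℝ)
      + s • ((EuclideanSpace.single 1 1, 0) : VV × ℝ) := by
    rw [ell_apply]; simp
  have a2 : ell σ c s (Pi.single 2 1) = (-s) • ((EuclideanSpace.single 0 1, 0) : VV × ℝ)
      + c • ((EuclideanSpace.single 1 1, 0) : VV × ℝ) := by
    rw [ell_apply]; simp
  rw [a0, a1, a2]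
  simp only [map_add, map_smul, ContinuousLinearMap.add_apply, ContinuousLinearMap.smul_apply,
    smul_eq_mul]
  simp only [Prod.mk.eta] at hp
  unfold WW
  rw [← hp]
  generalize fderiv ℝ (fderiv ℝ (fun p : VV × ℝ => u p.1 p.2)) (ell σ c s p) = S
  generalize S (0, 1) (0, 1) = s00
  generalize S (EuclideanSpace.single 0 1, 0) (EuclideanSpace.single 0 1, 0) = s11
  generalize S (EuclideanSpace.single 1 1, 0) (EuclideanSpace.single 1 1, 0) = s22
  linear_combination s00 * hσ - (s11 + s22) * hcs

theorem GG_sub {a b : (Fin 3 → ℝ) → ℝ} (ha : ContDiff ℝ 2 a) (hb : ContDiff ℝ 2 b) (i : Fin 3) :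
    GG (fun p => a p - b p) i = fun p => GG a i p - GG b i p := by
  funext p
  unfold GG
  rw [fderiv_fun_sub (ha.differentiable (by norm_num) p) (hb.differentiable (by norm_num) p)]
  rfl

theorem HH_sub {a b : (Fin 3 → ℝ) → ℝ} (ha : ContDiff ℝ 2 a) (hb : ContDiff ℝ 2 b) (i j : Fin 3)
    (p : Fin 3 → ℝ) : HH (fun p => a p - b p) i j p = HH a i j p - HH b i j p := by
  unfold HH
  rw [GG_sub ha hb, fderiv_fun_sub ((GG_c1 ha i).differentiable (by norm_num) p)
    ((GG_c1 hb i).differentiable (by norm_num) p)]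
  rfl

theorem GG0_WW {u : VV → ℝ → ℝ} (hu : ContDiff ℝ 2 (fun p : VV × ℝ => u p.1 p.2)) (σ c s : ℝ)
    (p : Fin 3 → ℝ) : GG (WW u σ c s) 0 p = σ * deriv (u (ell σ c s p).1) (ell σ c s p).2 := by
  have h1 := fst_comp hu (ell σ c s) 0 p (Pi.single 0 1)
  simp only [zero_add] at h1
  have h2 := fst_comp hu (ContinuousLinearMap.inr ℝ VV ℝ) ((ell σ c s p).1, 0) (ell σ c s p).2 1
  have a0 : ell σ c s (Pi.single 0 1) = σ • ((0, 1) : VV × ℝ) := by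
    rw [ell_apply]; simp
  rw [a0, map_smul] at h1
  have h3 : GG (WW u σ c s) 0 p = σ • fderiv ℝ (fun p : VV × ℝ => u p.1 p.2) (ell σ c s p) (0, 1) := h1
  rw [h3]
  simp at h2
  simp [h2]

theorem radial {u : VV → ℝ → ℝ} {u₀ u₁ : VV → ℝ}
    (hu : ContDiff ℝ 2 (fun p : VV × ℝ => u p.1 p.2))
    (h : ∀ (x : VV) (t : ℝ), deriv (deriv (u x)) t -
            (∑ i : Fin 2,
              fderiv ℝ (fun x' => fderiv ℝ (fun x'' => u x'' t) x'
                (EuclideanSpace.single i (1 : ℝ))) x (EuclideanSpace.single i (1 : ℝ)))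
            = -(|u x t| ^ 4 * u x t))
    (r0 : ∀ x y : VV, ‖x‖ = ‖y‖ → u₀ x = u₀ y) (r1 : ∀ x y : VV, ‖x‖ = ‖y‖ → u₁ x = u₁ y)
    (i0 : ∀ x, u x 0 = u₀ x) (i1 : ∀ x, deriv (u x) 0 = u₁ x)
    {σ c s : ℝ} (hσ : σ ^ 2 = 1) (hcs : c ^ 2 + s ^ 2 = 1) (p : Fin 3 → ℝ) (hp : 0 ≤ p 0) :
    WW u σ c s p = WW u σ 1 0 p := by
  have c1 := WW_c2 hu σ c s
  have c2 := WW_c2 hu σ 1 0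
  have nn : ∀ p : Fin 3 → ℝ, ‖(ell σ c s p).1‖ = ‖(ell σ 1 0 p).1‖ := by
    intro p
    rw [ell_apply, ell_apply]
    simp only [norm_comb]
    congr 1
    linear_combination (p 1 ^ 2 + p 2 ^ 2) * hcs
  have := uniq_lin (D := fun p => WW u σ c s p - WW u σ 1 0 p)
    (c := fun p => -(WW u σ c s p ^ 4 + WW u σ c s p ^ 3 * WW u σ 1 0 p
      + WW u σ c s p ^ 2 * WW u σ 1 0 p ^ 2 + WW u σ c s p * WW u σ 1 0 p ^ 3
      + WW u σ 1 0 p ^ 4)) (c1.sub c2)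
    (by have := c1.continuous; have := c2.continuous; fun_prop)
    (by
      intro p
      rw [HH_sub c1 c2, HH_sub c1 c2, HH_sub c1 c2]
      linear_combination WW_eq hu h hσ hcs p - WW_eq hu h hσ (by norm_num : (1:ℝ) ^ 2 + 0 ^ 2 = 1) p)
    (by
      intro p hp
      have e1 : (ell σ c s p).2 = 0 := by rw [ell_apply]; simp [hp]
      have e2 : (ell σ 1 0 p).2 = 0 := by rw [ell_apply]; simp [hp]
      simp only [WW, e1, e2, i0, r0 _ _ (nn p), sub_self])
    (by
      intro p hp
      have e1 : (ell σ c s p).2 = 0 := by rw [ell_apply]; simp [hp]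
      have e2 : (ell σ 1 0 p).2 = 0 := by rw [ell_apply]; simp [hp]
      rw [GG_sub c1 c2]
      simp only [GG0_WW hu, e1, e2, i1, r1 _ _ (nn p), sub_self]) p hp
  simpa [sub_eq_zero] using this

theorem clm3 (L : (Fin 3 → ℝ) →L[ℝ] ℝ) (v : Fin 3 → ℝ) :
    L v = v 0 * L (Pi.single 0 1) + v 1 * L (Pi.single 1 1) + v 2 * L (Pi.single 2 1) := by
  have : v = v 0 • (Pi.single 0 1 : Fin 3 → ℝ) + v 1 • (Pi.single 1 1 : Fin 3 → ℝ)
      + v 2 • (Pi.single 2 1 : Fin 3 → ℝ) := by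
    ext i; fin_cases i <;> simp
  conv_lhs => rw [this]
  simp only [map_add, map_smul, smul_eq_mul]

/-- embedding of the half plane -/
noncomputable def psi : ℝ × ℝ →L[ℝ] (Fin 3 → ℝ) :=
  ContinuousLinearMap.pi ![ContinuousLinearMap.fst ℝ ℝ ℝ, ContinuousLinearMap.snd ℝ ℝ ℝ, 0]

theorem psi_apply (z : ℝ × ℝ) : psi z = ![z.1, z.2, 0] := by
  ext i; fin_cases i <;> simp [psi]

theorem hfd_psi {f : (Fin 3 → ℝ) → ℝ} (t r : ℝ) (hf : DifferentiableAt ℝ f ![t, r, 0]) :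
    HasFDerivAt (fun z : ℝ × ℝ => f ![z.1, z.2, 0])
      (fderiv ℝ f ![t, r, 0] (Pi.single 0 1) • ContinuousLinearMap.fst ℝ ℝ ℝ
        + fderiv ℝ f ![t, r, 0] (Pi.single 1 1) • ContinuousLinearMap.snd ℝ ℝ ℝ) (t, r) := by
  have h1 : HasFDerivAt f (fderiv ℝ f ![t, r, 0]) (psi (t, r)) := by
    rw [psi_apply]; exact hf.hasFDerivAt
  have h2 : HasFDerivAt (fun z : ℝ × ℝ => f (psi z)) ((fderiv ℝ f ![t, r, 0]).comp psi) (t, r) :=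
    HasFDerivAt.comp (t, r) h1 psi.hasFDerivAt
  simp only [psi_apply] at h2
  refine h2.congr_fderiv ?_
  refine ContinuousLinearMap.ext fun z => ?_
  rw [ContinuousLinearMap.comp_apply, psi_apply, clm3]
  simp
  ring

theorem radial_all {u : VV → ℝ → ℝ} {u₀ u₁ : VV → ℝ}
    (hu : ContDiff ℝ 2 (fun p : VV × ℝ => u p.1 p.2))
    (h : ∀ (x : VV) (t : ℝ), deriv (deriv (u x)) t -
            (∑ i : Fin 2,
              fderiv ℝ (fun x' => fderiv ℝ (fun x'' => u x'' t) x'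
                (EuclideanSpace.single i (1 : ℝ))) x (EuclideanSpace.single i (1 : ℝ)))
            = -(|u x t| ^ 4 * u x t))
    (r0 : ∀ x y : VV, ‖x‖ = ‖y‖ → u₀ x = u₀ y) (r1 : ∀ x y : VV, ‖x‖ = ‖y‖ → u₁ x = u₁ y)
    (i0 : ∀ x, u x 0 = u₀ x) (i1 : ∀ x, deriv (u x) 0 = u₁ x)
    {c s : ℝ} (hcs : c ^ 2 + s ^ 2 = 1) (t r : ℝ) :
    u ((c * r) • EuclideanSpace.single 0 1 + (s * r) • EuclideanSpace.single 1 1) t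
      = u (r • EuclideanSpace.single 0 1) t := by
  rcases le_total 0 t with ht | ht
  · have := radial hu h r0 r1 i0 i1 (σ := 1) (by norm_num) hcs ![t, r, 0] (by simpa using ht)
    simpa [WW, ell_apply] using this
  · have := radial hu h r0 r1 i0 i1 (σ := -1) (by norm_num) hcs ![-t, r, 0] (by simpa using ht)
    simpa [WW, ell_apply] using this

theorem radial_norm {u : VV → ℝ → ℝ} 
    (hr : ∀ {c s : ℝ} (_ : c ^ 2 + s ^ 2 = 1) (t r : ℝ),
      u ((c * r) • EuclideanSpace.single 0 1 + (s * r) • EuclideanSpace.single 1 1) t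
      = u (r • EuclideanSpace.single 0 1) t) (x : VV) (t : ℝ) :
    u x t = u (‖x‖ • EuclideanSpace.single 0 1) t := by
  rcases eq_or_ne x 0 with rfl | hx
  · simp
  have hn : ‖x‖ ≠ 0 := by simpa using hx
  have hs : ‖x‖ ^ 2 = x 0 ^ 2 + x 1 ^ 2 := by
    rw [EuclideanSpace.norm_sq_eq]; simp
  rw [← hr (c := x 0 / ‖x‖) (s := x 1 / ‖x‖) (by field_simp; linarith)]
  congr 1
  ext i
  fin_cases i <;> simp <;> field_simp

theorem ang {W : (Fin 3 → ℝ) → ℝ} (hW : ContDiff ℝ 2 W) {t r : ℝ} (hr0 : 0 < r)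
    (hr : ∀ θ : ℝ, W ![t, r * Real.cos θ, r * Real.sin θ] = W ![t, r, 0]) :
    HH W 2 2 ![t, r, 0] = GG W 1 ![t, r, 0] / r := by
  have hg : ∀ θ : ℝ, HasDerivAt (fun θ : ℝ => ![t, r * Real.cos θ, r * Real.sin θ])
      ![0, r * -Real.sin θ, r * Real.cos θ] θ := by
    intro θ
    rw [hasDerivAt_pi]
    intro i
    fin_cases i
    · simpa using hasDerivAt_const θ t
    · simpa using (Real.hasDerivAt_cos θ).const_mul r
    · simpa using (Real.hasDerivAt_sin θ).const_mul r
  have comp : ∀ (f : (Fin 3 → ℝ) → ℝ), Differentiable ℝ f → ∀ θ : ℝ,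
      HasDerivAt (fun θ : ℝ => f ![t, r * Real.cos θ, r * Real.sin θ])
        (r * -Real.sin θ * fderiv ℝ f ![t, r * Real.cos θ, r * Real.sin θ] (Pi.single 1 1)
        + r * Real.cos θ * fderiv ℝ f ![t, r * Real.cos θ, r * Real.sin θ] (Pi.single 2 1)) θ := by
    intro f hf θ
    have := ((hf ![t, r * Real.cos θ, r * Real.sin θ]).hasFDerivAt).comp_hasDerivAt θ (hg θ)
    rw [clm3] at this
    refine HasDerivAt.congr_deriv (f := fun θ : ℝ => f ![t, r * Real.cos θ, r * Real.sin θ]) this ?_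
    simp
  have d1 : ∀ θ : ℝ, r * -Real.sin θ * GG W 1 ![t, r * Real.cos θ, r * Real.sin θ]
        + r * Real.cos θ * GG W 2 ![t, r * Real.cos θ, r * Real.sin θ] = 0 := by
    intro θ
    have h1 := comp W (hW.differentiable (by norm_num)) θ
    simp only [hr] at h1
    exact h1.unique (hasDerivAt_const θ _)
  have h1 := comp (GG W 1) ((GG_c1 hW 1).differentiable (by norm_num)) 0
  have h2 := comp (GG W 2) ((GG_c1 hW 2).differentiable (by norm_num)) 0
  have h3 := (((Real.hasDerivAt_sin 0).fun_neg.const_mul r).fun_mul h1).fun_add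
    (((Real.hasDerivAt_cos 0).const_mul r).fun_mul h2)
  simp only [d1] at h3
  have h4 := h3.unique (hasDerivAt_const (0:ℝ) (0:ℝ))
  simp at h4
  unfold HH
  rw [eq_div_iff hr0.ne']
  have : r * (fderiv ℝ (GG W 2) ![t, r, 0] (Pi.single 2 1) * r - GG W 1 ![t, r, 0]) = 0 := by
    linear_combination h4
  rcases mul_eq_zero.1 this with h | h
  · exact absurd h hr0.ne'
  · linarith

theorem radsol_of {W : (Fin 3 → ℝ) → ℝ} (hW : ContDiff ℝ 2 W)
    (eq : ∀ p, HH W 0 0 p - HH W 1 1 p - HH W 2 2 p = - (W p) ^ 5)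
    (hr : ∀ t r θ : ℝ, W ![t, r * Real.cos θ, r * Real.sin θ] = W ![t, r, 0]) :
    RadSol (fun t r => W ![t, r, 0]) (fun t r => GG W 0 ![t, r, 0]) (fun t r => GG W 1 ![t, r, 0])
      (fun t r => HH W 0 0 ![t, r, 0]) (fun t r => HH W 0 1 ![t, r, 0])
      (fun t r => HH W 1 1 ![t, r, 0]) where
  hU t r := hfd_psi t r (hW.differentiable (by norm_num) _)
  hq t r := hfd_psi t r ((GG_c1 hW 0).differentiable (by norm_num) _)
  hp t r := by
    have := hfd_psi t r ((GG_c1 hW 1).differentiable (by norm_num) ![t, r, 0])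
    have e : HH W 0 1 ![t, r, 0] = fderiv ℝ (GG W 1) ![t, r, 0] (Pi.single 0 1) := HH_symm hW 0 1 _
    rw [← e] at this
    exact this
  cqt := (HH_cont hW 0 0).comp (by fun_prop : Continuous fun z : ℝ × ℝ => ![z.1, z.2, 0])
  cqr := (HH_cont hW 0 1).comp (by fun_prop : Continuous fun z : ℝ × ℝ => ![z.1, z.2, 0])
  cpr := (HH_cont hW 1 1).comp (by fun_prop : Continuous fun z : ℝ × ℝ => ![z.1, z.2, 0])
  eq t r h0 := by
    have := eq ![t, r, 0]
    rw [ang hW h0 (hr t r)] at this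
    linarith

theorem half_bound {ε A R σ : ℝ} (hε : 0 < ε) (hε' : ε ≤ 1 / 16) (hA : 0 < A) (hR : 1 ≤ R)
    (hRB : (A + 47 / 4 * A / ε) * R ^ (-ε) < 1 / 2) (hσ : σ ^ 2 = 1)
    {u₀ u₁ : VV → ℝ}
    (r0 : ∀ x y : VV, ‖x‖ = ‖y‖ → u₀ x = u₀ y) (r1 : ∀ x y : VV, ‖x‖ = ‖y‖ → u₁ x = u₁ y)
    (b0 : ∀ x : VV, ‖fderiv ℝ u₀ x‖ ≤ A * (1 + ‖x‖) ^ (-(3 / 2) - ε))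
    (b1 : ∀ x : VV, |u₁ x| ≤ A * (1 + ‖x‖) ^ (-(3 / 2) - ε))
    (b2 : ∀ x : VV, |u₀ x| ≤ A * (1 + ‖x‖) ^ (-(1 / 2) - ε))
    {u : VV → ℝ → ℝ} (hu : ContDiff ℝ 2 (fun p : VV × ℝ => u p.1 p.2))
    (h : ∀ (x : VV) (t : ℝ), deriv (deriv (u x)) t -
            (∑ i : Fin 2,
              fderiv ℝ (fun x' => fderiv ℝ (fun x'' => u x'' t) x'
                (EuclideanSpace.single i (1 : ℝ))) x (EuclideanSpace.single i (1 : ℝ)))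
            = -(|u x t| ^ 4 * u x t))
    (i0 : ∀ x, u x 0 = u₀ x) (i1 : ∀ x, deriv (u x) 0 = u₁ x) :
    ∫⁻ t in Ioi (0:ℝ), ∫⁻ x : VV, ENNReal.ofReal (|u x (σ * t)| ^ 6) ≤
      ((volume : Measure VV).toSphere univ) *
        (ENNReal.ofReal (cInt ε A R) + ENNReal.ofReal (cExt ε A)) := by
  have hW := WW_c2 hu σ 1 0
  have hr := @radial_all u u₀ u₁ hu h r0 r1 i0 i1
  have hval : ∀ t a b : ℝ, WW u σ 1 0 ![t, a, b]
      = u (a • EuclideanSpace.single 0 1 + b • EuclideanSpace.single 1 1) (σ * t) := by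
    intro t a b; simp [WW, ell_apply]
  have hval0 : ∀ t a : ℝ, WW u σ 1 0 ![t, a, 0]
      = u (a • EuclideanSpace.single 0 1) (σ * t) := by
    intro t a; simp [hval]
  have hS := radsol_of hW (WW_eq hu h hσ (by norm_num)) (by
    intro t r θ
    rw [hval, hval0, mul_comm r, mul_comm r]
    exact hr (Real.cos_sq_add_sin_sq θ) _ _)
  have hn : ∀ r : ℝ, 0 ≤ r → ‖(r • EuclideanSpace.single 0 1 : VV)‖ = r := by
    intro r h0; rw [norm_smul]; simp [abs_of_nonneg h0]
  have hσa : |σ| = 1 := by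
    rw [← sq_eq_sq₀ (abs_nonneg _) zero_le_one, sq_abs, hσ, one_pow]
  have vU : ∀ r, WW u σ 1 0 ![0, r, 0] = u₀ (r • EuclideanSpace.single 0 1) := by
    intro r; rw [hval0, mul_zero, i0]
  have vq : ∀ r, GG (WW u σ 1 0) 0 ![0, r, 0] = σ * u₁ (r • EuclideanSpace.single 0 1) := by
    intro r; rw [GG0_WW hu, ell_apply, ← i1]; simp
  have vp : ∀ r, GG (WW u σ 1 0) 1 ![0, r, 0]
      = fderiv ℝ u₀ (r • EuclideanSpace.single 0 1) (EuclideanSpace.single 0 1) := by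
    intro r
    have h1 := fst_comp hu (ell σ 1 0) 0 ![0, r, 0] (Pi.single 1 1)
    simp only [zero_add] at h1
    have h2 := fst_comp hu (ContinuousLinearMap.inl ℝ VV ℝ) 0 (r • EuclideanSpace.single 0 1)
      (EuclideanSpace.single 0 1)
    have e : (fun z' : VV => (fun p : VV × ℝ => u p.1 p.2)
        (0 + (ContinuousLinearMap.inl ℝ VV ℝ) z')) = u₀ := by
      funext z; simp [i0]
    rw [e] at h2
    rw [h2]
    have h3 : GG (WW u σ 1 0) 1 ![0, r, 0] = fderiv ℝ (fun p : VV × ℝ => u p.1 p.2)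
      (ell σ 1 0 ![0, r, 0]) (ell σ 1 0 (Pi.single 1 1)) := h1
    rw [h3, ell_apply, ell_apply]
    simp
  have cU : ∀ r, 0 ≤ r → |WW u σ 1 0 ![0, r, 0]| ≤ A * (1 + r) ^ (-(1 / 2) - ε) := by
    intro r h0
    rw [vU]
    have := b2 (r • EuclideanSpace.single 0 1)
    rwa [hn r h0] at this
  have cq : ∀ r, 0 ≤ r → |GG (WW u σ 1 0) 0 ![0, r, 0]| ≤ A * (1 + r) ^ (-(3 / 2) - ε) := by
    intro r h0
    rw [vq, abs_mul, hσa, one_mul]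
    have := b1 (r • EuclideanSpace.single 0 1)
    rwa [hn r h0] at this
  have cp : ∀ r, 0 ≤ r → |GG (WW u σ 1 0) 1 ![0, r, 0]| ≤ A * (1 + r) ^ (-(3 / 2) - ε) := by
    intro r h0
    rw [vp]
    have := b0 (r • EuclideanSpace.single 0 1)
    rw [hn r h0] at this
    refine le_trans ?_ this
    have := (fderiv ℝ u₀ (r • EuclideanSpace.single 0 1)).le_opNorm (EuclideanSpace.single 0 1)
    simpa using this
  have le1 : ∀ r a : ℝ, 0 ≤ r → a ≤ 0 → A * (1 + r) ^ a ≤ A := by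
    intro r a h0 ha
    have := Real.rpow_le_one_of_one_le_of_nonpos (by linarith : 1 ≤ 1 + r) ha
    nlinarith
  have le2 : ∀ r a : ℝ, 1 ≤ r → a ≤ 0 → A * (1 + r) ^ a ≤ A * r ^ a := by
    intro r a h0 ha
    have := Real.rpow_le_rpow_of_nonpos (by linarith : 0 < r) (by linarith : r ≤ 1 + r) ha
    gcongr
  have p1 : ∀ r : ℝ, 1 ≤ r → √r * r ^ (-(1 / 2) - ε) = r ^ (-ε) := by
    intro r h1
    rw [Real.sqrt_eq_rpow, ← Real.rpow_add (by linarith)]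
    congr 1; ring
  have p2 : ∀ r : ℝ, 1 ≤ r → √r * r ^ (-(3 / 2) - ε) = r ^ (-ε) / r := by
    intro r h1
    have hr : 0 < r := by linarith
    rw [Real.sqrt_eq_rpow, ← Real.rpow_add hr]
    nth_rewrite 3 [← Real.rpow_one r]
    rw [← Real.rpow_sub hr]
    congr 1; ring
  have d0 : ∀ r, 1 ≤ r → √r * |WW u σ 1 0 ![0, r, 0]| ≤ A * r ^ (-ε) := by
    intro r h1
    calc _ ≤ √r * (A * r ^ (-(1 / 2) - ε)) := by
          gcongr
          exact (cU r (by linarith)).trans (le2 r _ h1 (by linarith))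
      _ = A * (√r * r ^ (-(1 / 2) - ε)) := by ring
      _ = _ := by rw [p1 r h1]
  have d1 : ∀ r, 1 ≤ r → |√r * (GG (WW u σ 1 0) 0 ![0, r, 0] + GG (WW u σ 1 0) 1 ![0, r, 0])
      + WW u σ 1 0 ![0, r, 0] / (2 * √r)| ≤ 5 / 2 * A * (r ^ (-ε) / r) := by
    intro r h1
    have hr : 0 < r := by linarith
    have k1 := (cq r hr.le).trans (le2 r _ h1 (by linarith))
    have k2 := (cp r hr.le).trans (le2 r _ h1 (by linarith))
    have k3 : |WW u σ 1 0 ![0, r, 0] / (2 * √r)| ≤ 1 / 2 * A * (r ^ (-ε) / r) := by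
      have hs : 0 < √r := Real.sqrt_pos.2 hr
      rw [abs_div, abs_of_pos (by positivity : 0 < 2 * √r), div_le_iff₀ (by positivity)]
      have k := d0 r h1
      have hh : √r * √r = r := Real.mul_self_sqrt hr.le
      rw [← mul_le_mul_iff_right₀ hs]
      refine k.trans (le_of_eq ?_)
      calc A * r ^ (-ε) = A * (r ^ (-ε) / r) * r := by field_simp
        _ = A * (r ^ (-ε) / r) * (√r * √r) := by rw [hh]
        _ = _ := by ring
    calc _ ≤ √r * (|GG (WW u σ 1 0) 0 ![0, r, 0]| + |GG (WW u σ 1 0) 1 ![0, r, 0]|)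
          + |WW u σ 1 0 ![0, r, 0] / (2 * √r)| := by
          refine (abs_add_le _ _).trans ?_
          rw [abs_mul, abs_of_nonneg (Real.sqrt_nonneg r)]
          gcongr
          exact abs_add_le _ _
      _ ≤ √r * (A * r ^ (-(3 / 2) - ε) + A * r ^ (-(3 / 2) - ε)) + 1 / 2 * A * (r ^ (-ε) / r) := by
          gcongr
      _ = 2 * A * (√r * r ^ (-(3 / 2) - ε)) + 1 / 2 * A * (r ^ (-ε) / r) := by ring
      _ = _ := by rw [p2 r h1]; ring
  have tot := hS.total hε hε' hA hR hRB d0 d1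
    (fun r h0 => (cU r h0).trans (le1 r _ h0 (by linarith)))
    (fun r h0 => (cq r h0).trans (le1 r _ h0 (by linarith)))
    (fun r h0 => (cp r h0).trans (le1 r _ h0 (by linarith)))
  have hin : ∀ t : ℝ, ∫⁻ x : VV, ENNReal.ofReal (|u x (σ * t)| ^ 6)
      = ((volume : Measure VV).toSphere univ) * ∫⁻ r in Ioi (0:ℝ), ENNReal.ofReal r *
        ENNReal.ofReal (|WW u σ 1 0 ![t, r, 0]| ^ 6) := by
    intro t
    have cW : Continuous fun r : ℝ => WW u σ 1 0 ![t, r, 0] :=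
      hW.continuous.comp (by fun_prop)
    rw [← lint_norm (fun r => ENNReal.ofReal (|WW u σ 1 0 ![t, r, 0]| ^ 6))
      (ENNReal.measurable_ofReal.comp (cW.abs.pow 6).measurable)]
    refine lintegral_congr fun x => ?_
    rw [radial_norm hr x, hval0]
  simp only [hin]
  rw [lintegral_const_mul' _ _ (measure_ne_top _ _)]
  gcongr

theorem lint_split (f : ℝ → ENNReal) : ∫⁻ t, f t =
    (∫⁻ t in Ioi (0:ℝ), f (1 * t)) + ∫⁻ t in Ioi (0:ℝ), f (-1 * t) := by
  have h1 : ∫⁻ t in Ioi (0:ℝ), f (-1 * t) = ∫⁻ t in Iio (0:ℝ), f t := by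
    have := (Measure.measurePreserving_neg (volume : Measure ℝ)).setLIntegral_comp_preimage_emb
      (MeasurableEquiv.neg ℝ).measurableEmbedding f (Iio 0)
    rw [← this]
    simp
  have h2 : ∫⁻ t in Iio (0:ℝ), f t = ∫⁻ t in Iic (0:ℝ), f t :=
    setLIntegral_congr Iio_ae_eq_Iic
  rw [h1, h2, ← lintegral_add_compl f (measurableSet_Ioi (a := (0:ℝ)))]
  simp

theorem stmt_13 (ε A : ℝ) (hε : 0 < ε) (hA : 0 < A) :
    ∃ C : ℝ, 0 < C ∧
      ∀ u₀ u₁ : EuclideanSpace ℝ (Fin 2) → ℝ,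
        ContDiff ℝ 1 u₀ →
        Continuous u₁ →
        (∀ x y : EuclideanSpace ℝ (Fin 2), ‖x‖ = ‖y‖ → u₀ x = u₀ y) →
        (∀ x y : EuclideanSpace ℝ (Fin 2), ‖x‖ = ‖y‖ → u₁ x = u₁ y) →
        (∀ x : EuclideanSpace ℝ (Fin 2),
          ‖fderiv ℝ u₀ x‖ ≤ A * (1 + ‖x‖) ^ (-(3 / 2) - ε)) →
        (∀ x : EuclideanSpace ℝ (Fin 2), |u₁ x| ≤ A * (1 + ‖x‖) ^ (-(3 / 2) - ε)) →
        (∀ x : EuclideanSpace ℝ (Fin 2), |u₀ x| ≤ A * (1 + ‖x‖) ^ (-(1 / 2) - ε)) →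
      ∀ u : EuclideanSpace ℝ (Fin 2) → ℝ → ℝ,
        ContDiff ℝ 2 (fun p : EuclideanSpace ℝ (Fin 2) × ℝ => u p.1 p.2) →
        (∀ (x : EuclideanSpace ℝ (Fin 2)) (t : ℝ),
          deriv (deriv (u x)) t -
            (∑ i : Fin 2,
              fderiv ℝ (fun x' => fderiv ℝ (fun x'' => u x'' t) x'
                (EuclideanSpace.single i (1 : ℝ))) x (EuclideanSpace.single i (1 : ℝ)))
            = -(|u x t| ^ 4 * u x t)) →
        (∀ x : EuclideanSpace ℝ (Fin 2), u x 0 = u₀ x) →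
        (∀ x : EuclideanSpace ℝ (Fin 2), deriv (u x) 0 = u₁ x) →
        ∫⁻ t : ℝ, ∫⁻ x : EuclideanSpace ℝ (Fin 2), ENNReal.ofReal (|u x t| ^ 6) ≤
          ENNReal.ofReal C := by
  obtain ⟨e, he, he1, he2⟩ : ∃ e : ℝ, 0 < e ∧ e ≤ 1 / 16 ∧ e ≤ ε :=
    ⟨min ε (1 / 16), lt_min hε (by norm_num), min_le_right _ _, min_le_left _ _⟩
  obtain ⟨R, hR, hRB⟩ : ∃ R : ℝ, 1 ≤ R ∧ (A + 47 / 4 * A / e) * R ^ (-e) < 1 / 2 := by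
    have h1 := (tendsto_rpow_neg_atTop he).const_mul (A + 47 / 4 * A / e)
    rw [mul_zero] at h1
    obtain ⟨R, h2, h3⟩ := ((Filter.eventually_ge_atTop (1:ℝ)).and
      (h1.eventually_lt_const (by norm_num : (0:ℝ) < 1 / 2))).exists
    exact ⟨R, h2, h3⟩
  set K : ENNReal := ((volume : Measure VV).toSphere univ) *
        (ENNReal.ofReal (cInt e A R) + ENNReal.ofReal (cExt e A)) with hK
  have hKt : K ≠ ⊤ := by
    rw [hK]
    exact ENNReal.mul_ne_top (measure_ne_top _ _) (by simp)
  refine ⟨2 * K.toReal + 1, by positivity, ?_⟩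
  intro u₀ u₁ _ _ r0 r1 b0 b1 b2 u hu h i0 i1
  have mono : ∀ (a : ℝ) (x : VV), A * (1 + ‖x‖) ^ (a - ε) ≤ A * (1 + ‖x‖) ^ (a - e) := by
    intro a x
    have hx : 1 ≤ 1 + ‖x‖ := by linarith [norm_nonneg x]
    have := Real.rpow_le_rpow_of_exponent_le hx (by linarith : a - ε ≤ a - e)
    gcongr
  have hb : ∀ σ : ℝ, σ ^ 2 = 1 →
      ∫⁻ t in Ioi (0:ℝ), ∫⁻ x : VV, ENNReal.ofReal (|u x (σ * t)| ^ 6) ≤ K := fun σ hσ =>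
    half_bound he he1 hA hR hRB hσ r0 r1 (fun x => (b0 x).trans (mono _ x))
      (fun x => (b1 x).trans (mono _ x)) (fun x => (b2 x).trans (mono _ x)) hu h i0 i1
  rw [lint_split]
  calc _ ≤ K + K := add_le_add (hb 1 (by norm_num)) (hb (-1) (by norm_num))
    _ = ENNReal.ofReal (2 * K.toReal) := by
      rw [ENNReal.ofReal_mul (by norm_num), ENNReal.ofReal_toReal hKt, ← two_mul]
      simp
    _ ≤ _ := ENNReal.ofReal_le_ofReal (by linarith)
end
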